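/- Let 𝐅 be a field that is an algebraic (possibly infinite-degree) extension of ℚ, and let x, z ∈ 𝒪_𝐅 with x ≠ z. Then there exist y₁, y₂, y₃, y₄, y₅ ∈ 𝒪_𝐅 with y₅ ≠ 0 such that y₅²·(x − z) = y₁² + y₂² + y₃² + y₄² if and only if for every ring homomorphism σ : 𝐅 → ℝ one has σ(x) > σ(z). -/

import Mathlib

/-! The content is Siegel's theorem that a totally positive element `a` of a number field `K` is a
sum of four squares; an algebraic field of infinite degree is reduced to a number field by
compactness of its space of complex embeddings, and denominators are cleared at the end.

Locally at the primes above `2`, every element is a sum of four squares, so by weak approximation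
there is a sum of four squares `q` such that `b = a * q` is a local square at all of them. In
`E = K(√-b)`, which has no real embedding, `-1` is then a local square above `2`. If
`-1 = X ^ 2 + Y ^ 2` in `E`, comparing coordinates writes `b` as a quotient of sums of four squares.

That `-1` is a sum of two squares in such a totally complex field `E` is the Hasse norm theorem for
the extension `E(i) / E`, which ramifies nowhere. It is proved by counting: for a large finite set
`S` of primes, one compares the index of the `S`-norms with that of the elements of even order
outside `S`. The lower bound for the former comes from the action of the Galois group on `S`-units
(a Herbrand quotient). The upper bound for the latter comes from Dirichlet's unit theorem and the
fact that an `S`-unit which is a square at enough primes is a square; this fact needs infinitely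
many primes that do not split in a quadratic extension, a consequence of the simple pole of the
zeta function.
-/

namespace FourSquares

open NumberField IsDedekindDomain

section Ord

variable {R K : Type*} [CommRing R] [IsDedekindDomain R] [Field K] [Algebra R K]
  [IsFractionRing R K] (p : HeightOneSpectrum R) {x y : K} {m n : ℤ}

/-- The additive `p`-adic valuation `ord_p : Kˣ → ℤ`, extended by the junk value `ord_p 0 = 0`. -/
noncomputable def ord (x : K) : ℤ :=
  -WithZero.log (p.valuation K x)

variable (K) in
/-- The fractional ideal of all `x` with `n ≤ ord_p x`; here `0` counts as having infinite
order. -/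
noncomputable def ordGE (n : ℤ) : AddSubgroup K :=
  (p.valuation K).leAddSubgroup (WithZero.exp (-n))

lemma mem_ordGE_iff_valuation_le : x ∈ ordGE K p n ↔ p.valuation K x ≤ WithZero.exp (-n) :=
  Iff.rfl

lemma mem_ordGE_zero_iff_valuation_le_one : x ∈ ordGE K p 0 ↔ p.valuation K x ≤ 1 := by
  simp [mem_ordGE_iff_valuation_le]

lemma mem_ordGE_iff (hx : x ≠ 0) : x ∈ ordGE K p n ↔ n ≤ ord p x := by
  rw [mem_ordGE_iff_valuation_le, ← WithZero.log_le_iff_le_exp (by simpa using hx), ord]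
  exact le_neg.symm

lemma mem_ordGE_of_le (h : n ≤ ord p x) : x ∈ ordGE K p n := by
  rcases eq_or_ne x 0 with rfl | hx
  · exact zero_mem _
  · exact (mem_ordGE_iff p hx).2 h

lemma valuation_eq_one_iff_ord_eq_zero (hx : x ≠ 0) : p.valuation K x = 1 ↔ ord p x = 0 := by
  have hv : p.valuation K x ≠ 0 := by simpa using hx
  rw [ord, neg_eq_zero]
  exact ⟨fun h ↦ by rw [h, WithZero.log_one],
    fun h ↦ by rw [← WithZero.exp_log hv, h, WithZero.exp_zero]⟩

@[simp]
lemma ord_zero : ord p (0 : K) = 0 := by simp [ord]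

@[simp]
lemma ord_one : ord p (1 : K) = 0 := by simp [ord]

@[simp]
lemma ord_neg : ord p (-x) = ord p x := by simp [ord]

@[simp]
lemma ord_inv : ord p x⁻¹ = -ord p x := by simp [ord]

@[simp]
lemma ord_pow (k : ℕ) : ord p (x ^ k) = k * ord p x := by simp [ord]

@[simp]
lemma ord_zpow (k : ℤ) : ord p (x ^ k) = k * ord p x := by simp [ord]

lemma ord_four : ord p (4 : K) = 2 * ord p (2 : K) := by
  rw [show (4 : K) = 2 ^ 2 by norm_num, ord_pow, Nat.cast_ofNat]

lemma ord_mul (hx : x ≠ 0) (hy : y ≠ 0) : ord p (x * y) = ord p x + ord p y := by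
  rw [ord, map_mul, WithZero.log_mul (by simpa using hx) (by simpa using hy), neg_add, ord, ord]

lemma ord_div (hx : x ≠ 0) (hy : y ≠ 0) : ord p (x / y) = ord p x - ord p y := by
  rw [div_eq_mul_inv, ord_mul p hx (inv_ne_zero hy), ord_inv, sub_eq_add_neg]

lemma ordGE_anti (h : m ≤ n) : ordGE K p n ≤ ordGE K p m := by
  intro x hx
  rw [mem_ordGE_iff_valuation_le] at *
  exact hx.trans (WithZero.exp_le_exp.2 (neg_le_neg h))

lemma mul_mem_ordGE (hx : x ∈ ordGE K p m) (hy : y ∈ ordGE K p n) : x * y ∈ ordGE K p (m + n) := by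
  rw [mem_ordGE_iff_valuation_le] at *
  rw [map_mul, neg_add, WithZero.exp_add]
  exact mul_le_mul' hx hy

lemma mul_mem_ordGE_left (hx : x ∈ ordGE K p 0) (hy : y ∈ ordGE K p n) :
    x * y ∈ ordGE K p n := by
  simpa only [zero_add] using mul_mem_ordGE p hx hy

lemma mul_mem_ordGE_right (hx : x ∈ ordGE K p n) (hy : y ∈ ordGE K p 0) :
    x * y ∈ ordGE K p n := by
  simpa only [add_zero] using mul_mem_ordGE p hx hy

lemma mul_mem_ordGE_iff (hy : y ≠ 0) : y * x ∈ ordGE K p n ↔ x ∈ ordGE K p (n - ord p y) := by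
  rcases eq_or_ne x 0 with rfl | hx
  · simp only [mul_zero, zero_mem]
  · rw [mem_ordGE_iff p hx, mem_ordGE_iff p (mul_ne_zero hy hx), ord_mul p hy hx,
      sub_le_iff_le_add']

lemma mem_ordGE_one_or_of_mul_mem (h : x * y ∈ ordGE K p 1) :
    x ∈ ordGE K p 1 ∨ y ∈ ordGE K p 1 := by
  rcases eq_or_ne x 0 with rfl | hx
  · exact .inl (zero_mem _)
  rw [or_iff_not_imp_left, mem_ordGE_iff p hx]
  exact fun hx1 ↦ ordGE_anti p (by lia) ((mul_mem_ordGE_iff p hx).1 h)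

lemma div_mem_ordGE_iff (hy : y ≠ 0) : x / y ∈ ordGE K p n ↔ x ∈ ordGE K p (n + ord p y) := by
  rw [div_eq_inv_mul, mul_mem_ordGE_iff p (inv_ne_zero hy), ord_inv, sub_neg_eq_add]

lemma add_ne_zero_and_ord_add (hx : x ≠ 0) (hy : y ∈ ordGE K p (ord p x + 1)) :
    x + y ≠ 0 ∧ ord p (x + y) = ord p x := by
  have not_mem : x ∉ ordGE K p (ord p x + 1) := by simp [mem_ordGE_iff p hx]
  have not_mem_add : x + y ∉ ordGE K p (ord p x + 1) := by
    rwa [add_mem_cancel_right hy]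
  have add_ne : x + y ≠ 0 := fun h ↦ not_mem_add (h ▸ zero_mem _)
  have mem_add : x + y ∈ ordGE K p (ord p x) :=
    add_mem (mem_ordGE_of_le p le_rfl) (ordGE_anti p (by lia) hy)
  rw [mem_ordGE_iff p add_ne] at not_mem_add mem_add
  exact ⟨add_ne, by lia⟩

lemma ord_eq_zero_of_sub_one_mem (h : x - 1 ∈ ordGE K p 1) : x ≠ 0 ∧ ord p x = 0 := by
  have := add_ne_zero_and_ord_add p (x := (1 : K)) (y := x - 1) one_ne_zero
    (by rwa [ord_one, zero_add])
  rwa [add_sub_cancel, ord_one] at this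

lemma algebraMap_mem_ordGE_iff {k : ℕ} (r : R) :
    algebraMap R K r ∈ ordGE K p k ↔ r ∈ p.asIdeal ^ k := by
  rw [mem_ordGE_iff_valuation_le, p.valuation_of_algebraMap, p.intValuation_le_pow_iff_mem]

lemma algebraMap_mem_ordGE_zero (r : R) : algebraMap R K r ∈ ordGE K p 0 := by
  simpa using algebraMap_mem_ordGE_iff (K := K) p (k := 0) r

lemma algebraMap_mem_ordGE_one_iff (r : R) : algebraMap R K r ∈ ordGE K p 1 ↔ r ∈ p.asIdeal := by
  simpa using algebraMap_mem_ordGE_iff (K := K) p (k := 1) r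

lemma ord_algebraMap_nonneg (r : R) : 0 ≤ ord p (algebraMap R K r) := by
  rcases eq_or_ne (algebraMap R K r) 0 with h | h
  · simp [h]
  · exact (mem_ordGE_iff p h).1 (algebraMap_mem_ordGE_zero p r)

lemma ord_algebraMap_eq_zero {r : R} (hr : r ∉ p.asIdeal) : ord p (algebraMap R K r) = 0 := by
  rw [ord, (p.valuation_eq_one_iff_notMem).2 hr, WithZero.log_one, neg_zero]

lemma ord_natCast_nonneg (n : ℕ) : 0 ≤ ord p (n : K) := by
  simpa using ord_algebraMap_nonneg (K := K) p (n : R)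

lemma algebraMap_mul_mem_ordGE_iff {r : R} (hr : r ∉ p.asIdeal) :
    algebraMap R K r * x ∈ ordGE K p n ↔ x ∈ ordGE K p n := by
  rw [mem_ordGE_iff_valuation_le, mem_ordGE_iff_valuation_le, map_mul,
    (p.valuation_eq_one_iff_notMem).2 hr, one_mul]

lemma mem_ordGE_zero_iff :
    x ∈ ordGE K p 0 ↔ ∃ m ∉ p.asIdeal, ∃ a : R, algebraMap R K m * x = algebraMap R K a := by
  constructor
  · intro h
    obtain ⟨a, m, h⟩ := p.exists_primeCompl_mul_eq_of_integer (K := K) x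
      ((mem_ordGE_zero_iff_valuation_le_one p).1 h)
    exact ⟨m, m.2, a, by rw [mul_comm]; exact h⟩
  · rintro ⟨m, hm, a, h⟩
    have := algebraMap_mem_ordGE_zero (K := K) p a
    rwa [← h, algebraMap_mul_mem_ordGE_iff p hm] at this

lemma mem_ordGE_one_iff :
    x ∈ ordGE K p 1 ↔
      ∃ m ∉ p.asIdeal, ∃ a ∈ p.asIdeal, algebraMap R K m * x = algebraMap R K a := by
  constructor
  · intro h
    obtain ⟨m, hm, a, ha⟩ := (mem_ordGE_zero_iff p).1 (ordGE_anti p zero_le_one h)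
    refine ⟨m, hm, a, ?_, ha⟩
    rw [← algebraMap_mem_ordGE_one_iff (K := K), ← ha]
    exact mul_mem_ordGE_left p (algebraMap_mem_ordGE_zero p m) h
  · rintro ⟨m, hm, a, hap, h⟩
    have := (algebraMap_mem_ordGE_one_iff (K := K) p a).2 hap
    rwa [← h, algebraMap_mul_mem_ordGE_iff p hm] at this

lemma exists_algebraMap_eq_of_forall_mem_ordGE
    (h : ∀ p : HeightOneSpectrum R, x ∈ ordGE K p 0) : ∃ a : R, algebraMap R K a = x :=
  HeightOneSpectrum.mem_integers_of_valuation_le_one K x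
    fun p ↦ (mem_ordGE_zero_iff_valuation_le_one p).1 (h p)

lemma exists_sub_algebraMap_mem_ordGE (n : ℤ) (hx : x ∈ ordGE K p 0) :
    ∃ a : R, x - algebraMap R K a ∈ ordGE K p n := by
  obtain ⟨a, ha⟩ := p.exists_valuation_sub_lt_of_integer (K := K) (x := x)
    ((mem_ordGE_zero_iff_valuation_le_one p).1 hx)
    (γ := Units.mk0 (WithZero.exp (-n)) WithZero.exp_ne_zero)
  exact ⟨a, by rw [← neg_mem_iff, neg_sub]; exact ha.le⟩

variable (K) in
lemma exists_ord_eq_one : ∃ π : R, ord p (algebraMap R K π) = 1 := by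
  obtain ⟨π, h⟩ := p.intValuation_exists_uniformizer
  exact ⟨π, by rw [ord, p.valuation_of_algebraMap, h, WithZero.log_exp, neg_neg]⟩

lemma finite_setOf_ord_ne_zero (x : K) : {p : HeightOneSpectrum R | ord p x ≠ 0}.Finite := by
  rcases eq_or_ne x 0 with rfl | hx
  · simp
  apply ((HeightOneSpectrum.Support.finite R x).union
    (HeightOneSpectrum.Support.finite R x⁻¹)).subset
  intro p hp
  have hp' : p.valuation K x ≠ 1 := mt (valuation_eq_one_iff_ord_eq_zero p hx).1 hp
  refine hp'.lt_or_gt.symm.imp id fun h ↦ ?_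
  rw [HeightOneSpectrum.Support, Set.mem_ofPred_eq, map_inv₀]
  exact (one_lt_inv₀ (zero_lt_iff.2 (by simpa using hx))).2 h

end Ord

section LocalSquares

variable {R K : Type*} [CommRing R] [IsDedekindDomain R] [Field K] [Algebra R K]
  [IsFractionRing R K] (p : HeightOneSpectrum R) {b x y z : K}

/-- The congruence `u ≡ 1 mod 4𝔭` of the elements with a square root `1 + 2t`, `ord_p t > 0`, in the
completion at `p`. -/
def IsOneModFour (u : K) : Prop :=
  (u - 1) / 4 ∈ ordGE K p 1

/-- The nonzero elements of `K` that become squares in the completion at `p`. By Hensel's lemma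
these are the elements congruent to `1` modulo `4𝔭` up to a square factor; phrased in this way, the
notion does not mention the completion. -/
def IsLocalSquare (x : K) : Prop :=
  ∃ y : K, y ≠ 0 ∧ IsOneModFour p (x / y ^ 2)

variable {p}

lemma isOneModFour_one : IsOneModFour p (1 : K) := by
  simp only [IsOneModFour, sub_self, zero_div, zero_mem]

variable (p) in
lemma isLocalSquare_sq (hy : y ≠ 0) : IsLocalSquare p (y ^ 2) :=
  ⟨y, hy, by rw [div_self (pow_ne_zero 2 hy)]; exact isOneModFour_one⟩

variable [CharZero K]

lemma IsOneModFour.sub_one_mem (h : IsOneModFour p x) : x - 1 ∈ ordGE K p 1 := by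
  rw [IsOneModFour, div_mem_ordGE_iff p (by norm_num : (4 : K) ≠ 0), ord_four] at h
  exact ordGE_anti p (by have := ord_natCast_nonneg (K := K) p 2; push_cast at this; lia) h

lemma isOneModFour_iff_of_odd (h2 : ord p (2 : K) = 0) :
    IsOneModFour p x ↔ x - 1 ∈ ordGE K p 1 := by
  rw [IsOneModFour, div_mem_ordGE_iff p (by norm_num : (4 : K) ≠ 0), ord_four, h2, mul_zero,
    add_zero]

lemma IsOneModFour.ne_zero (h : IsOneModFour p x) : x ≠ 0 :=
  (ord_eq_zero_of_sub_one_mem p h.sub_one_mem).1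

lemma IsOneModFour.ord_eq_zero (h : IsOneModFour p x) : ord p x = 0 :=
  (ord_eq_zero_of_sub_one_mem p h.sub_one_mem).2

lemma IsOneModFour.mul (hx : IsOneModFour p x) (hy : IsOneModFour p y) :
    IsOneModFour p (x * y) := by
  rw [IsOneModFour, show (x * y - 1) / 4 = x * ((y - 1) / 4) + (x - 1) / 4 by ring]
  exact add_mem (mul_mem_ordGE_left p (mem_ordGE_of_le p hx.ord_eq_zero.ge) hy) hx

lemma IsOneModFour.inv (hx : IsOneModFour p x) : IsOneModFour p x⁻¹ := by
  have hx0 := hx.ne_zero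
  rw [IsOneModFour, show (x⁻¹ - 1) / 4 = -(x⁻¹ * ((x - 1) / 4)) by field_simp; ring]
  refine neg_mem (mul_mem_ordGE_left p (mem_ordGE_of_le p ?_) hx)
  rw [ord_inv, hx.ord_eq_zero, neg_zero]

lemma IsLocalSquare.ne_zero (hx : IsLocalSquare p x) : x ≠ 0 := by
  obtain ⟨y, -, h⟩ := hx
  rintro rfl
  exact h.ne_zero (zero_div _)

lemma IsLocalSquare.even_ord (hx : IsLocalSquare p x) : Even (ord p x) := by
  have hx0 := hx.ne_zero
  obtain ⟨y, hy, h⟩ := hx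
  have := h.ord_eq_zero
  rw [ord_div p hx0 (pow_ne_zero 2 hy), sub_eq_zero, ord_pow] at this
  exact this ▸ even_two_mul _

lemma IsLocalSquare.mul (hx : IsLocalSquare p x) (hy : IsLocalSquare p y) :
    IsLocalSquare p (x * y) := by
  obtain ⟨s, hs, hxs⟩ := hx
  obtain ⟨t, ht, hyt⟩ := hy
  refine ⟨s * t, mul_ne_zero hs ht, ?_⟩
  rw [mul_pow, mul_div_mul_comm]
  exact hxs.mul hyt

lemma IsLocalSquare.inv (hx : IsLocalSquare p x) : IsLocalSquare p x⁻¹ := by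
  obtain ⟨y, hy, h⟩ := hx
  refine ⟨y⁻¹, inv_ne_zero hy, ?_⟩
  rw [inv_pow, inv_div_inv, ← inv_div]
  exact h.inv

lemma IsLocalSquare.of_mul_left (hxy : IsLocalSquare p (x * y)) (hx : IsLocalSquare p x) :
    IsLocalSquare p y := by
  simpa only [inv_mul_cancel_left₀ hx.ne_zero] using hx.inv.mul hxy

lemma isLocalSquare_mul_sq_iff (hy : y ≠ 0) :
    IsLocalSquare p (x * y ^ 2) ↔ IsLocalSquare p x :=
  ⟨fun h ↦ .of_mul_left (mul_comm x _ ▸ h) (isLocalSquare_sq p hy),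
    fun h ↦ h.mul (isLocalSquare_sq p hy)⟩

variable (K p) in
/-- The group of elements of `Kˣ` that are squares in the completion at `p`. -/
def localSquares : Subgroup Kˣ where
  carrier := {x | IsLocalSquare p (x : K)}
  mul_mem' hx hy := by
    simpa only [Set.mem_ofPred_eq, Units.val_mul] using IsLocalSquare.mul hx hy
  one_mem' := by simpa using isLocalSquare_sq p (one_ne_zero (α := K))
  inv_mem' hx := by simpa only [Set.mem_ofPred_eq, Units.val_inv_eq_inv_val] using hx.inv

lemma mem_localSquares {x : Kˣ} : x ∈ localSquares K p ↔ IsLocalSquare p (x : K) :=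
  Iff.rfl

lemma isLocalSquare_of_sub_sq_mem (h2 : ord p (2 : K) = 0) (hy : y ≠ 0)
    (h : x - y ^ 2 ∈ ordGE K p (ord p (y ^ 2) + 1)) : IsLocalSquare p x := by
  refine ⟨y, hy, (isOneModFour_iff_of_odd h2).2 ?_⟩
  have hy2 := pow_ne_zero 2 hy
  rwa [div_sub_one hy2, div_mem_ordGE_iff p hy2, add_comm]

lemma isLocalSquare_iff_isSquare_residue (h2 : ord p (2 : K) = 0) (hx : x ≠ 0)
    (hx0 : ord p x = 0) {a : R} (ha : x - algebraMap R K a ∈ ordGE K p 1) :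
    IsLocalSquare p x ↔ IsSquare (Ideal.Quotient.mk p.asIdeal a) := by
  constructor
  · rintro ⟨y, hy, h⟩
    have hy0 : ord p y = 0 := by
      have := h.ord_eq_zero
      rw [ord_div p hx (pow_ne_zero 2 hy), ord_pow, hx0] at this
      lia
    have hy_mem : y ∈ ordGE K p 0 := mem_ordGE_of_le p hy0.ge
    obtain ⟨c, hc⟩ := exists_sub_algebraMap_mem_ordGE p 1 hy_mem
    refine ⟨Ideal.Quotient.mk _ c, ?_⟩
    rw [← map_mul, Ideal.Quotient.eq, ← algebraMap_mem_ordGE_one_iff (K := K)]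
    have : algebraMap R K (a - c * c) = -(x - algebraMap R K a) + y ^ 2 * (x / y ^ 2 - 1) +
        (y - algebraMap R K c) * (y + algebraMap R K c) := by
      rw [map_sub, map_mul]; field_simp; ring
    rw [this]
    refine add_mem (add_mem (neg_mem ha) (mul_mem_ordGE_left p ?_ h.sub_one_mem))
      (mul_mem_ordGE_right p hc (add_mem hy_mem (algebraMap_mem_ordGE_zero p c)))
    exact mem_ordGE_of_le p (by rw [ord_pow, hy0, mul_zero])
  · rintro ⟨c, hc⟩
    obtain ⟨c, rfl⟩ := Ideal.Quotient.mk_surjective c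
    rw [← map_mul, Ideal.Quotient.eq, ← algebraMap_mem_ordGE_one_iff (K := K), map_sub, map_mul,
      ← sq] at hc
    have hxc : x - algebraMap R K c ^ 2 ∈ ordGE K p 1 := by
      simpa only [sub_add_sub_cancel] using add_mem ha hc
    have hc2 := add_ne_zero_and_ord_add p hx (y := -(x - algebraMap R K c ^ 2))
      (by rw [hx0]; exact neg_mem hxc)
    rw [neg_sub, add_sub_cancel] at hc2
    refine isLocalSquare_of_sub_sq_mem h2 (y := algebraMap R K c) ?_ ?_
    · exact fun h ↦ hc2.1 (by rw [h, zero_pow two_ne_zero])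
    · rwa [hc2.2, hx0]

lemma isSquare_mul_of_not_isSquare {F : Type*} [Field F] [Finite F] {a b : F}
    (ha : ¬ IsSquare a) (hb : ¬ IsSquare b) : IsSquare (a * b) := by
  classical
  have := Fintype.ofFinite F
  rw [← quadraticChar_neg_one_iff_not_isSquare] at ha hb
  by_contra hab
  rw [← quadraticChar_neg_one_iff_not_isSquare, map_mul, ha, hb] at hab
  norm_num at hab

lemma isLocalSquare_mul_of_not [Finite (R ⧸ p.asIdeal)] (h2 : ord p (2 : K) = 0) (hx : x ≠ 0)
    (hx0 : ord p x = 0) (hy : y ≠ 0) (hy0 : ord p y = 0) (hxs : ¬ IsLocalSquare p x)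
    (hys : ¬ IsLocalSquare p y) : IsLocalSquare p (x * y) := by
  have hy_mem : y ∈ ordGE K p 0 := mem_ordGE_of_le p hy0.ge
  obtain ⟨a, ha⟩ := exists_sub_algebraMap_mem_ordGE p 1 (mem_ordGE_of_le p hx0.ge)
  obtain ⟨c, hc⟩ := exists_sub_algebraMap_mem_ordGE p 1 hy_mem
  have hac : x * y - algebraMap R K (a * c) ∈ ordGE K p 1 := by
    rw [show x * y - algebraMap R K (a * c) =
      (x - algebraMap R K a) * y + algebraMap R K a * (y - algebraMap R K c) by
        rw [map_mul]; ring]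
    exact add_mem (mul_mem_ordGE_right p ha hy_mem)
      (mul_mem_ordGE_left p (algebraMap_mem_ordGE_zero p a) hc)
  rw [isLocalSquare_iff_isSquare_residue h2 hx hx0 ha] at hxs
  rw [isLocalSquare_iff_isSquare_residue h2 hy hy0 hc] at hys
  rw [isLocalSquare_iff_isSquare_residue h2 (mul_ne_zero hx hy)
    (by rw [ord_mul p hx hy, hx0, hy0, add_zero]) hac, map_mul]
  have := p.isMaximal
  let := Ideal.Quotient.field p.asIdeal
  exact isSquare_mul_of_not_isSquare hxs hys

lemma even_ord_sq_sub_mul_sq (h2 : ord p (2 : K) = 0) (hb0 : b ≠ 0) (hb : ¬ IsLocalSquare p b)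
    (hbe : Even (ord p b)) : Even (ord p (y ^ 2 - b * z ^ 2)) := by
  have even_bz : Even (ord p (b * z ^ 2)) := by
    rcases eq_or_ne z 0 with rfl | hz
    · simp
    · rw [ord_mul p hb0 (pow_ne_zero 2 hz), ord_pow]
      exact hbe.add (even_two_mul _)
  rcases eq_or_ne y 0 with rfl | hy
  · simpa using even_bz
  rcases eq_or_ne z 0 with rfl | hz
  · simp
  have not_mem : y ^ 2 - b * z ^ 2 ∉ ordGE K p (ord p (y ^ 2) + 1) := fun h ↦ hb <|
    (isLocalSquare_mul_sq_iff hz).1 (isLocalSquare_of_sub_sq_mem h2 hy (by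
      rwa [← neg_mem_iff, neg_sub]))
  have hne : y ^ 2 - b * z ^ 2 ≠ 0 := fun h ↦ not_mem (h ▸ zero_mem _)
  rw [mem_ordGE_iff p hne, not_le, Int.lt_add_one_iff] at not_mem
  rcases not_mem.eq_or_lt with h | h
  · rw [h, ord_pow]
    exact even_two_mul _
  · have := (add_ne_zero_and_ord_add p (neg_ne_zero.2 hne) (y := y ^ 2)
      (mem_ordGE_of_le p (by rw [ord_neg]; exact h))).2
    rw [ord_neg, neg_sub, sub_add_cancel] at this
    rwa [← this]

lemma isLocalSquare_sq_sub_mul_sq (h2 : ord p (2 : K) = 0) (hb : ¬ Even (ord p b))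
    (hne : y ^ 2 - b * z ^ 2 ≠ 0) (h0 : ord p (y ^ 2 - b * z ^ 2) = 0) :
    IsLocalSquare p (y ^ 2 - b * z ^ 2) := by
  rcases eq_or_ne z 0 with rfl | hz
  · rw [zero_pow two_ne_zero, mul_zero, sub_zero] at hne ⊢
    exact isLocalSquare_sq p (pow_ne_zero_iff two_ne_zero |>.1 hne)
  have hb0 : b ≠ 0 := by
    rintro rfl
    simp at hb
  have hbz := mul_ne_zero hb0 (pow_ne_zero 2 hz)
  have odd_bz : ¬ Even (ord p (b * z ^ 2)) := by
    rw [ord_mul p hb0 (pow_ne_zero 2 hz), ord_pow, Int.even_add]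
    simpa using hb
  rcases eq_or_ne y 0 with rfl | hy
  · rw [zero_pow two_ne_zero, zero_sub, ord_neg] at h0
    simp [h0] at odd_bz
  refine isLocalSquare_of_sub_sq_mem h2 hy ?_
  rw [sub_sub_cancel_left, neg_mem_iff]
  by_contra hlt
  have ord_ne : ord p (b * z ^ 2) ≠ ord p (y ^ 2) := by
    intro h
    rw [h, ord_pow] at odd_bz
    simp at odd_bz
  rw [mem_ordGE_iff p hbz] at hlt
  have := (add_ne_zero_and_ord_add p (neg_ne_zero.2 hbz) (y := y ^ 2)
    (mem_ordGE_of_le p (by rw [ord_neg]; lia))).2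
  rw [neg_add_eq_sub, h0, ord_neg] at this
  simp [← this] at odd_bz

end LocalSquares

section PrimesBelow

variable {K E : Type*} [Field K] [Field E] [Algebra K E]

lemma coe_algebraMap_ringOfIntegers (r : 𝓞 K) :
    algebraMap (𝓞 E) E (algebraMap (𝓞 K) (𝓞 E) r) = algebraMap K E (algebraMap (𝓞 K) K r) :=
  rfl

variable (E) in
lemma exists_under_eq (p : HeightOneSpectrum (𝓞 K)) :
    ∃ P : HeightOneSpectrum (𝓞 E), P.under (𝓞 K) = p := by
  have inj := FaithfulSMul.algebraMap_injective (𝓞 K) (𝓞 E)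
  obtain ⟨P, hP, h⟩ := p.asIdeal.exists_ideal_over_prime_of_isIntegral_of_isDomain (S := 𝓞 E)
    ((RingHom.injective_iff_ker_eq_bot _).1 inj ▸ bot_le)
  refine ⟨⟨P, hP, ?_⟩, HeightOneSpectrum.ext h⟩
  rintro rfl
  exact p.ne_bot (h ▸ Ideal.comap_bot_of_injective _ inj)

/-- The prime `τ⁻¹(P)` for an automorphism `τ` of `E`. -/
noncomputable def conjPrime (P : HeightOneSpectrum (𝓞 E)) (τ : E ≃+* E) : HeightOneSpectrum (𝓞 E) :=
  P.comap (RingOfIntegers.mapRingEquiv τ : 𝓞 E →+* 𝓞 E) (RingOfIntegers.mapRingEquiv τ).surjective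

lemma under_conjPrime (P : HeightOneSpectrum (𝓞 E)) {τ : E ≃+* E}
    (hτ : ∀ x : K, τ (algebraMap K E x) = algebraMap K E x) :
    (conjPrime P τ).under (𝓞 K) = P.under (𝓞 K) := by
  ext m
  have : RingOfIntegers.mapRingEquiv τ (algebraMap (𝓞 K) (𝓞 E) m) = algebraMap (𝓞 K) (𝓞 E) m :=
    RingOfIntegers.ext (hτ m)
  change RingOfIntegers.mapRingEquiv τ (algebraMap (𝓞 K) (𝓞 E) m) ∈ P.asIdeal ↔
    algebraMap (𝓞 K) (𝓞 E) m ∈ P.asIdeal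
  rw [this]

variable [NumberField K] [NumberField E] (P : HeightOneSpectrum (𝓞 E)) {x : K} {y : E}

lemma algebraMap_mem_ordGE_zero_of_under (h : x ∈ ordGE K (P.under (𝓞 K)) 0) :
    algebraMap K E x ∈ ordGE E P 0 := by
  obtain ⟨m, hm, a, h⟩ := (mem_ordGE_zero_iff _).1 h
  refine (mem_ordGE_zero_iff _).2 ⟨algebraMap _ _ m, hm, algebraMap _ _ a, ?_⟩
  rw [coe_algebraMap_ringOfIntegers, coe_algebraMap_ringOfIntegers, ← h, map_mul]

lemma algebraMap_mem_ordGE_one_of_under (h : x ∈ ordGE K (P.under (𝓞 K)) 1) :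
    algebraMap K E x ∈ ordGE E P 1 := by
  obtain ⟨m, hm, a, ha, h⟩ := (mem_ordGE_one_iff _).1 h
  refine (mem_ordGE_one_iff _).2 ⟨algebraMap _ _ m, hm, algebraMap _ _ a, ha, ?_⟩
  rw [coe_algebraMap_ringOfIntegers, coe_algebraMap_ringOfIntegers, ← h, map_mul]

lemma ord_algebraMap_eq_zero_iff_under :
    ord P (algebraMap K E x) = 0 ↔ ord (P.under (𝓞 K)) x = 0 := by
  have pos_of_pos : ∀ z : K, 0 < ord (P.under (𝓞 K)) z → 0 < ord P (algebraMap K E z) := by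
    intro z hz
    have hz0 : algebraMap K E z ≠ 0 := by
      rintro h
      rw [(map_eq_zero _).1 h, ord_zero] at hz
      exact hz.false
    have := algebraMap_mem_ordGE_one_of_under P (mem_ordGE_of_le (n := 1) _ hz)
    rwa [mem_ordGE_iff P hz0] at this
  have nonneg_of_nonneg : ∀ z : K, 0 ≤ ord (P.under (𝓞 K)) z → 0 ≤ ord P (algebraMap K E z) := by
    intro z hz
    rcases eq_or_ne z 0 with rfl | hz0
    · simp
    · exact (mem_ordGE_iff P (by simpa using hz0)).1
        (algebraMap_mem_ordGE_zero_of_under P (mem_ordGE_of_le _ hz))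
  have h₁ := pos_of_pos x
  have h₂ := pos_of_pos x⁻¹
  have h₃ := nonneg_of_nonneg x
  have h₄ := nonneg_of_nonneg x⁻¹
  rw [map_inv₀, ord_inv, ord_inv] at h₂ h₄
  lia

lemma IsLocalSquare.map_of_under (h : IsLocalSquare (P.under (𝓞 K)) x) :
    IsLocalSquare P (algebraMap K E x) := by
  obtain ⟨y, hy, h⟩ := h
  refine ⟨algebraMap K E y, by simpa using hy, ?_⟩
  have := algebraMap_mem_ordGE_one_of_under P h
  rwa [map_div₀, map_sub, map_div₀, map_pow, map_one, map_ofNat] at this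

variable (E) in
/-- The primes of `E` that lie above a prime in the set `S` of primes of `K`. -/
def primesAbove (S : Set (HeightOneSpectrum (𝓞 K))) : Set (HeightOneSpectrum (𝓞 E)) :=
  {P | P.under (𝓞 K) ∈ S}

lemma finite_primesAbove {S : Set (HeightOneSpectrum (𝓞 K))} (hS : S.Finite) :
    (primesAbove E S).Finite := by
  refine Set.Finite.preimage' hS fun p _ ↦ ?_
  have := IsDedekindDomain.primesOver_finite p.asIdeal (𝓞 E)
  refine Set.Finite.of_finite_image (f := HeightOneSpectrum.asIdeal) (this.subset ?_)
    (fun _ _ _ _ ↦ HeightOneSpectrum.ext)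
  rintro _ ⟨P, rfl, rfl⟩
  exact ⟨P.isPrime, ⟨rfl⟩⟩

variable {τ : E ≃+* E}

lemma apply_mem_ordGE_zero (h : y ∈ ordGE E (conjPrime P τ) 0) : τ y ∈ ordGE E P 0 := by
  obtain ⟨m, hm, a, h⟩ := (mem_ordGE_zero_iff _).1 h
  exact (mem_ordGE_zero_iff _).2 ⟨RingOfIntegers.mapRingEquiv τ m, hm,
    RingOfIntegers.mapRingEquiv τ a, (map_mul τ _ _).symm.trans (congrArg τ h)⟩

lemma apply_mem_ordGE_one (h : y ∈ ordGE E (conjPrime P τ) 1) : τ y ∈ ordGE E P 1 := by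
  obtain ⟨m, hm, a, ha, h⟩ := (mem_ordGE_one_iff _).1 h
  exact (mem_ordGE_one_iff _).2 ⟨RingOfIntegers.mapRingEquiv τ m, hm,
    RingOfIntegers.mapRingEquiv τ a, ha, (map_mul τ _ _).symm.trans (congrArg τ h)⟩

end PrimesBelow

section SqrtExt

variable {K : Type*} [Field K] {b : K}

/-- The algebra `K(√b)`, which is a field when `b` is not a square. -/
abbrev SqrtExt (b : K) : Type _ := QuadraticAlgebra K b 0

lemma norm_sqrtExt (x : SqrtExt b) : x.norm = x.re ^ 2 - b * x.im ^ 2 := by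
  rw [QuadraticAlgebra.norm_def]
  ring

lemma omega_sq_sqrtExt : (QuadraticAlgebra.omega : SqrtExt b) ^ 2 = algebraMap K _ b := by
  ext <;> simp [sq]

variable [Fact (¬ IsSquare b)]

instance : Fact (∀ r : K, r ^ 2 ≠ b + 0 * r) :=
  ⟨fun r h ↦ Fact.out (p := ¬ IsSquare b) ⟨r, by rw [← sq, h, zero_mul, add_zero]⟩⟩

instance [CharZero K] : CharZero (SqrtExt b) :=
  charZero_of_injective_algebraMap (algebraMap K (SqrtExt b)).injective

instance [NumberField K] : NumberField (SqrtExt b) where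
  to_finiteDimensional := Module.Finite.trans K _

-- With `s = √b` and `y² ≈ b`, the element `θ = (1 + s / y) / 2` satisfies `θ (1 - θ) ≡ 0` modulo
-- `p` while conjugation exchanges `θ` and `1 - θ`, so it moves any prime above `p`.
lemma exists_under_eq_and_conjPrime_ne [NumberField K] {p : HeightOneSpectrum (𝓞 K)}
    (h : IsLocalSquare p b) : ∃ P : HeightOneSpectrum (𝓞 (SqrtExt b)),
      P.under (𝓞 K) = p ∧ conjPrime P starRingAut ≠ P := by
  obtain ⟨P, rfl⟩ := exists_under_eq (SqrtExt b) p
  refine ⟨P, rfl, fun hconj ↦ ?_⟩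
  obtain ⟨y, hy, h⟩ := h
  set θ : SqrtExt b := (1 + QuadraticAlgebra.omega / algebraMap K _ y) / 2 with hθ
  have hy' : algebraMap K (SqrtExt b) y ≠ 0 := by simpa using hy
  have star_θ : star θ = 1 - θ := by
    have star_omega : star (QuadraticAlgebra.omega : SqrtExt b) = -QuadraticAlgebra.omega := by
      ext <;> simp
    have star_y : star (algebraMap K (SqrtExt b) y) = algebraMap K (SqrtExt b) y := by
      ext <;> simp
    rw [hθ, star_div₀, star_add, star_div₀, star_omega, star_y, star_one, star_ofNat]
    field_simp
    ring
  have mul_θ : θ * (1 - θ) ∈ ordGE (SqrtExt b) P 1 := by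
    have : θ * (1 - θ) = -algebraMap K (SqrtExt b) ((b / y ^ 2 - 1) / 4) := by
      rw [hθ, map_div₀, map_sub, map_div₀, ← omega_sq_sqrtExt, map_pow, map_one, map_ofNat]
      field_simp
      ring
    rw [this]
    exact neg_mem (algebraMap_mem_ordGE_one_of_under P h)
  have star_mem : ∀ x ∈ ordGE (SqrtExt b) P 1, star x ∈ ordGE (SqrtExt b) P 1 :=
    fun x hx ↦ apply_mem_ordGE_one (τ := starRingAut) P (by rwa [hconj])
  have both_mem : θ ∈ ordGE (SqrtExt b) P 1 ∧ 1 - θ ∈ ordGE (SqrtExt b) P 1 := by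
    rcases mem_ordGE_one_or_of_mul_mem P mul_θ with h | h
    · exact ⟨h, star_θ ▸ star_mem θ h⟩
    · refine ⟨?_, h⟩
      simpa only [star_sub, star_one, star_θ, sub_sub_cancel] using star_mem _ h
  have one_mem := add_mem both_mem.1 both_mem.2
  rw [add_sub_cancel, mem_ordGE_iff P one_ne_zero, ord_one] at one_mem
  exact absurd one_mem (by norm_num)

end SqrtExt

section SquareIndex

open Subgroup

variable {G H A : Type*} [CommGroup G] [CommGroup H] [AddCommGroup A]

lemma square_eq_range_powMonoidHom : square G = (powMonoidHom 2 : G →* G).range := by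
  ext x
  simp only [mem_square, isSquare_iff_exists_sq, MonoidHom.mem_range, powMonoidHom_apply, eq_comm]

lemma index_square_multiplicative [Module.Free ℤ A] [Module.Finite ℤ A] :
    (square (Multiplicative A)).index = 2 ^ Module.finrank ℤ A := by
  rw [square_eq_range_powMonoidHom, ← AddSubgroup.index_range_nsmul A 2]
  rfl

lemma square_subgroupOf {N : Subgroup G} (hN : ∀ x, x ^ 2 ∈ N → x ∈ N) :
    (square G).subgroupOf N = square N := by
  ext x
  simp only [mem_subgroupOf, mem_square, isSquare_iff_exists_sq]
  refine ⟨fun ⟨y, hy⟩ ↦ ⟨⟨y, hN y (hy ▸ x.2)⟩, Subtype.ext hy⟩, ?_⟩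
  rintro ⟨y, rfl⟩
  exact ⟨y, rfl⟩

lemma index_square_congr (e : G ≃* H) : (square G).index = (square H).index := by
  rw [← index_comap_of_surjective (square H) (f := e.toMonoidHom) e.surjective]
  congr 1
  ext x
  exact ⟨fun h ↦ h.map e, fun h ↦ by simpa using h.map e.symm⟩

lemma index_square_eq_mul_index_square_ker [Module.Free ℤ A] [Module.Finite ℤ A]
    {f : G →* Multiplicative A} (hf : Function.Surjective f) :
    (square G).index = 2 ^ Module.finrank ℤ A * (square f.ker).index := by
  have comap_square : (square (Multiplicative A)).comap f = square G ⊔ f.ker := by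
    have : (square (Multiplicative A)) = (square G).map f := by
      ext x
      constructor
      · rintro ⟨y, rfl⟩
        obtain ⟨y, rfl⟩ := hf y
        exact ⟨y * y, ⟨y, rfl⟩, map_mul f y y⟩
      · rintro ⟨_, ⟨y, rfl⟩, rfl⟩
        exact ⟨f y, map_mul f y y⟩
    rw [this, comap_map_eq]
  have : IsAddTorsionFree A := IsAddTorsionFree.of_isTorsionFree ℤ A
  have ker_closed : ∀ x, x ^ 2 ∈ f.ker → x ∈ f.ker := fun x hx ↦ by
    rw [MonoidHom.mem_ker, map_pow] at hx
    exact (pow_eq_one_iff_left two_ne_zero).1 hx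
  rw [← relIndex_mul_index (le_sup_left : square G ≤ square G ⊔ f.ker), ← comap_square,
    index_comap_of_surjective _ hf, index_square_multiplicative, comap_square, sup_comm,
    relIndex_sup_right, relIndex, square_subgroupOf ker_closed, mul_comm]

lemma index_square_of_ne_one {f : G →* Multiplicative ℤ} (hf : f ≠ 1) :
    (square G).index = 2 * (square f.ker).index := by
  have : Nontrivial f.range := by
    rwa [Subgroup.nontrivial_iff_ne_bot, Ne, MonoidHom.range_eq_bot_iff]
  have : Infinite f.range := not_finite_iff_infinite.1 fun _ ↦
    not_isMulTorsion_of_isMulTorsionFree (G := f.range) isMulTorsion_of_finite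
  let g : G →* Multiplicative ℤ := (intCyclicMulEquiv (G := f.range)).symm.toMonoidHom.comp
    f.rangeRestrict
  have ker_g : g.ker = f.ker := by
    ext x
    simp [g, MonoidHom.mem_ker]
  rw [index_square_eq_mul_index_square_ker (f := g), ker_g, Module.finrank_self, pow_one]
  exact (MulEquiv.surjective (intCyclicMulEquiv (G := f.range)).symm).comp
    f.rangeRestrict_surjective

lemma index_square_of_isCyclic [Finite G] [IsCyclic G] (h : Even (Nat.card G)) :
    (square G).index = 2 := by
  rw [square_eq_range_powMonoidHom, IsCyclic.index_powMonoidHom_range, Nat.gcd_eq_right h.two_dvd]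

end SquareIndex

section SUnits

open NumberField.Units Subgroup

variable (K : Type*) [Field K] [NumberField K]

lemma index_square_units : (square (𝓞 K)ˣ).index = 2 ^ (rank K + 1) := by
  let f : (𝓞 K)ˣ →* Multiplicative (Additive ((𝓞 K)ˣ ⧸ torsion K)) :=
    (QuotientGroup.mk' (torsion K) : (𝓞 K)ˣ →* (𝓞 K)ˣ ⧸ torsion K)
  have ker_f : f.ker = torsion K := QuotientGroup.ker_mk' _
  have surj_f : Function.Surjective f := QuotientGroup.mk'_surjective _
  rw [index_square_eq_mul_index_square_ker (A := Additive ((𝓞 K)ˣ ⧸ torsion K)) surj_f,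
    finrank_modTorsion, ker_f, index_square_of_isCyclic (even_torsionOrder K), pow_succ]

variable {K} {S T : Set (HeightOneSpectrum (𝓞 K))} {p : HeightOneSpectrum (𝓞 K)} {x : Kˣ}

lemma mem_unit_iff_ord : x ∈ S.unit K ↔ ∀ p ∉ S, ord p (x : K) = 0 :=
  forall₂_congr fun p _ ↦ valuation_eq_one_iff_ord_eq_zero p x.ne_zero

lemma unit_mono (h : S ⊆ T) : S.unit K ≤ T.unit K :=
  fun _ hx p hp ↦ hx p fun hp' ↦ hp (h hp')

lemma mem_unit_of_sq_mem (h : x ^ 2 ∈ S.unit K) : x ∈ S.unit K := by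
  rw [mem_unit_iff_ord] at h ⊢
  intro p hp
  simpa using h p hp

variable (S) in
lemma neg_one_mem_unit : (-1 : Kˣ) ∈ S.unit K :=
  mem_unit_of_sq_mem (by rw [neg_one_sq]; exact one_mem _)

variable (S) in
lemma relIndex_square_unit :
    (square Kˣ).relIndex (S.unit K) = (square (S.unit K)).index := by
  rw [relIndex, square_subgroupOf fun _ ↦ mem_unit_of_sq_mem]

variable (K) in
/-- The units of `𝓞 K` are the `∅`-units. -/
noncomputable def unitsEquivUnitEmpty :
    (𝓞 K)ˣ ≃* (∅ : Set (HeightOneSpectrum (𝓞 K))).unit K :=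
  (Units.mapEquiv ((Algebra.botEquivOfInjective RingOfIntegers.coe_injective).symm.trans
    (Subalgebra.equivOfEq _ _ (integer_empty (𝓞 K) K).symm)).toMulEquiv).trans
    (Set.unitEquivUnitsInteger _ _).symm

lemma exists_mem_unit_singleton_ord_pos (p : HeightOneSpectrum (𝓞 K)) :
    ∃ g ∈ ({p} : Set (HeightOneSpectrum (𝓞 K))).unit K, 0 < ord p (g : K) := by
  have hp0 : p.asIdeal ∈ nonZeroDivisors (Ideal (𝓞 K)) := mem_nonZeroDivisors_of_ne_zero p.ne_bot
  obtain ⟨k, hk, h⟩ := isOfFinOrder_iff_pow_eq_one.1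
    (isOfFinOrder_of_finite (ClassGroup.mk0 ⟨p.asIdeal, hp0⟩))
  rw [← map_pow, ClassGroup.mk0_eq_one_iff] at h
  obtain ⟨g, hg⟩ := h
  replace hg : p.asIdeal ^ k = Ideal.span {g} := by simpa using hg
  have hg0 : (g : K) ≠ 0 := by
    rintro hg0
    rw [RingOfIntegers.coe_eq_zero_iff.1 hg0, Ideal.span_singleton_zero] at hg
    exact p.ne_bot ((pow_eq_zero_iff hk.ne').1 (hg.trans Ideal.zero_eq_bot.symm))
  refine ⟨Units.mk0 (g : K) hg0, mem_unit_iff_ord.2 fun q hq ↦ ?_, ?_⟩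
  · refine ord_algebraMap_eq_zero q fun hgq ↦ hq (HeightOneSpectrum.ext ?_)
    have : p.asIdeal ≤ q.asIdeal :=
      q.isPrime.le_of_pow_le (hg.le.trans ((Ideal.span_singleton_le_iff_mem _).2 hgq))
    exact (p.isMaximal.eq_of_le q.isPrime.ne_top this).symm
  · have : g ∈ p.asIdeal := Ideal.pow_le_self hk.ne' (hg ▸ Ideal.mem_span_singleton_self g)
    exact Int.lt_iff_add_one_le.2
      ((mem_ordGE_iff p hg0).1 ((algebraMap_mem_ordGE_one_iff p g).2 this))

/-- The valuation at `p` as a homomorphism on the group of `S`-units. -/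
noncomputable def ordHom (S : Set (HeightOneSpectrum (𝓞 K))) (p : HeightOneSpectrum (𝓞 K)) :
    S.unit K →* Multiplicative ℤ where
  toFun x := .ofAdd (ord p ((x : Kˣ) : K))
  map_one' := by simp
  map_mul' x y := by simp [ord_mul, ofAdd_add]

lemma ordHom_ne_one (hp : p ∈ S) : ordHom S p ≠ 1 := by
  obtain ⟨g, hg, h⟩ := exists_mem_unit_singleton_ord_pos p
  intro h1
  exact h.ne' (congrArg Multiplicative.toAdd (DFunLike.congr_fun h1
    ⟨g, unit_mono (Set.singleton_subset_iff.2 hp) hg⟩))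

lemma map_subtype_ker_ordHom (hp : p ∉ S) :
    (ordHom (insert p S) p).ker.map (Subgroup.subtype _) = S.unit K := by
  ext x
  simp only [mem_map, MonoidHom.mem_ker, subtype_apply, Subtype.exists, exists_and_right,
    exists_eq_right, mem_unit_iff_ord]
  refine ⟨fun ⟨h, h0⟩ q hq ↦ ?_, fun h ↦ ⟨fun q hq ↦ h q fun hqS ↦ hq (.inr hqS), ?_⟩⟩
  · rcases eq_or_ne q p with rfl | hqp
    · exact congrArg Multiplicative.toAdd h0
    · exact h q (by simp [hqp, hq])
  · exact congrArg Multiplicative.ofAdd (h p hp)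

lemma index_square_unit_insert (hp : p ∉ S) :
    (square ((insert p S).unit K)).index = 2 * (square (S.unit K)).index := by
  rw [index_square_of_ne_one (ordHom_ne_one (Set.mem_insert p S)), ← map_subtype_ker_ordHom hp]
  congr 1
  exact index_square_congr (equivMapOfInjective _ _ (subtype_injective _))

lemma relIndex_square_unit_eq_two_pow (hS : S.Finite) :
    (square Kˣ).relIndex (S.unit K) = 2 ^ (rank K + 1 + S.ncard) := by
  rw [relIndex_square_unit]
  induction S, hS using Set.Finite.induction_on with
  | empty =>
    rw [← index_square_congr (unitsEquivUnitEmpty K), index_square_units, Set.ncard_empty, add_zero]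
  | @insert p S hp hS ih =>
    rw [index_square_unit_insert hp, ih, Set.ncard_insert_of_notMem hp hS]
    ring

end SUnits

section NormIndex

open Subgroup

lemma two_mul_index_range_mul_index_square_le {A B : Type*} [CommGroup A] [CommGroup B]
    {ι : A →* B} {ν : B →* A} (hνι : ∀ a, ν (ι a) = a ^ 2)
    (hilbert90 : (square A).comap ν ≤ ι.range ⊔ square B) {d : A} (hd : ¬ IsSquare d)
    (hιd : IsSquare (ι d)) :
    2 * (ν.range.index * (square B).index) ≤ (square A).index ^ 2 := by
  have comap_ν : (square A).comap ν = ι.range ⊔ square B := by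
    refine hilbert90.antisymm (sup_le ?_ fun b hb ↦ hb.map ν)
    rintro _ ⟨a, rfl⟩
    exact ⟨a, (hνι a).trans (sq a)⟩
  have le_range : square A ≤ ν.range := by
    rintro _ ⟨a, rfl⟩
    exact ⟨ι a, (hνι a).trans (sq a)⟩
  have le_comap_ι : square A ≤ (square B).comap ι := fun a ha ↦ ha.map ι
  have index_A := relIndex_mul_index le_range
  have index_A' := relIndex_mul_index le_comap_ι
  have index_B := relIndex_mul_index (le_sup_right : square B ≤ ι.range ⊔ square B)
  rw [← index_comap, comap_ν] at index_A
  rw [relIndex_sup_right, ← index_comap] at index_B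
  have ne_one : (square A).relIndex ((square B).comap ι) ≠ 1 := fun h ↦
    hd (relIndex_eq_one.1 h hιd)
  rcases Nat.eq_zero_or_pos ((square A).relIndex ((square B).comap ι)) with h0 | hpos
  · rw [h0, zero_mul] at index_A'
    rw [← index_B, ← index_A']
    have := index_A.trans index_A'.symm
    rcases mul_eq_zero.1 this with h | h <;> simp [h]
  · calc 2 * (ν.range.index * (square B).index)
        = 2 * ((square B).comap ι).index * (square A).index := by
          rw [← index_B, ← index_A]
          ring
      _ ≤ (square A).relIndex ((square B).comap ι) * ((square B).comap ι).index
          * (square A).index := by gcongr; lia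
      _ = (square A).index ^ 2 := by rw [index_A', sq]

end NormIndex

section GeneratesClassGroup

variable {K : Type*} [Field K] [NumberField K]

/-- The primes in `S` generate the class group: away from `S`, every divisor is principal. -/
def GeneratesClassGroup (S : Set (HeightOneSpectrum (𝓞 K))) : Prop :=
  ∀ f : HeightOneSpectrum (𝓞 K) →₀ ℤ, ∃ c : K, c ≠ 0 ∧ ∀ p ∉ S, ord p c = f p

variable {S T : Set (HeightOneSpectrum (𝓞 K))}

lemma GeneratesClassGroup.mono (h : GeneratesClassGroup S) (hST : S ⊆ T) :
    GeneratesClassGroup T := fun f ↦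
  let ⟨c, hc, h⟩ := h f
  ⟨c, hc, fun p hp ↦ h p fun hpS ↦ hp (hST hpS)⟩

lemma GeneratesClassGroup.exists_primitive (h : GeneratesClassGroup S) {x y : K}
    (hxy : x ≠ 0 ∨ y ≠ 0) : ∃ c : K, c ≠ 0 ∧ ∀ p ∉ S,
      (c * x ∈ ordGE K p 0 ∧ c * y ∈ ordGE K p 0) ∧
      ¬ (c * x ∈ ordGE K p 1 ∧ c * y ∈ ordGE K p 1) := by
  wlog hx : x ≠ 0 generalizing x y
  · simpa only [and_comm] using this hxy.symm (hxy.resolve_left hx)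
  wlog hy : y ≠ 0 generalizing y
  · obtain ⟨c, hc, hcp⟩ := this (.inl hx) hx
    rw [not_not.1 hy]
    exact ⟨c, hc, fun p hp ↦ by simpa [zero_mem] using hcp p hp⟩
  obtain ⟨c, hc, hcp⟩ := h (Finsupp.ofSupportFinite (fun p ↦ -min (ord p x) (ord p y))
    (((finite_setOf_ord_ne_zero x).union (finite_setOf_ord_ne_zero y)).subset fun p hp ↦ by
      by_contra hcon
      simp_all))
  refine ⟨c, hc, fun p hp ↦ ?_⟩
  have hcp : ord p c = -min (ord p x) (ord p y) := hcp p hp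
  simp only [mul_mem_ordGE_iff p hc, mem_ordGE_iff p hx, mem_ordGE_iff p hy]
  lia

end GeneratesClassGroup

section PrimesAbove

variable {K E : Type*} [Field K] [NumberField K] [Field E] [NumberField E] [Algebra K E]
  {P : HeightOneSpectrum (𝓞 E)}

lemma mem_ordGE_one_of_algebraMap_mem {x : K} (h : algebraMap K E x ∈ ordGE E P 1) :
    x ∈ ordGE K (P.under (𝓞 K)) 1 := by
  rcases eq_or_ne x 0 with rfl | hx
  · exact zero_mem _
  rw [mem_ordGE_iff P (by simpa using hx)] at h
  rw [mem_ordGE_iff _ hx]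
  by_contra! hlt
  have := algebraMap_mem_ordGE_zero_of_under (E := E) P (x := x⁻¹)
    (mem_ordGE_of_le _ (by rw [ord_inv]; lia))
  rw [mem_ordGE_iff P (by simpa using hx), map_inv₀, ord_inv] at this
  lia

lemma ord_apply_eq_zero {τ : E ≃+* E} {y : E} (h : ord (conjPrime P τ) y = 0) :
    ord P (τ y) = 0 := by
  rcases eq_or_ne y 0 with rfl | hy
  · simp
  have hτy : τ y ≠ 0 := by simpa using hy
  have nonneg := apply_mem_ordGE_zero P (mem_ordGE_of_le _ h.ge)
  have nonpos := apply_mem_ordGE_zero (y := y⁻¹) P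
    (mem_ordGE_of_le _ (by rw [ord_inv, h, neg_zero]))
  rw [mem_ordGE_iff P hτy] at nonneg
  rw [map_inv₀, mem_ordGE_iff P (inv_ne_zero hτy), ord_inv] at nonpos
  lia

end PrimesAbove

section SqrtExt

variable {K : Type*} [Field K] {b : K}

lemma algebraMap_two_mul_re (z : SqrtExt b) :
    algebraMap K (SqrtExt b) (2 * z.re) = z + star z := by
  ext <;> simp; ring

lemma algebraMap_two_mul_im_mul_omega (z : SqrtExt b) :
    algebraMap K (SqrtExt b) (2 * z.im) * QuadraticAlgebra.omega = z - star z := by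
  ext <;> simp; ring

lemma algebraMap_re_add_algebraMap_im_mul_omega (z : SqrtExt b) :
    algebraMap K (SqrtExt b) z.re + algebraMap K (SqrtExt b) z.im * QuadraticAlgebra.omega = z := by
  ext <;> simp

variable [Fact (¬ IsSquare b)]

variable (b) in
lemma ne_zero_of_not_isSquare : b ≠ 0 := by
  rintro rfl
  exact Fact.out (p := ¬ IsSquare (0 : K)) .zero

variable (b) in
lemma omega_ne_zero : (QuadraticAlgebra.omega : SqrtExt b) ≠ 0 := by
  intro h
  have := omega_sq_sqrtExt (b := b)
  rw [h, zero_pow two_ne_zero, eq_comm, map_eq_zero] at this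
  exact ne_zero_of_not_isSquare b this

variable {S : Set (HeightOneSpectrum (𝓞 K))}

lemma conjPrime_star_mem_primesAbove {P : HeightOneSpectrum (𝓞 (SqrtExt b))} :
    conjPrime P starRingAut ∈ primesAbove (SqrtExt b) S ↔
      P ∈ primesAbove (SqrtExt b) S := by
  change (conjPrime P starRingAut).under (𝓞 K) ∈ S ↔ P.under (𝓞 K) ∈ S
  rw [under_conjPrime P fun x ↦ by ext <;> simp]

variable [NumberField K]

lemma ord_omega_eq_zero {P : HeightOneSpectrum (𝓞 (SqrtExt b))}
    (hb : ord (P.under (𝓞 K)) b = 0) : ord P (QuadraticAlgebra.omega : SqrtExt b) = 0 := by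
  rw [← ord_algebraMap_eq_zero_iff_under P, ← omega_sq_sqrtExt, ord_pow] at hb
  lia

/-- The inclusion of the `S`-units of `K` into those of `K(√b)`. -/
noncomputable def unitInclusion (b : K) [Fact (¬ IsSquare b)]
    (S : Set (HeightOneSpectrum (𝓞 K))) :
    S.unit K →* (primesAbove (SqrtExt b) S).unit (SqrtExt b) :=
  ((Units.map (algebraMap K (SqrtExt b) : K →* SqrtExt b)).comp (S.unit K).subtype).codRestrict _
    fun x ↦ mem_unit_iff_ord.2 fun P hP ↦
      (ord_algebraMap_eq_zero_iff_under P).2 (mem_unit_iff_ord.1 x.2 _ hP)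

lemma norm_mem_unit {γ : (SqrtExt b)ˣ} (hγ : γ ∈ (primesAbove (SqrtExt b) S).unit (SqrtExt b)) :
    Units.map QuadraticAlgebra.norm γ ∈ S.unit K := by
  rw [mem_unit_iff_ord] at hγ ⊢
  intro p hp
  obtain ⟨P, rfl⟩ := exists_under_eq (SqrtExt b) p
  rw [← ord_algebraMap_eq_zero_iff_under P, Units.coe_map]
  have hstar : ord P (star (γ : SqrtExt b)) = 0 :=
    ord_apply_eq_zero (τ := starRingAut) (hγ _ (conjPrime_star_mem_primesAbove.not.2 hp))
  rw [QuadraticAlgebra.algebraMap_norm_eq_mul_star, ord_mul P γ.ne_zero (by simp), hstar, hγ P hp,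
    add_zero]

/-- The norm from the `S`-units of `K(√b)` to those of `K`. -/
noncomputable def unitNorm (b : K) [Fact (¬ IsSquare b)] (S : Set (HeightOneSpectrum (𝓞 K))) :
    (primesAbove (SqrtExt b) S).unit (SqrtExt b) →* S.unit K :=
  ((Units.map QuadraticAlgebra.norm).comp (Subgroup.subtype _)).codRestrict _
    fun γ ↦ norm_mem_unit γ.2

lemma unitNorm_unitInclusion (x : S.unit K) : unitNorm b S (unitInclusion b S x) = x ^ 2 :=
  Subtype.ext (Units.ext (QuadraticAlgebra.norm_algebraMap _))

-- If `δ` were divisible by a prime, so would be `2 x = δ + star δ` and `2 y √b = δ - star δ`.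
lemma ord_eq_zero_of_primitive {P : HeightOneSpectrum (𝓞 (SqrtExt b))}
    (h2 : ord (P.under (𝓞 K)) (2 : K) = 0) (hb : ord (P.under (𝓞 K)) b = 0) {γ δ : SqrtExt b}
    (hγ0 : γ ≠ 0) (hγ : ord P γ = 0) (hδ0 : δ ≠ 0) (hγδ : γ * star δ = δ)
    (hre : δ.re ∈ ordGE K (P.under (𝓞 K)) 0) (him : δ.im ∈ ordGE K (P.under (𝓞 K)) 0)
    (hprim : ¬ (δ.re ∈ ordGE K (P.under (𝓞 K)) 1 ∧ δ.im ∈ ordGE K (P.under (𝓞 K)) 1)) :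
    ord P δ = 0 := by
  have ord_omega := ord_omega_eq_zero hb
  have mem_zero : δ ∈ ordGE (SqrtExt b) P 0 := by
    rw [← algebraMap_re_add_algebraMap_im_mul_omega δ]
    exact add_mem (algebraMap_mem_ordGE_zero_of_under P hre)
      (mul_mem_ordGE_left P (algebraMap_mem_ordGE_zero_of_under P him)
        (mem_ordGE_of_le P ord_omega.ge))
  have notMem_one : δ ∉ ordGE (SqrtExt b) P 1 := by
    intro hδ
    have hstar : star δ ∈ ordGE (SqrtExt b) P 1 := by
      rwa [← hγδ, mul_mem_ordGE_iff P hγ0, hγ, sub_zero] at hδ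
    have two_mul_re := add_mem hδ hstar
    have two_mul_im := sub_mem hδ hstar
    rw [← algebraMap_two_mul_re] at two_mul_re
    rw [← algebraMap_two_mul_im_mul_omega, mul_comm, mul_mem_ordGE_iff P (omega_ne_zero b),
      ord_omega, sub_zero] at two_mul_im
    have of_two_mul : ∀ x : K, algebraMap K (SqrtExt b) (2 * x) ∈ ordGE (SqrtExt b) P 1 →
        x ∈ ordGE K (P.under (𝓞 K)) 1 := fun x hx ↦ by
      have := mem_ordGE_one_of_algebraMap_mem hx
      rwa [mul_mem_ordGE_iff _ two_ne_zero, h2, sub_zero] at this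
    exact hprim ⟨of_two_mul _ two_mul_re, of_two_mul _ two_mul_im⟩
  rw [mem_ordGE_iff P hδ0] at mem_zero notMem_one
  lia

lemma ncard_add_ncard_isLocalSquare_le (hS : S.Finite) :
    S.ncard + {p ∈ S | IsLocalSquare p b}.ncard ≤ (primesAbove (SqrtExt b) S).ncard := by
  have exists_prime : ∀ p : HeightOneSpectrum (𝓞 K), ∃ P : HeightOneSpectrum (𝓞 (SqrtExt b)),
      P.under (𝓞 K) = p ∧ (IsLocalSquare p b → conjPrime P starRingAut ≠ P) := fun p ↦ by
    by_cases h : IsLocalSquare p b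
    · obtain ⟨P, hP, hne⟩ := exists_under_eq_and_conjPrime_ne h
      exact ⟨P, hP, fun _ ↦ hne⟩
    · obtain ⟨P, hP⟩ := exists_under_eq (SqrtExt b) p
      exact ⟨P, hP, fun h' ↦ absurd h' h⟩
  choose P under_P conj_P_ne using exists_prime
  set P' := fun p ↦ conjPrime (P p) starRingAut
  have under_P' : ∀ p, (P' p).under (𝓞 K) = p := fun p ↦
    (under_conjPrime (P p) fun x ↦ by ext <;> simp).trans (under_P p)
  have disj : Disjoint (P '' S) (P' '' {p ∈ S | IsLocalSquare p b}) := by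
    rw [Set.disjoint_left]
    rintro _ ⟨p, -, rfl⟩ ⟨q, hq, h⟩
    obtain rfl : q = p := by rw [← under_P' q, h, under_P]
    exact conj_P_ne q hq.2 h
  rw [← Set.ncard_image_of_injective S (Function.LeftInverse.injective under_P),
    ← Set.ncard_image_of_injective {p ∈ S | IsLocalSquare p b}
      (Function.LeftInverse.injective under_P'),
    ← Set.ncard_union_eq disj (hS.image _) ((hS.sep _).image _)]
  refine Set.ncard_le_ncard ?_ (finite_primesAbove hS)
  rintro _ (⟨p, hp, rfl⟩ | ⟨p, hp, rfl⟩)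
  · simpa only [primesAbove, Set.mem_ofPred_eq, under_P] using hp
  · simpa only [primesAbove, Set.mem_ofPred_eq, under_P'] using hp.1

-- Hilbert 90 for `S`-units: for `γ ≠ -1` take `δ = c (1 + γ)` with `c` clearing common factors.
lemma exists_mul_star_eq_of_norm_eq_one (hCl : GeneratesClassGroup S)
    (h2 : ∀ p ∉ S, ord p (2 : K) = 0) (hb : ∀ p ∉ S, ord p b = 0)
    {γ : (SqrtExt b)ˣ} (hγ : γ ∈ (primesAbove (SqrtExt b) S).unit (SqrtExt b))
    (hnorm : (γ : SqrtExt b).norm = 1) :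
    ∃ δ ∈ (primesAbove (SqrtExt b) S).unit (SqrtExt b), (γ : SqrtExt b) * star ↑δ = ↑δ := by
  rw [mem_unit_iff_ord] at hγ
  rcases eq_or_ne (1 + (γ : SqrtExt b)) 0 with h0 | h0
  · refine ⟨Units.mk0 QuadraticAlgebra.omega (omega_ne_zero b),
      mem_unit_iff_ord.2 fun P hP ↦ ord_omega_eq_zero (hb _ hP), ?_⟩
    rw [eq_neg_of_add_eq_zero_right h0]
    ext <;> simp
  have hne : (1 + (γ : SqrtExt b)).re ≠ 0 ∨ (1 + (γ : SqrtExt b)).im ≠ 0 := by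
    by_contra! h
    exact h0 (QuadraticAlgebra.ext h.1 h.2)
  obtain ⟨c, hc, hprim⟩ := hCl.exists_primitive hne
  set δ : SqrtExt b := algebraMap K (SqrtExt b) c * (1 + γ) with hδ
  have hδ0 : δ ≠ 0 := mul_ne_zero (by simpa using hc) h0
  have hγδ : γ * star δ = δ := by
    have star_c : star (algebraMap K (SqrtExt b) c) = algebraMap K (SqrtExt b) c := by
      ext <;> simp
    have mul_star_γ : (γ : SqrtExt b) * star (γ : SqrtExt b) = 1 := by
      rw [← QuadraticAlgebra.algebraMap_norm_eq_mul_star, hnorm, map_one]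
    rw [hδ, star_mul', star_c, star_add, star_one]
    linear_combination (algebraMap K (SqrtExt b) c) * mul_star_γ
  have re_δ : δ.re = c * (1 + (γ : SqrtExt b)).re := by simp [hδ]
  have im_δ : δ.im = c * (1 + (γ : SqrtExt b)).im := by simp [hδ]
  rw [← re_δ, ← im_δ] at hprim
  exact ⟨Units.mk0 δ hδ0, mem_unit_iff_ord.2 fun P hP ↦ ord_eq_zero_of_primitive (h2 _ hP)
    (hb _ hP) γ.ne_zero (hγ P hP) hδ0 hγδ (hprim _ hP).1.1 (hprim _ hP).1.2 (hprim _ hP).2, hγδ⟩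

lemma comap_unitNorm_square_le (hCl : GeneratesClassGroup S)
    (h2 : ∀ p ∉ S, ord p (2 : K) = 0) (hb : ∀ p ∉ S, ord p b = 0) :
    (Subgroup.square (S.unit K)).comap (unitNorm b S) ≤
      (unitInclusion b S).range ⊔ Subgroup.square _ := by
  rintro γ ⟨c, hc⟩
  have norm_quot : unitNorm b S (γ * (unitInclusion b S c)⁻¹) = 1 := by
    rw [map_mul, map_inv, unitNorm_unitInclusion, hc, sq, mul_inv_cancel]
  obtain ⟨δ, hδ, h⟩ := exists_mul_star_eq_of_norm_eq_one hCl h2 hb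
    (γ * (unitInclusion b S c)⁻¹).2 (congrArg (fun x : S.unit K ↦ ((x : Kˣ) : K)) norm_quot)
  set δ' : (primesAbove (SqrtExt b) S).unit (SqrtExt b) := ⟨δ, hδ⟩
  have eq_mul : γ = unitInclusion b S (c * (unitNorm b S δ')⁻¹) * (δ' * δ') := by
    refine Subtype.ext (Units.ext ?_)
    have coe_c : (((unitInclusion b S c : (SqrtExt b)ˣ)) : SqrtExt b) ≠ 0 := Units.ne_zero _
    have coe_norm : ((unitInclusion b S (unitNorm b S δ') : (SqrtExt b)ˣ) : SqrtExt b) =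
        δ * star (δ : SqrtExt b) := QuadraticAlgebra.algebraMap_norm_eq_mul_star _
    have star_ne : star (δ : SqrtExt b) ≠ 0 := by simp
    simp only [map_mul, map_inv, Subgroup.coe_mul, InvMemClass.coe_inv, Units.val_mul,
      Units.val_inv_eq_inv_val, coe_norm] at h ⊢
    simp only [δ']
    field_simp at h ⊢
    linear_combination h
  rw [eq_mul]
  exact Subgroup.mul_mem_sup ⟨_, rfl⟩ ⟨δ', rfl⟩

lemma index_range_unitNorm_mul_le (hCl : GeneratesClassGroup S)
    (h2 : ∀ p ∉ S, ord p (2 : K) = 0) (hb : ∀ p ∉ S, ord p b = 0)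
    (hS : S.Finite) (hrank : Units.rank (SqrtExt b) + 1 = 2 * (Units.rank K + 1)) :
    (unitNorm b S).range.index * 2 ^ ((primesAbove (SqrtExt b) S).ncard + 1) ≤
      2 ^ (2 * S.ncard) := by
  let d : S.unit K := ⟨Units.mk0 b (ne_zero_of_not_isSquare b), mem_unit_iff_ord.2 hb⟩
  have not_isSquare_d : ¬ IsSquare d := fun ⟨x, hx⟩ ↦
    Fact.out (p := ¬ IsSquare b) ⟨(x : Kˣ), congrArg (fun y : S.unit K ↦ ((y : Kˣ) : K)) hx⟩
  have isSquare_incl : IsSquare (unitInclusion b S d) := by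
    refine ⟨⟨Units.mk0 QuadraticAlgebra.omega (omega_ne_zero b),
      mem_unit_iff_ord.2 fun P hP ↦ ord_omega_eq_zero (hb _ hP)⟩, Subtype.ext (Units.ext ?_)⟩
    exact omega_sq_sqrtExt.symm.trans (sq _)
  have := two_mul_index_range_mul_index_square_le unitNorm_unitInclusion
    (comap_unitNorm_square_le hCl h2 hb) not_isSquare_d isSquare_incl
  rw [← relIndex_square_unit, ← relIndex_square_unit, relIndex_square_unit_eq_two_pow hS,
    relIndex_square_unit_eq_two_pow (finite_primesAbove hS), hrank] at this
  refine Nat.le_of_mul_le_mul_left (c := 2 ^ (2 * (Units.rank K + 1))) ?_ (by positivity)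
  calc _ = 2 * ((unitNorm b S).range.index *
        2 ^ (2 * (Units.rank K + 1) + (primesAbove (SqrtExt b) S).ncard)) := by ring
    _ ≤ _ := this
    _ = _ := by ring

lemma two_mul_index_range_unitNorm_le (hCl : GeneratesClassGroup S)
    (h2 : ∀ p ∉ S, ord p (2 : K) = 0) (hb : ∀ p ∉ S, ord p b = 0)
    (hS : S.Finite) (hrank : Units.rank (SqrtExt b) + 1 = 2 * (Units.rank K + 1)) :
    2 * (unitNorm b S).range.index ≤ 2 ^ {p ∈ S | ¬ IsLocalSquare p b}.ncard := by
  have norm_index := index_range_unitNorm_mul_le hCl h2 hb hS hrank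
  have split_count := ncard_add_ncard_isLocalSquare_le (b := b) hS
  have partition : {p ∈ S | IsLocalSquare p b}.ncard + {p ∈ S | ¬ IsLocalSquare p b}.ncard =
      S.ncard := by
    rw [← Set.ncard_inter_add_ncard_sdiff_eq_ncard S {p | IsLocalSquare p b} hS]
    rfl
  refine Nat.le_of_mul_le_mul_left
    (c := 2 ^ (S.ncard + {p ∈ S | IsLocalSquare p b}.ncard)) ?_ (by positivity)
  calc _ = (unitNorm b S).range.index *
        2 ^ (S.ncard + {p ∈ S | IsLocalSquare p b}.ncard + 1) := by ring
    _ ≤ (unitNorm b S).range.index * 2 ^ ((primesAbove (SqrtExt b) S).ncard + 1) := by gcongr; simp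
    _ ≤ 2 ^ (2 * S.ncard) := norm_index
    _ = _ := by rw [← pow_add]; congr 1; lia

end SqrtExt

section EulerSum

open scoped ENNReal

variable {α β : Type*}

/-- The sum of the products of the weights `w` over all finite multisets, that is, the expanded
Euler product `∏ₐ (1 - w a)⁻¹`. -/
noncomputable def eulerSum (w : α → ℝ≥0∞) : ℝ≥0∞ := ∑' M : Multiset α, (M.map w).prod

lemma eulerSum_le_two_mul (w : α → ℝ≥0∞) {a : α} (ha : w a ≤ 2⁻¹) :
    eulerSum w ≤ 2 * eulerSum (Set.indicator {a}ᶜ w) := by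
  classical
  have geometric_le : ∑' n : ℕ, w a ^ n ≤ 2 := by
    rw [ENNReal.tsum_geometric, ENNReal.inv_le_iff_inv_le]
    calc (2⁻¹ : ℝ≥0∞) = 1 - 2⁻¹ := ENNReal.one_sub_inv_two.symm
      _ ≤ 1 - w a := tsub_le_tsub_left ha 1
  let Φ : Multiset α → ℕ × Multiset α := fun M ↦ (M.count a, M.filter (a ≠ ·))
  have eq_add (M : Multiset α) : M = Multiset.replicate (Φ M).1 a + (Φ M).2 := by
    rw [← Multiset.filter_eq, Multiset.filter_add_not]
  have prod_eq (M : Multiset α) :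
      (M.map w).prod = w a ^ (Φ M).1 * ((Φ M).2.map (Set.indicator {a}ᶜ w)).prod := by
    conv_lhs => rw [eq_add M, Multiset.map_add, Multiset.prod_add, Multiset.map_replicate,
      Multiset.prod_replicate]
    congr 2
    refine Multiset.map_congr rfl fun x hx ↦ (Set.indicator_of_mem ?_ w).symm
    exact (Multiset.mem_filter.1 hx).2.symm
  have Φ_injective : Function.Injective Φ := fun M N h ↦ by rw [eq_add M, eq_add N, h]
  calc eulerSum w = ∑' M, w a ^ (Φ M).1 * ((Φ M).2.map (Set.indicator {a}ᶜ w)).prod :=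
        tsum_congr prod_eq
    _ ≤ ∑' x : ℕ × Multiset α, w a ^ x.1 * (x.2.map (Set.indicator {a}ᶜ w)).prod :=
        ENNReal.tsum_comp_le_tsum_of_injective Φ_injective
          fun x ↦ w a ^ x.1 * (x.2.map (Set.indicator {a}ᶜ w)).prod
    _ = (∑' n, w a ^ n) * eulerSum (Set.indicator {a}ᶜ w) := by
        simp_rw [ENNReal.tsum_prod', ENNReal.tsum_mul_left, ENNReal.tsum_mul_right, eulerSum]
    _ ≤ _ := by gcongr

lemma eulerSum_le_two_pow_mul {w : α → ℝ≥0∞} (hw : ∀ a, w a ≤ 2⁻¹) {S : Set α} (hS : S.Finite) :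
    eulerSum w ≤ 2 ^ S.ncard * eulerSum (Set.indicator Sᶜ w) := by
  induction S, hS using Set.Finite.induction_on with
  | empty => simp
  | @insert a S ha hS ih =>
    have hw' : Set.indicator Sᶜ w a ≤ 2⁻¹ := by rw [Set.indicator_of_mem ha]; exact hw a
    calc eulerSum w ≤ 2 ^ S.ncard * eulerSum (Set.indicator Sᶜ w) := ih
      _ ≤ 2 ^ S.ncard * (2 * eulerSum (Set.indicator {a}ᶜ (Set.indicator Sᶜ w))) := by
          gcongr
          exact eulerSum_le_two_mul _ hw'
      _ = _ := by
          rw [Set.indicator_indicator, ← Set.compl_union, Set.singleton_union,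
            Set.ncard_insert_of_notMem ha hS, pow_succ, mul_assoc]

lemma eulerSum_indicator (w : α → ℝ≥0∞) (S : Set α) :
    eulerSum (S.indicator w) = eulerSum fun a : S ↦ w a := by
  have support_subset : (Function.support fun M : Multiset α ↦ (M.map (S.indicator w)).prod) ⊆
      Set.range (Multiset.map ((↑) : S → α)) := by
    intro M hM
    have mem_of_mem : ∀ a ∈ M, a ∈ S := fun a ha ↦ by
      by_contra haS
      exact hM (Multiset.prod_eq_zero
        (Multiset.mem_map.2 ⟨a, ha, Set.indicator_of_notMem haS w⟩))
    lift M to Multiset S using mem_of_mem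
    exact ⟨M, rfl⟩
  rw [eulerSum, eulerSum,
    ← (Multiset.map_injective Subtype.val_injective).tsum_eq support_subset]
  simp [Multiset.map_map]

lemma filterMap_none (M : Multiset α) : M.filterMap (fun _ ↦ (none : Option β)) = 0 :=
  Multiset.eq_zero_of_forall_notMem (by simp)

lemma disjSum_injective :
    Function.Injective fun x : Multiset α × Multiset β ↦ x.1.disjSum x.2 := by
  have left_eq (x : Multiset α × Multiset β) :
      (x.1.disjSum x.2).filterMap Sum.getLeft? = x.1 := by
    simp [Multiset.disjSum, Multiset.filterMap_add, Multiset.filterMap_map, Function.comp_def,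
      filterMap_none]
  have right_eq (x : Multiset α × Multiset β) :
      (x.1.disjSum x.2).filterMap Sum.getRight? = x.2 := by
    simp [Multiset.disjSum, Multiset.filterMap_add, Multiset.filterMap_map, Function.comp_def,
      filterMap_none]
  exact fun x y h ↦ Prod.ext
    (by rw [← left_eq x, ← left_eq y]; exact congrArg _ h)
    (by rw [← right_eq x, ← right_eq y]; exact congrArg _ h)

lemma eulerSum_sq_le {w : α → ℝ≥0∞} {w' : β → ℝ≥0∞} {f : α ⊕ α → β} (hf : f.Injective)
    (hw : ∀ a, w a ≤ w' (f (.inl a))) (hw' : ∀ a, w a ≤ w' (f (.inr a))) :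
    eulerSum w ^ 2 ≤ eulerSum w' := by
  let Φ : Multiset α × Multiset α → Multiset β := fun x ↦ (x.1.disjSum x.2).map f
  calc eulerSum w ^ 2 = ∑' x : Multiset α × Multiset α, (x.1.map w).prod * (x.2.map w).prod := by
        rw [sq, ENNReal.tsum_prod']
        simp_rw [ENNReal.tsum_mul_left, ENNReal.tsum_mul_right, eulerSum]
    _ ≤ ∑' x, ((Φ x).map w').prod := by
        refine ENNReal.tsum_le_tsum fun x ↦ ?_
        rw [Multiset.map_map, Multiset.disjSum, Multiset.map_add, Multiset.prod_add,
          Multiset.map_map, Multiset.map_map]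
        exact mul_le_mul' (Multiset.prod_map_le_prod_map₀ _ _ (by simp) fun a _ ↦ hw a)
          (Multiset.prod_map_le_prod_map₀ _ _ (by simp) fun a _ ↦ hw' a)
    _ ≤ eulerSum w' :=
        ENNReal.tsum_comp_le_tsum_of_injective
          ((Multiset.map_injective hf).comp disjSum_injective) fun M ↦ (M.map w').prod

end EulerSum

section Zeta

open Filter
open scoped ENNReal Topology

variable {K : Type*} [Field K] [NumberField K]

/-- The term `N(I)⁻ˢ` of the Dedekind zeta function, as an extended nonnegative real number. -/
noncomputable def weight (s : ℝ) : Ideal (𝓞 K) →* ℝ≥0∞ where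
  toFun I := ENNReal.ofReal ((Ideal.absNorm I : ℝ) ^ (-s))
  map_one' := by simp
  map_mul' I J := by
    rw [map_mul, Nat.cast_mul, Real.mul_rpow (by positivity) (by positivity),
      ENNReal.ofReal_mul (by positivity)]

lemma weight_apply (s : ℝ) (I : Ideal (𝓞 K)) :
    weight s I = ENNReal.ofReal ((Ideal.absNorm I : ℝ) ^ (-s)) :=
  rfl

lemma weight_bot {s : ℝ} (hs : s ≠ 0) : weight s (⊥ : Ideal (𝓞 K)) = 0 := by
  rw [weight_apply, Ideal.absNorm_bot, Nat.cast_zero, Real.zero_rpow (neg_ne_zero.2 hs),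
    ENNReal.ofReal_zero]

lemma weight_asIdeal_le {s : ℝ} (hs : 1 ≤ s) (p : HeightOneSpectrum (𝓞 K)) :
    weight s p.asIdeal ≤ 2⁻¹ := by
  have two_le : (2 : ℝ) ≤ Ideal.absNorm p.asIdeal := by
    have ne_zero : Ideal.absNorm p.asIdeal ≠ 0 := Ideal.absNorm_eq_zero_iff.not.2 p.ne_bot
    have ne_one : Ideal.absNorm p.asIdeal ≠ 1 := Ideal.absNorm_eq_one_iff.not.2 p.isPrime.ne_top
    exact_mod_cast (show 2 ≤ Ideal.absNorm p.asIdeal by lia)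
  calc weight s p.asIdeal ≤ ENNReal.ofReal 2⁻¹ := by
        refine ENNReal.ofReal_le_ofReal ?_
        rw [Real.rpow_neg (by positivity)]
        exact inv_anti₀ (by norm_num) (two_le.trans (Real.self_le_rpow_of_one_le (by linarith) hs))
    _ = 2⁻¹ := by rw [ENNReal.ofReal_inv_of_pos (by norm_num), ENNReal.ofReal_ofNat]

lemma tsum_weight_eq_eulerSum {s : ℝ} (hs : s ≠ 0) :
    ∑' I : Ideal (𝓞 K), weight s I =
      eulerSum fun p : HeightOneSpectrum (𝓞 K) ↦ weight s p.asIdeal := by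
  classical
  let Φ : Multiset (HeightOneSpectrum (𝓞 K)) → Ideal (𝓞 K) := fun M ↦
    (M.map HeightOneSpectrum.asIdeal).prod
  have normalizedFactors_Φ (M) : UniqueFactorizationMonoid.normalizedFactors (Φ M) =
      M.map HeightOneSpectrum.asIdeal := by
    refine UniqueFactorizationMonoid.normalizedFactors_prod_of_prime fun I hI ↦ ?_
    obtain ⟨p, -, rfl⟩ := Multiset.mem_map.1 hI
    exact p.prime
  have Φ_injective : Function.Injective Φ := fun M N h ↦
    Multiset.map_injective (fun _ _ ↦ HeightOneSpectrum.ext)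
      (by rw [← normalizedFactors_Φ, ← normalizedFactors_Φ, h])
  have support_subset : (Function.support fun I : Ideal (𝓞 K) ↦ weight s I) ⊆ Set.range Φ := by
    intro I hI
    have hI0 : I ≠ 0 := fun h ↦ hI (by rw [h]; exact weight_bot hs)
    have prime_of_mem {J} (hJ : J ∈ UniqueFactorizationMonoid.normalizedFactors I) : Prime J :=
      UniqueFactorizationMonoid.prime_of_normalized_factor J hJ
    refine ⟨(UniqueFactorizationMonoid.normalizedFactors I).pmap
      (fun J hJ ↦ ⟨J, Ideal.isPrime_of_prime hJ, hJ.ne_zero⟩) fun J ↦ prime_of_mem, ?_⟩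
    simp only [Φ, Multiset.map_pmap, Multiset.pmap_eq_map, Multiset.map_id']
    exact associated_iff_eq.1 (UniqueFactorizationMonoid.prod_normalizedFactors hI0)
  rw [← Φ_injective.tsum_eq support_subset, eulerSum]
  simp [Φ, map_multiset_prod, Multiset.map_map]

lemma tsum_weight_fiber {s : ℝ} (hs : s ≠ 0) (n : ℕ) :
    ∑' I : Ideal.absNorm (S := 𝓞 K) ⁻¹' {n}, weight s (I : Ideal (𝓞 K)) =
      ENNReal.ofReal (Nat.card {I : Ideal (𝓞 K) // Ideal.absNorm I = n} * (n : ℝ) ^ (-s)) := by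
  have weight_eq (I : Ideal.absNorm (S := 𝓞 K) ⁻¹' {n}) :
      weight s (I : Ideal (𝓞 K)) = ENNReal.ofReal ((n : ℝ) ^ (-s)) := by
    rw [weight_apply, I.2]
  rw [tsum_congr weight_eq]
  rcases eq_or_ne n 0 with rfl | -
  · simp [Real.zero_rpow (neg_ne_zero.2 hs)]
  · have : Finite (Ideal.absNorm (S := 𝓞 K) ⁻¹' {n}) := Ideal.finite_setOfPred_absNorm_eq n
    rw [ENNReal.tsum_const, ENNReal.ofReal_mul (by positivity), ENNReal.ofReal_natCast,
      ENat.card_eq_coe_natCard]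
    rfl

lemma tsum_weight_eq_norm_dedekindZeta {s : ℝ} (hs : s ≠ 0) (h0 : dedekindZeta K s ≠ 0) :
    ∑' I : Ideal (𝓞 K), weight s I = ENNReal.ofReal ‖dedekindZeta K s‖ := by
  set a : ℕ → ℝ := fun n ↦
    Nat.card {I : Ideal (𝓞 K) // Ideal.absNorm I = n} * (n : ℝ) ^ (-s) with ha
  have a_nonneg (n) : 0 ≤ a n := by positivity
  have zeta_eq : dedekindZeta K s = ((∑' n, a n : ℝ) : ℂ) := by
    rw [dedekindZeta, LSeries, Complex.ofReal_tsum]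
    refine tsum_congr fun n ↦ ?_
    rcases eq_or_ne n 0 with rfl | hn
    · simp [ha, Real.zero_rpow (neg_ne_zero.2 hs)]
    · rw [LSeries.term_of_ne_zero hn, ha, Complex.ofReal_mul, Complex.ofReal_cpow (by positivity)]
      simp [Complex.cpow_neg, div_eq_mul_inv]
  have summable_a : Summable a := by
    by_contra h
    rw [zeta_eq, tsum_eq_zero_of_not_summable h, Complex.ofReal_zero] at h0
    exact h0 rfl
  rw [zeta_eq, Complex.norm_real, Real.norm_of_nonneg (tsum_nonneg a_nonneg),
    ENNReal.ofReal_tsum_of_nonneg a_nonneg summable_a,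
    ← ENNReal.tsum_fiberwise _ Ideal.absNorm]
  exact tsum_congr (tsum_weight_fiber hs)

variable (K) in
lemma tendsto_mul_tsum_weight :
    Tendsto (fun s : ℝ ↦ ENNReal.ofReal (s - 1) * ∑' I : Ideal (𝓞 K), weight s I) (𝓝[>] 1)
      (𝓝 (ENNReal.ofReal (dedekindZeta_residue K))) := by
  have tendsto_zeta := tendsto_sub_one_mul_dedekindZeta_nhdsGT K
  have zeta_ne_zero := tendsto_zeta.eventually_ne
    (Complex.ofReal_ne_zero.2 (dedekindZeta_residue_ne_zero K))
  have tendsto_norm := ENNReal.tendsto_ofReal tendsto_zeta.norm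
  rw [Complex.norm_real, Real.norm_of_nonneg (dedekindZeta_residue_pos K).le] at tendsto_norm
  refine tendsto_norm.congr' ?_
  filter_upwards [self_mem_nhdsWithin, zeta_ne_zero] with s (hs : 1 < s) h
  rw [tsum_weight_eq_norm_dedekindZeta (by linarith) (right_ne_zero_of_mul h), norm_mul,
    ENNReal.ofReal_mul (norm_nonneg _), ← Complex.ofReal_one, ← Complex.ofReal_sub,
    Complex.norm_real, Real.norm_of_nonneg (by linarith)]

end Zeta

section SqrtExt

open Filter
open scoped ENNReal Topology

variable {K : Type*} [Field K] [NumberField K] {b : K} [Fact (¬ IsSquare b)]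

lemma absNorm_under_le {E : Type*} [Field E] [NumberField E] [Algebra K E]
    (P : HeightOneSpectrum (𝓞 E)) :
    Ideal.absNorm (P.under (𝓞 K)).asIdeal ≤ Ideal.absNorm P.asIdeal := by
  have : P.asIdeal.LiesOver (P.under (𝓞 K)).asIdeal := ⟨rfl⟩
  have := (P.under (𝓞 K)).isMaximal
  have := P.isPrime
  rw [Ideal.absNorm_eq_pow_inertiaDeg'_of_liesOver P.asIdeal (P.under (𝓞 K)).asIdeal
    (P.under (𝓞 K)).isPrime (P.under (𝓞 K)).ne_bot]
  exact Nat.le_self_pow (Ideal.inertiaDeg'_ne_zero _ _) _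

lemma absNorm_le_absNorm_under {P Q : HeightOneSpectrum (𝓞 (SqrtExt b))} (hne : P ≠ Q)
    (hPQ : P.under (𝓞 K) = Q.under (𝓞 K)) :
    Ideal.absNorm P.asIdeal ≤ Ideal.absNorm (P.under (𝓞 K)).asIdeal := by
  set p := P.under (𝓞 K)
  have mul_dvd : P.asIdeal * Q.asIdeal ∣ p.asIdeal.map (algebraMap (𝓞 K) (𝓞 (SqrtExt b))) := by
    refine IsCoprime.mul_dvd (P.isCoprime_of_ne Q hne) ?_ ?_
    · exact Ideal.dvd_iff_le.2 (Ideal.map_le_iff_le_comap.2 le_rfl)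
    · exact Ideal.dvd_iff_le.2 (Ideal.map_le_iff_le_comap.2 (congrArg _ hPQ).le)
  have finrank_eq : Module.finrank (𝓞 K) (𝓞 (SqrtExt b)) = 2 := by
    rw [← QuadraticAlgebra.finrank_eq_two b 0]
    exact (IsFractionRing.finrank_eq (𝓞 K) K (𝓞 (SqrtExt b)) (SqrtExt b)).symm
  have absNorm_pos : 0 < Ideal.absNorm p.asIdeal :=
    Nat.pos_of_ne_zero (Ideal.absNorm_eq_zero_iff.not.2 p.ne_bot)
  refine Nat.le_of_mul_le_mul_right ?_ absNorm_pos
  calc Ideal.absNorm P.asIdeal * Ideal.absNorm p.asIdeal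
    _ ≤ Ideal.absNorm P.asIdeal * Ideal.absNorm Q.asIdeal :=
      Nat.mul_le_mul_left _ (by simpa only [p, hPQ] using absNorm_under_le (K := K) Q)
    _ ≤ Ideal.absNorm p.asIdeal ^ 2 := by
      rw [← map_mul, ← finrank_eq, ← Ideal.absNorm_algebraMap]
      exact Nat.le_of_dvd (by
        rw [Ideal.absNorm_algebraMap]; positivity) (map_dvd Ideal.absNorm mul_dvd)
    _ = _ := sq _

lemma weight_under_le {P Q : HeightOneSpectrum (𝓞 (SqrtExt b))} (hne : P ≠ Q)
    (hPQ : P.under (𝓞 K) = Q.under (𝓞 K)) {s : ℝ} (hs : 0 ≤ s) :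
    weight s (P.under (𝓞 K)).asIdeal ≤ weight s P.asIdeal := by
  have absNorm_pos : 0 < Ideal.absNorm P.asIdeal :=
    Nat.pos_of_ne_zero (Ideal.absNorm_eq_zero_iff.not.2 P.ne_bot)
  refine ENNReal.ofReal_le_ofReal
    (Real.rpow_le_rpow_of_nonpos (by positivity) ?_ (neg_nonpos.2 hs))
  exact_mod_cast absNorm_le_absNorm_under hne hPQ

lemma tsum_weight_sq_le {S : Set (HeightOneSpectrum (𝓞 K))} (hS : S.Finite)
    (hb : ∀ p ∉ S, IsLocalSquare p b) {s : ℝ} (hs : 1 ≤ s) :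
    (∑' I : Ideal (𝓞 K), weight s I) ^ 2 ≤
      4 ^ S.ncard * ∑' I : Ideal (𝓞 (SqrtExt b)), weight s I := by
  choose P hP hconj using fun p : ↥Sᶜ ↦ exists_under_eq_and_conjPrime_ne (hb p p.2)
  have hP' (p) : (conjPrime (P p) starRingAut).under (𝓞 K) = p := by
    rw [under_conjPrime (P p) fun x ↦ by ext <;> simp, hP]
  have P_injective : Function.Injective (Sum.elim P fun p ↦ conjPrime (P p) starRingAut) := by
    refine Function.Injective.sumElim ?_ ?_ ?_
    · exact fun p q h ↦ Subtype.ext (by rw [← hP p, ← hP q, h])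
    · exact fun p q h ↦ Subtype.ext (by rw [← hP' p, ← hP' q]; exact congrArg _ h)
    · intro p q h
      obtain rfl : p = q := Subtype.ext (by rw [← hP p, ← hP' q, h])
      exact hconj p h.symm
  have hs0 : s ≠ 0 := by linarith
  let w := fun p : HeightOneSpectrum (𝓞 K) ↦ weight s p.asIdeal
  rw [tsum_weight_eq_eulerSum hs0, tsum_weight_eq_eulerSum hs0]
  calc eulerSum w ^ 2 ≤ (2 ^ S.ncard * eulerSum (Sᶜ.indicator w)) ^ 2 := by
        gcongr
        exact eulerSum_le_two_pow_mul (weight_asIdeal_le hs) hS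
    _ = 4 ^ S.ncard * eulerSum (fun p : ↥Sᶜ ↦ w p) ^ 2 := by
        rw [eulerSum_indicator, mul_pow, ← pow_mul, mul_comm S.ncard, pow_mul]
        norm_num
    _ ≤ _ := by
        gcongr
        refine eulerSum_sq_le P_injective (fun p ↦ ?_) fun p ↦ ?_
        · simpa only [hP, Sum.elim_inl] using weight_under_le (hconj p).symm
            ((hP p).trans (hP' p).symm) (zero_le_one.trans hs)
        · simpa only [hP', Sum.elim_inr] using weight_under_le (hconj p)
            ((hP' p).trans (hP p).symm) (zero_le_one.trans hs)

-- Otherwise `ζ_K(s)² ≤ C ζ_E(s)` for `E = K(√b)`, although both zeta functions have a simple pole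
-- at `s = 1`.
variable (b) in
lemma exists_notMem_not_isLocalSquare {S : Set (HeightOneSpectrum (𝓞 K))} (hS : S.Finite) :
    ∃ p ∉ S, ¬ IsLocalSquare p b := by
  by_contra! hb
  set ε := fun s : ℝ ↦ ENNReal.ofReal (s - 1)
  have tendsto_ε : Tendsto ε (𝓝[>] 1) (𝓝 0) := by
    have : Tendsto ε (𝓝 1) (𝓝 (ENNReal.ofReal (1 - 1))) :=
      ENNReal.tendsto_ofReal (tendsto_id.sub_const 1)
    rw [sub_self, ENNReal.ofReal_zero] at this
    exact this.mono_left nhdsWithin_le_nhds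
  have tendsto_sq := ENNReal.Tendsto.pow (n := 2) (tendsto_mul_tsum_weight K)
  have tendsto_bound := ENNReal.Tendsto.mul (ENNReal.Tendsto.const_mul (a := 4 ^ S.ncard) tendsto_ε
    (.inr (ENNReal.pow_ne_top ENNReal.ofNat_ne_top))) (.inr ENNReal.ofReal_ne_top)
    (tendsto_mul_tsum_weight (SqrtExt b)) (.inr (by simp))
  rw [mul_zero, zero_mul] at tendsto_bound
  have residue_sq_le := le_of_tendsto_of_tendsto tendsto_sq tendsto_bound <| by
    filter_upwards [self_mem_nhdsWithin] with s (hs : 1 < s)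
    calc (ε s * ∑' I : Ideal (𝓞 K), weight s I) ^ 2
      _ = ε s ^ 2 * (∑' I : Ideal (𝓞 K), weight s I) ^ 2 := mul_pow _ _ 2
      _ ≤ ε s ^ 2 * (4 ^ S.ncard * ∑' I : Ideal (𝓞 (SqrtExt b)), weight s I) := by
        gcongr
        exact tsum_weight_sq_le hS hb hs.le
      _ = _ := by ring
  simp [dedekindZeta_residue_pos K |>.not_ge] at residue_sq_le

end SqrtExt

section SubgroupIndex

open Subgroup

variable {G : Type*} [CommGroup G]

lemma relIndex_le_two_and_ne_zero {H L : Subgroup G}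
    (h : ∀ x ∈ L, ∀ y ∈ L, x ∉ H → y ∉ H → x * y ∈ H) :
    H.relIndex L ≤ 2 ∧ H.relIndex L ≠ 0 := by
  by_cases hle : L ≤ H
  · simp [relIndex_eq_one.2 hle]
  obtain ⟨a, haL, haH⟩ := SetLike.not_le_iff_exists.1 hle
  suffices H.relIndex L = 2 by simp [this]
  refine relIndex_eq_two_iff.2 ⟨a, haL, fun b hb ↦ ?_⟩
  by_cases hbH : b ∈ H
  · exact .inr ⟨hbH, fun hba ↦ haH ((H.mul_mem_cancel_left hbH).1 hba)⟩
  · exact .inl ⟨h b hb a haL hbH haH, hbH⟩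

lemma two_pow_card_le_index {N : Subgroup G} [N.FiniteIndex] (hN : square G ≤ N)
    {ι : Type*} [Fintype ι] {c : ι → G}
    (hc : ∀ X : Finset ι, X.Nonempty → ∏ i ∈ X, c i ∉ N) :
    2 ^ Fintype.card ι ≤ N.index := by
  classical
  rw [← Fintype.card_finset, ← Nat.card_eq_fintype_card]
  refine Nat.card_le_card_of_injective
    (fun X : Finset ι ↦ ∏ i ∈ X, (c i : G ⧸ N)) fun X Y hXY ↦ ?_
  by_contra hne
  refine hc (symmDiff X Y) (Finset.nonempty_iff_ne_empty.2 fun h ↦ hne (symmDiff_eq_bot.1 h)) ?_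
  rw [← QuotientGroup.eq_one_iff, ← QuotientGroup.mk'_apply, map_prod, symmDiff_def,
    Finset.sup_eq_union, Finset.prod_union disjoint_sdiff_sdiff]
  simp only [QuotientGroup.mk'_apply]
  rw [Finset.prod_sdiff_eq_prod_sdiff_iff.2 hXY]
  obtain ⟨g, hg⟩ := QuotientGroup.mk_surjective (∏ i ∈ Y \ X, (c i : G ⧸ N))
  rw [← hg]
  exact (QuotientGroup.eq_one_iff _).2 (hN ⟨g, rfl⟩)

end SubgroupIndex

section TotallyComplex

variable (K : Type*) [Field K] [NumberField K] [IsTotallyComplex K]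

lemma finrank_eq_two_mul_rank_add_one : Module.finrank ℚ K = 2 * (Units.rank K + 1) := by
  have card_places := InfinitePlace.card_eq_nrRealPlaces_add_nrComplexPlaces K
  rw [IsTotallyComplex.nrRealPlaces_eq_zero K] at card_places
  have card_pos : 0 < Fintype.card (InfinitePlace K) := Fintype.card_pos
  rw [IsTotallyComplex.finrank K, Units.rank]
  lia

lemma rank_sqrtExt (b : K) [Fact (¬ IsSquare b)] :
    Units.rank (SqrtExt b) + 1 = 2 * (Units.rank K + 1) := by
  have : IsTotallyComplex (SqrtExt b) := isTotallyComplex_of_algebra K _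
  have tower := Module.finrank_mul_finrank ℚ K (SqrtExt b)
  rw [QuadraticAlgebra.finrank_eq_two, finrank_eq_two_mul_rank_add_one,
    finrank_eq_two_mul_rank_add_one] at tower
  lia

end TotallyComplex

lemma isSquare_units_of_isSquare_val {F : Type*} [Field F] {u : Fˣ} (h : IsSquare (u : F)) :
    IsSquare u := by
  obtain ⟨c, hc⟩ := h
  have hc0 : c ≠ 0 := by
    rintro rfl
    simp at hc
  exact ⟨Units.mk0 c hc0, Units.ext hc⟩

section SqrtExt

variable {K : Type*} [Field K] [NeZero (2 : K)] {b w : K}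

lemma not_isSquare_algebraMap_sqrtExt (hw : ¬ IsSquare w) (hbw : ¬ IsSquare (b * w)) :
    ¬ IsSquare (algebraMap K (SqrtExt b) w) := by
  rintro ⟨c, hc⟩
  have re_eq := congrArg QuadraticAlgebra.re hc
  have im_eq := congrArg QuadraticAlgebra.im hc
  simp only [QuadraticAlgebra.re_mul, QuadraticAlgebra.im_mul, QuadraticAlgebra.algebraMap_re,
    QuadraticAlgebra.algebraMap_im] at re_eq im_eq
  have : c.re = 0 ∨ c.im = 0 := by
    rw [← mul_eq_zero, ← mul_right_inj' (two_ne_zero' K)]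
    linear_combination -im_eq
  rcases this with h | h
  · exact hbw ⟨b * c.im, by rw [h] at re_eq; linear_combination b * re_eq⟩
  · exact hw ⟨c.re, by rw [h] at re_eq; linear_combination re_eq⟩

end SqrtExt

section TriangularSystem

open Subgroup

variable {K : Type*} [Field K] [NumberField K] {S : Set (HeightOneSpectrum (𝓞 K))}

-- At a prime below one of `K(i)` where `w` is not a square, neither `w` nor `-w = w i ^ 2` is a
-- local square, hence `-w ^ 2` is one.
lemma exists_isLocalSquare_neg_one_and_not_isLocalSquare (h1 : ¬ IsSquare (-1 : K)) {w : K}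
    (hw : ¬ IsSquare w) (hw' : ¬ IsSquare (-w)) (hS : S.Finite) :
    ∃ p ∉ S, IsLocalSquare p (-1 : K) ∧ ¬ IsLocalSquare p w := by
  have : Fact (¬ IsSquare (-1 : K)) := ⟨h1⟩
  have : Fact (¬ IsSquare (algebraMap K (SqrtExt (-1 : K)) w)) :=
    ⟨not_isSquare_algebraMap_sqrtExt hw (by rwa [neg_one_mul])⟩
  have hw0 : w ≠ 0 := fun h ↦ hw (h ▸ IsSquare.zero)
  obtain ⟨P, hP, hPw⟩ := exists_notMem_not_isLocalSquare (algebraMap K (SqrtExt (-1 : K)) w)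
    (finite_primesAbove (E := SqrtExt (-1 : K))
      ((hS.union (finite_setOf_ord_ne_zero (2 : K))).union (finite_setOf_ord_ne_zero w)))
  set p := P.under (𝓞 K)
  have hp : p ∉ (S ∪ {p | ord p (2 : K) ≠ 0}) ∪ {p | ord p w ≠ 0} := hP
  simp only [Set.mem_union, Set.mem_ofPred_eq, not_or, not_not] at hp
  obtain ⟨⟨hpS, hp2⟩, hpw⟩ := hp
  have not_w : ¬ IsLocalSquare p w := fun h ↦ hPw (h.map_of_under P)
  have not_neg_w : ¬ IsLocalSquare p (-w) := fun h ↦ by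
    refine hPw ((isLocalSquare_mul_sq_iff (omega_ne_zero (-1 : K))).1 ?_)
    rw [omega_sq_sqrtExt, ← map_mul, mul_neg_one]
    exact h.map_of_under P
  refine ⟨p, hpS, (isLocalSquare_mul_sq_iff hw0).1 ?_, not_w⟩
  rw [show -1 * w ^ 2 = w * -w by ring]
  exact isLocalSquare_mul_of_not hp2 hw0 hpw (neg_ne_zero.2 hw0) (by rwa [ord_neg]) not_w not_neg_w

lemma relIndex_localSquares_unit {p : HeightOneSpectrum (𝓞 K)} (h2 : ord p (2 : K) = 0)
    (hp : p ∉ S) :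
    (localSquares K p).relIndex (S.unit K) ≤ 2 ∧ (localSquares K p).relIndex (S.unit K) ≠ 0 :=
  relIndex_le_two_and_ne_zero fun x hx y hy hx' hy' ↦
    isLocalSquare_mul_of_not h2 x.ne_zero (mem_unit_iff_ord.1 hx p hp) y.ne_zero
      (mem_unit_iff_ord.1 hy p hp) hx' hy'

lemma two_pow_le_relIndex_square_sup_zpowers_neg_one (hS : S.Finite) :
    2 ^ (Units.rank K + S.ncard) ≤ (square Kˣ ⊔ zpowers (-1 : Kˣ)).relIndex (S.unit K) := by
  set Q := square Kˣ ⊔ zpowers (-1 : Kˣ) with hQ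
  have relIndex_Q : (square Kˣ).relIndex Q ≤ 2 ∧ (square Kˣ).relIndex Q ≠ 0 := by
    rw [hQ, relIndex_sup_left]
    refine relIndex_le_two_and_ne_zero fun x hx y hy hx' hy' ↦ ?_
    obtain ⟨m, rfl⟩ := hx
    obtain ⟨n, rfl⟩ := hy
    have even_zpow : ∀ {n : ℤ}, Even n → (-1 : Kˣ) ^ n ∈ square Kˣ := fun h ↦ h.isSquare_zpow _
    have odd_m := Int.not_even_iff_odd.1 (mt even_zpow hx')
    have odd_n := Int.not_even_iff_odd.1 (mt even_zpow hy')
    simpa only [← zpow_add] using even_zpow (odd_m.add_odd odd_n)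
  have tower : (square Kˣ).relIndex (Q ⊓ S.unit K) * Q.relIndex (S.unit K) =
      (square Kˣ).relIndex (S.unit K) := by
    rw [← inf_relIndex_right Q, ← inf_relIndex_right (square Kˣ) (S.unit K),
      ← inf_relIndex_right (square Kˣ) (Q ⊓ S.unit K), ← inf_assoc,
      inf_eq_left.2 (le_sup_left : square Kˣ ≤ Q)]
    exact relIndex_mul_relIndex _ _ _ (inf_le_inf_right _ le_sup_left) inf_le_right
  rw [relIndex_square_unit_eq_two_pow hS] at tower
  refine Nat.le_of_mul_le_mul_left (c := 2) ?_ two_pos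
  calc 2 * 2 ^ (Units.rank K + S.ncard) = 2 ^ (Units.rank K + 1 + S.ncard) := by ring
    _ ≤ 2 * Q.relIndex (S.unit K) := by
      rw [← tower]
      gcongr
      exact (relIndex_le_of_le_right inf_le_left relIndex_Q.2).trans relIndex_Q.1

/-- Primes `p i` outside `S` and `S`-units `e i` whose matrix of local square classes (of `e i` at
`p j`) is triangular with nontrivial diagonal. -/
structure IsTriangularSystem {ι : Type*} [LT ι] (S : Set (HeightOneSpectrum (𝓞 K)))
    (p : ι → HeightOneSpectrum (𝓞 K)) (e : ι → Kˣ) : Prop where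
  notMem i : p i ∉ S
  mem_unit i : e i ∈ S.unit K
  not_isLocalSquare i : ¬ IsLocalSquare (p i) (e i : K)
  isLocalSquare {i j} : j < i → IsLocalSquare (p j) (e i : K)

lemma exists_mem_unit_forall_isLocalSquare (hS : S.Finite) (h2 : ∀ p ∉ S, ord p (2 : K) = 0)
    {k : ℕ} (hk : k < Units.rank K + S.ncard) {p : Fin k → HeightOneSpectrum (𝓞 K)}
    (hp : ∀ i, p i ∉ S) :
    ∃ w ∈ S.unit K, (∀ i, IsLocalSquare (p i) (w : K)) ∧ ¬ IsSquare (w : K) ∧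
      ¬ IsSquare (-w : K) := by
  set W := ⨅ i, localSquares K (p i)
  have relIndex_W : W.relIndex (S.unit K) ≤ 2 ^ k := by
    refine (relIndex_iInf_le _).trans ((Finset.prod_le_pow_card _ _ 2 fun i _ ↦ ?_).trans (by simp))
    exact (relIndex_localSquares_unit (h2 _ (hp i)) (hp i)).1
  have relIndex_W_ne : W.relIndex (S.unit K) ≠ 0 :=
    relIndex_iInf_ne_zero fun i ↦ (relIndex_localSquares_unit (h2 _ (hp i)) (hp i)).2
  have not_le : ¬ W ⊓ S.unit K ≤ square Kˣ ⊔ zpowers (-1 : Kˣ) := fun hle ↦ by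
    rw [← inf_relIndex_right] at relIndex_W relIndex_W_ne
    have := (two_pow_le_relIndex_square_sup_zpowers_neg_one hS).trans
      ((relIndex_le_of_le_left hle relIndex_W_ne).trans relIndex_W)
    exact hk.not_ge ((Nat.pow_le_pow_iff_right one_lt_two).1 this)
  obtain ⟨w, ⟨hwW, hwS⟩, hw⟩ := SetLike.not_le_iff_exists.1 not_le
  refine ⟨w, hwS, fun i ↦ (mem_iInf.1 hwW i :), fun h ↦ ?_, fun h ↦ ?_⟩
  · exact hw (mem_sup_left (isSquare_units_of_isSquare_val h))
  · have : w = -w * -1 := by simp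
    rw [this] at hw
    exact hw (mul_mem (mem_sup_left (isSquare_units_of_isSquare_val h))
      (mem_sup_right (mem_zpowers _)))

lemma exists_isTriangularSystem (hS : S.Finite) (h2 : ∀ p ∉ S, ord p (2 : K) = 0)
    (h1 : ¬ IsSquare (-1 : K)) {k : ℕ} (hk : k ≤ Units.rank K + S.ncard) :
    ∃ (p : Fin k → HeightOneSpectrum (𝓞 K)) (e : Fin k → Kˣ),
      IsTriangularSystem S p e ∧ ∀ i, IsLocalSquare (p i) (-1 : K) := by
  induction k with
  | zero => exact ⟨Fin.elim0, Fin.elim0, ⟨nofun, nofun, nofun, fun {i} ↦ i.elim0⟩, nofun⟩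
  | succ k ih =>
    obtain ⟨p, e, hpe, hp1⟩ := ih (by lia)
    obtain ⟨w, hwS, hwp, hw, hw'⟩ := exists_mem_unit_forall_isLocalSquare hS h2 hk hpe.notMem
    obtain ⟨q, hqS, hq1, hqw⟩ :=
      exists_isLocalSquare_neg_one_and_not_isLocalSquare h1 hw hw' hS
    refine ⟨Fin.snoc (α := fun _ ↦ HeightOneSpectrum (𝓞 K)) p q,
      Fin.snoc (α := fun _ ↦ Kˣ) e w, ⟨?_, ?_, ?_, ?_⟩, ?_⟩
    · exact Fin.lastCases (by simpa) fun i ↦ by simpa using hpe.notMem i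
    · exact Fin.lastCases (by simpa) fun i ↦ by simpa using hpe.mem_unit i
    · exact Fin.lastCases (by simpa) fun i ↦ by simpa using hpe.not_isLocalSquare i
    · intro i j hij
      induction j using Fin.lastCases with
      | last => exact absurd hij (Fin.le_last i).not_gt
      | cast j =>
        induction i using Fin.lastCases with
        | last => simpa using hwp j
        | cast i => simpa using hpe.isLocalSquare (by simpa using hij)
    · exact Fin.lastCases (by simpa) fun i ↦ by simpa using hp1 i

end TriangularSystem

section LocalGlobal

variable {K : Type*} [Field K] [NumberField K] {S : Set (HeightOneSpectrum (𝓞 K))}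

lemma GeneratesClassGroup.exists_ord_eq_one (hS : GeneratesClassGroup S)
    {p : HeightOneSpectrum (𝓞 K)} (hp : p ∉ S) :
    ∃ π : Kˣ, ord p (π : K) = 1 ∧ ∀ q ∉ S, q ≠ p → ord q (π : K) = 0 := by
  obtain ⟨c, hc, h⟩ := hS (Finsupp.single p 1)
  refine ⟨Units.mk0 c hc, ?_, fun q hq hqp ↦ ?_⟩
  · simpa using h p hp
  · simpa [Finsupp.single_apply, hqp.symm] using h q hq

lemma ord_units_prod {ι : Type*} (p : HeightOneSpectrum (𝓞 K)) (X : Finset ι) (c : ι → Kˣ) :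
    ord p ((∏ i ∈ X, c i : Kˣ) : K) = ∑ i ∈ X, ord p (c i : K) := by
  classical
  induction X using Finset.induction_on with
  | empty => simp
  | insert a X ha ih => rw [Finset.prod_insert ha, Finset.sum_insert ha, Units.val_mul,
    ord_mul p (Units.ne_zero _) (Units.ne_zero _), ih]

variable {ι : Type*} [LinearOrder ι] {p : ι → HeightOneSpectrum (𝓞 K)} {e : ι → Kˣ}

namespace IsTriangularSystem

lemma injective (h : IsTriangularSystem S p e) : p.Injective := fun i j hij ↦ by
  rcases lt_trichotomy i j with hlt | heq | hlt
  · exact absurd (hij ▸ h.isLocalSquare hlt) (h.not_isLocalSquare j)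
  · exact heq
  · exact absurd (hij ▸ h.isLocalSquare hlt) (h.not_isLocalSquare i)

lemma not_isLocalSquare_prod (h : IsTriangularSystem S p e) {X : Finset ι} (hX : X.Nonempty) :
    ¬ IsLocalSquare (p (X.min' hX)) ((∏ i ∈ X, e i : Kˣ) : K) := fun hsq ↦ by
  have rest : ∏ i ∈ X.erase (X.min' hX), e i ∈ localSquares K (p (X.min' hX)) :=
    Subgroup.prod_mem _ fun i hi ↦ h.isLocalSquare
      (X.min'_lt_of_mem_erase_min' hX hi)
  rw [← Finset.prod_erase_mul X e (X.min'_mem hX), Units.val_mul] at hsq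
  exact h.not_isLocalSquare _ (.of_mul_left hsq rest)

-- If `b` has even valuation at some `p j`, every norm has even valuation there, but the product
-- has valuation `1`; otherwise every norm that is a unit at the first `p j` is a local square.
lemma prod_ne_sq_sub_mul_sq (h : IsTriangularSystem S p e) (h2 : ∀ q ∉ S, ord q (2 : K) = 0)
    {b : Kˣ} {π : ι → Kˣ} (hπ : ∀ i, ord (p i) (π i : K) = 1)
    (hπ' : ∀ i j, j ≠ i → ord (p j) (π i : K) = 0) {X : Finset ι} (hX : X.Nonempty)
    (hXb : ∀ i ∈ X, ¬ IsLocalSquare (p i) (b : K)) (y z : K) :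
    ((∏ i ∈ X, if Even (ord (p i) (b : K)) then π i else e i : Kˣ) : K) ≠ y ^ 2 - b * z ^ 2 := by
  set c : ι → Kˣ := fun i ↦ if Even (ord (p i) (b : K)) then π i else e i with hc
  intro hnorm
  by_cases hex : ∃ j ∈ X, Even (ord (p j) (b : K))
  · obtain ⟨j, hj, hev⟩ := hex
    have ord_c_eq_zero : ∀ i ∈ X, i ≠ j → ord (p j) (c i : K) = 0 := fun i _ hij ↦ by
      simp only [hc]
      split_ifs
      · exact hπ' i j hij.symm
      · exact mem_unit_iff_ord.1 (h.mem_unit i) _ (h.notMem j)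
    have even := even_ord_sq_sub_mul_sq (y := y) (z := z) (h2 _ (h.notMem j)) b.ne_zero (hXb j hj)
      hev
    rw [← hnorm, ord_units_prod, Finset.sum_eq_single_of_mem j hj ord_c_eq_zero] at even
    simp only [hc, if_pos hev, hπ] at even
    exact Int.not_even_one even
  · push Not at hex
    have prod_c : ∏ i ∈ X, c i = ∏ i ∈ X, e i :=
      Finset.prod_congr rfl fun i hi ↦ if_neg (hex i hi)
    rw [prod_c] at hnorm
    set j := X.min' hX
    have ord_prod : ord (p j) ((∏ i ∈ X, e i : Kˣ) : K) = 0 :=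
      mem_unit_iff_ord.1 (Subgroup.prod_mem _ fun i _ ↦ h.mem_unit i) _ (h.notMem j)
    refine h.not_isLocalSquare_prod hX (hnorm ▸ isLocalSquare_sq_sub_mul_sq (h2 _ (h.notMem j))
      (hex j (X.min'_mem hX)) (hnorm ▸ Units.ne_zero _) (hnorm ▸ ord_prod))

end IsTriangularSystem

lemma square_le_range_unitNorm {b : K} [Fact (¬ IsSquare b)] :
    Subgroup.square (S.unit K) ≤ (unitNorm b S).range := by
  rintro _ ⟨x, rfl⟩
  exact ⟨unitInclusion b S x, (unitNorm_unitInclusion x).trans (sq x)⟩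

lemma finiteIndex_range_unitNorm {b : K} [Fact (¬ IsSquare b)] (hS : S.Finite) :
    (unitNorm b S).range.FiniteIndex := by
  have : (Subgroup.square (S.unit K)).FiniteIndex := by
    rw [Subgroup.finiteIndex_iff, ← relIndex_square_unit, relIndex_square_unit_eq_two_pow hS]
    positivity
  exact Subgroup.finiteIndex_of_le square_le_range_unitNorm

lemma ncard_not_isLocalSquare_le {κ : Type*} [Finite κ] {p : κ → HeightOneSpectrum (𝓞 K)}
    {b : K} (hbS : ∀ q ∈ S, IsLocalSquare q b) :
    {q ∈ S ∪ Set.range p | ¬ IsLocalSquare q b}.ncard ≤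
      Nat.card {i // ¬ IsLocalSquare (p i) b} := by
  rw [← Nat.card_coe_set_eq]
  refine Nat.card_le_card_of_surjective
    (fun i ↦ ⟨p i, .inr (Set.mem_range_self _), i.2⟩) ?_
  rintro ⟨q, hqS | ⟨i, rfl⟩, hq⟩
  · exact absurd (hbS q hqS) hq
  · exact ⟨⟨i, hq⟩, rfl⟩

lemma exists_sq_sub_mul_sq_of_mem_range_unitNorm {b : K} [Fact (¬ IsSquare b)] {x : S.unit K}
    (hx : x ∈ (unitNorm b S).range) : ∃ y z : K, ((x : Kˣ) : K) = y ^ 2 - b * z ^ 2 := by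
  obtain ⟨γ, rfl⟩ := hx
  exact ⟨_, _, norm_sqrtExt _⟩

namespace IsTriangularSystem

variable [Finite ι]

lemma two_pow_le_index_range_unitNorm (h : IsTriangularSystem S p e) (hS : S.Finite)
    (hCl : GeneratesClassGroup S) (h2 : ∀ q ∉ S, ord q (2 : K) = 0) {b : Kˣ}
    [Fact (¬ IsSquare (b : K))] :
    2 ^ Nat.card {i // ¬ IsLocalSquare (p i) (b : K)} ≤
      (unitNorm (b : K) (S ∪ Set.range p)).range.index := by
  have := Fintype.ofFinite {i // ¬ IsLocalSquare (p i) (b : K)}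
  have := finiteIndex_range_unitNorm (b := (b : K)) (hS.union (Set.finite_range p))
  choose π hπ hπ_off using fun i ↦ hCl.exists_ord_eq_one (h.notMem i)
  have hπ' : ∀ i j, j ≠ i → ord (p j) (π i : K) = 0 := fun i j hij ↦
    hπ_off i _ (h.notMem j) (h.injective.ne hij)
  have mem_unit (i : ι) : (if Even (ord (p i) (b : K)) then π i else e i) ∈
      (S ∪ Set.range p).unit K := by
    split_ifs
    · refine mem_unit_iff_ord.2 fun q hq ↦ ?_
      exact hπ_off i q (fun hqS ↦ hq (.inl hqS)) fun hqp ↦ hq (.inr ⟨i, hqp.symm⟩)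
    · exact unit_mono Set.subset_union_left (h.mem_unit i)
  rw [Nat.card_eq_fintype_card]
  refine two_pow_card_le_index square_le_range_unitNorm (c := fun i ↦ ⟨_, mem_unit i⟩)
    fun X hX hmem ↦ ?_
  obtain ⟨y, z, hyz⟩ := exists_sq_sub_mul_sq_of_mem_range_unitNorm hmem
  refine h.prod_ne_sq_sub_mul_sq h2 hπ hπ' (b := b) (X := X.map (.subtype _)) hX.map
    (fun i hi ↦ ?_) y z ?_
  · obtain ⟨i, -, rfl⟩ := Finset.mem_map.1 hi
    exact i.2
  · rw [← hyz, Finset.prod_map, SubmonoidClass.coe_finsetProd]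
    rfl

theorem isSquare_of_forall_isLocalSquare [IsTotallyComplex K] (h : IsTriangularSystem S p e)
    (hS : S.Finite) (hCl : GeneratesClassGroup S) (h2 : ∀ q ∉ S, ord q (2 : K) = 0) {b : Kˣ}
    (hb : b ∈ (S ∪ Set.range p).unit K) (hbS : ∀ q ∈ S, IsLocalSquare q (b : K)) :
    IsSquare (b : K) := by
  by_contra hsq
  have : Fact (¬ IsSquare (b : K)) := ⟨hsq⟩
  have lower := h.two_pow_le_index_range_unitNorm hS hCl h2 (b := b)
  have upper := two_mul_index_range_unitNorm_le (hCl.mono Set.subset_union_left)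
    (fun q hq ↦ h2 q fun hqS ↦ hq (.inl hqS)) (mem_unit_iff_ord.1 hb)
    (hS.union (Set.finite_range p)) (rank_sqrtExt K (b : K))
  have := upper.trans (Nat.pow_le_pow_right two_pos (ncard_not_isLocalSquare_le hbS))
  have : 0 < 2 ^ Nat.card {i // ¬ IsLocalSquare (p i) (b : K)} := by positivity
  lia

end IsTriangularSystem

end LocalGlobal

section WeakApproximation

variable {R K : Type*} [CommRing R] [IsDedekindDomain R] [Field K] [Algebra R K]
  [IsFractionRing R K] {S : Set (HeightOneSpectrum R)}

lemma exists_forall_sub_algebraMap_mem_ordGE (hS : S.Finite) {x : HeightOneSpectrum R → K}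
    (hx : ∀ p ∈ S, x p ∈ ordGE K p 0) (n : HeightOneSpectrum R → ℤ) :
    ∃ r : R, ∀ p ∈ S, x p - algebraMap R K r ∈ ordGE K p (n p) := by
  have local_approx (p) : ∃ a : R, p ∈ S → x p - algebraMap R K a ∈ ordGE K p (n p) := by
    by_cases hp : p ∈ S
    · obtain ⟨a, ha⟩ := exists_sub_algebraMap_mem_ordGE p (n p) (hx p hp)
      exact ⟨a, fun _ ↦ ha⟩
    · exact ⟨0, fun h ↦ absurd h hp⟩
  choose a ha using local_approx
  obtain ⟨r, hr⟩ := IsDedekindDomain.exists_forall_sub_mem_ideal (s := hS.toFinset)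
    (fun p ↦ p.asIdeal) (fun p ↦ (n p).toNat) (fun p _ ↦ p.prime)
    (fun p _ q _ hpq h ↦ hpq (HeightOneSpectrum.ext h)) (fun p ↦ a p)
  refine ⟨r, fun p hp ↦ ?_⟩
  have h := hr p (hS.mem_toFinset.2 hp)
  rw [← algebraMap_mem_ordGE_iff (K := K), map_sub] at h
  rw [← sub_sub_sub_cancel_right _ _ (algebraMap R K (a p))]
  exact sub_mem (ha p hp) (ordGE_anti p (Int.self_le_toNat _) h)

lemma exists_forall_sub_mem_ordGE (hS : S.Finite) (x : HeightOneSpectrum R → K)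
    (n : HeightOneSpectrum R → ℤ) : ∃ c : K, ∀ p ∈ S, x p - c ∈ ordGE K p (n p) := by
  obtain ⟨⟨d, hd⟩, h⟩ := IsLocalization.exist_integer_multiples (nonZeroDivisors R) hS.toFinset x
  have hd0 : algebraMap R K d ≠ 0 := by simpa using nonZeroDivisors.ne_zero hd
  obtain ⟨r, hr⟩ := exists_forall_sub_algebraMap_mem_ordGE hS
    (x := fun p ↦ algebraMap R K d * x p)
    (fun p hp ↦ by
      obtain ⟨a, ha⟩ := h p (hS.mem_toFinset.2 hp)
      rw [← Algebra.smul_def, ← ha]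
      exact algebraMap_mem_ordGE_zero p a)
    (fun p ↦ n p + ord p (algebraMap R K d))
  refine ⟨algebraMap R K r / algebraMap R K d, fun p hp ↦ ?_⟩
  rw [sub_div' hd0, div_mem_ordGE_iff p hd0, mul_comm]
  exact hr p hp

variable (K) in
lemma exists_ne_zero_and_forall_ord_eq (hS : S.Finite) (f : HeightOneSpectrum R → ℤ) :
    ∃ c : K, c ≠ 0 ∧ ∀ p ∈ S, ord p c = f p := by
  choose π hπ using fun p : HeightOneSpectrum R ↦ exists_ord_eq_one K p
  have hπ0 (p) : algebraMap R K (π p) ≠ 0 := fun h ↦ by simpa [h] using hπ p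
  have hord (p) : ord p (algebraMap R K (π p) ^ f p) = f p := by rw [ord_zpow, hπ, mul_one]
  obtain ⟨c, hc⟩ := exists_forall_sub_mem_ordGE hS (fun p ↦ algebraMap R K (π p) ^ f p)
    (fun p ↦ f p + 1)
  have hcp (p) (hp : p ∈ S) : c ≠ 0 ∧ ord p c = f p := by
    have h := add_ne_zero_and_ord_add p (zpow_ne_zero (f p) (hπ0 p))
      (by rw [hord]; exact sub_mem_comm_iff.1 (hc p hp))
    rwa [add_sub_cancel, hord] at h
  rcases S.eq_empty_or_nonempty with rfl | ⟨p, hp⟩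
  · exact ⟨1, one_ne_zero, by simp⟩
  · exact ⟨c, (hcp p hp).1, fun q hq ↦ (hcp q hq).2⟩

end WeakApproximation

section ClassGroup

variable {K : Type*} [Field K] [NumberField K] {S : Set (HeightOneSpectrum (𝓞 K))}

lemma generatesClassGroup_of_prime
    (h : ∀ p ∉ S, ∃ c : K, c ≠ 0 ∧ ord p c = 1 ∧ ∀ q ∉ S, q ≠ p → ord q c = 0) :
    GeneratesClassGroup S := by
  classical
  intro f
  induction f using Finsupp.induction_linear with
  | zero => exact ⟨1, one_ne_zero, by simp⟩
  | add f g hf hg =>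
    obtain ⟨c, hc0, hc⟩ := hf
    obtain ⟨d, hd0, hd⟩ := hg
    exact ⟨c * d, mul_ne_zero hc0 hd0, fun p hp ↦ by
      rw [ord_mul p hc0 hd0, hc p hp, hd p hp, Finsupp.add_apply]⟩
  | single p n =>
    by_cases hp : p ∈ S
    · refine ⟨1, one_ne_zero, fun q hq ↦ ?_⟩
      rw [ord_one, Finsupp.single_eq_of_ne (ne_of_mem_of_not_mem hp hq).symm]
    · obtain ⟨c, hc0, hcp, hc⟩ := h p hp
      refine ⟨c ^ n, zpow_ne_zero n hc0, fun q hq ↦ ?_⟩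
      rcases eq_or_ne q p with rfl | hqp
      · rw [ord_zpow, hcp, mul_one, Finsupp.single_eq_same]
      · rw [ord_zpow, hc q hq hqp, mul_zero, Finsupp.single_eq_of_ne hqp]

lemma ord_eq_one_of_span_eq_mul {p : HeightOneSpectrum (𝓞 K)} {J : Ideal (𝓞 K)} {g : 𝓞 K}
    (hg0 : g ≠ 0) (hg : p.asIdeal * J = Ideal.span {g}) (hp : ¬ p.asIdeal ∣ J) :
    ord p (algebraMap (𝓞 K) K g) = 1 := by
  have hg0' : algebraMap (𝓞 K) K g ≠ 0 := by simpa using hg0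
  refine le_antisymm (not_lt.1 fun hlt ↦ hp ?_) ?_
  · rw [← Int.add_one_le_iff, ← mem_ordGE_iff p hg0'] at hlt
    have hlt : g ∈ p.asIdeal ^ 2 := (algebraMap_mem_ordGE_iff p g).1 hlt
    rwa [← Ideal.dvd_span_singleton, ← hg, sq, mul_dvd_mul_iff_left p.ne_bot] at hlt
  · rw [← mem_ordGE_iff p hg0', algebraMap_mem_ordGE_one_iff, ← Ideal.dvd_span_singleton, ← hg]
    exact dvd_mul_right _ _

lemma ord_eq_zero_of_span_eq_mul {p q : HeightOneSpectrum (𝓞 K)} {J : Ideal (𝓞 K)} {g : 𝓞 K}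
    (hg : p.asIdeal * J = Ideal.span {g}) (hqp : q ≠ p) (hq : ¬ q.asIdeal ∣ J) :
    ord q (algebraMap (𝓞 K) K g) = 0 := by
  refine ord_algebraMap_eq_zero q fun h ↦ ?_
  rw [← Ideal.dvd_span_singleton, ← hg] at h
  refine hqp (HeightOneSpectrum.ext (p.isMaximal.eq_of_le q.isPrime.ne_top ?_).symm)
  exact Ideal.le_of_dvd ((q.prime.dvd_or_dvd h).resolve_right hq)

variable (K) in
lemma exists_finite_generatesClassGroup :
    ∃ S : Set (HeightOneSpectrum (𝓞 K)), S.Finite ∧ GeneratesClassGroup S ∧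
      ∀ p ∉ S, ord p (2 : K) = 0 := by
  choose J hJ using ClassGroup.mk0_surjective (R := 𝓞 K)
  refine ⟨{p | ord p (2 : K) ≠ 0} ∪ ⋃ C, {p | p.asIdeal ∣ (J C : Ideal (𝓞 K))},
    (finite_setOf_ord_ne_zero _).union
      (Set.finite_iUnion fun C ↦ Ideal.finite_factors (nonZeroDivisors.ne_zero (J C).2)),
    generatesClassGroup_of_prime fun p hp ↦ ?_, fun p hp ↦ ?_⟩
  · let P : nonZeroDivisors (Ideal (𝓞 K)) :=
      ⟨p.asIdeal, mem_nonZeroDivisors_of_ne_zero p.ne_bot⟩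
    obtain ⟨C, hC⟩ : ∃ C, ClassGroup.mk0 (P * J C) = 1 :=
      ⟨(ClassGroup.mk0 P)⁻¹, by rw [map_mul, hJ, mul_inv_cancel]⟩
    rw [ClassGroup.mk0_eq_one_iff] at hC
    obtain ⟨g, hg⟩ := hC
    have hg : p.asIdeal * (J C : Ideal (𝓞 K)) = Ideal.span {g} := hg
    have hg0 : g ≠ 0 := by
      rintro rfl
      rw [Ideal.span_singleton_zero] at hg
      exact mul_ne_zero p.ne_bot (nonZeroDivisors.ne_zero (J C).2) hg
    simp only [Set.mem_union, Set.mem_iUnion, not_or, not_exists, Set.mem_ofPred_eq] at hp ⊢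
    exact ⟨algebraMap (𝓞 K) K g, by simpa using hg0, ord_eq_one_of_span_eq_mul hg0 hg (hp.2 C),
      fun q hq hqp ↦ ord_eq_zero_of_span_eq_mul hg hqp (hq.2 C)⟩
  · by_contra h
    exact hp (.inl h)

end ClassGroup

section Modulus

variable {R K : Type*} [CommRing R] [IsDedekindDomain R] [Field K] [Algebra R K]
  [IsFractionRing R K] {S : Set (HeightOneSpectrum R)} {m : R}

/-- The ideal `m ∏_{p ∈ S} p`, for a finite set `S` of primes. For infinite `S` the product has the
junk value `1`. -/
noncomputable def modulus (S : Set (HeightOneSpectrum R)) (m : R) : Ideal R :=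
  Ideal.span {m} * ∏ᶠ p ∈ S, p.asIdeal

lemma mem_finprod_asIdeal_iff (hS : S.Finite) {b : R} :
    b ∈ ∏ᶠ p ∈ S, p.asIdeal ↔ ∀ p ∈ S, b ∈ p.asIdeal := by
  have h := IsDedekindDomain.inf_pow_eq_prod_of_prime hS.toFinset (fun p ↦ p.asIdeal) (fun _ ↦ 1)
    (fun p _ ↦ p.prime) (fun p _ q _ hpq h ↦ hpq (HeightOneSpectrum.ext h))
  simp only [pow_one] at h
  rw [finprod_mem_eq_finite_toFinset_prod _ hS, ← h]
  simp [Submodule.mem_finsetInf]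

lemma modulus_ne_bot (hm : m ≠ 0) : modulus S m ≠ ⊥ :=
  mul_ne_zero (by simpa using hm) <|
    finprod_mem_induction (· ≠ 0) one_ne_zero (fun _ _ ↦ mul_ne_zero) fun p _ ↦ p.ne_bot

variable (K) in
lemma mem_modulus_iff (hS : S.Finite) (hm : m ≠ 0) (hmS : ∀ p ∉ S, ord p (algebraMap R K m) = 0)
    {b : R} : b ∈ modulus S m ↔
      ∀ p ∈ S, algebraMap R K b ∈ ordGE K p (1 + ord p (algebraMap R K m)) := by
  have hm' : algebraMap R K m ≠ 0 := by simpa using hm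
  simp_rw [modulus, Ideal.mem_span_singleton_mul, mem_finprod_asIdeal_iff hS,
    ← div_mem_ordGE_iff _ hm']
  constructor
  · rintro ⟨z, hz, rfl⟩ p hp
    rw [map_mul, mul_div_cancel_left₀ _ hm', algebraMap_mem_ordGE_one_iff]
    exact hz p hp
  · intro h
    obtain ⟨z, hz⟩ := exists_algebraMap_eq_of_forall_mem_ordGE
      (x := algebraMap R K b / algebraMap R K m) fun p ↦ by
        by_cases hp : p ∈ S
        · exact ordGE_anti p zero_le_one (h p hp)
        · rw [div_mem_ordGE_iff p hm', hmS p hp]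
          exact algebraMap_mem_ordGE_zero p b
    refine ⟨z, fun p hp ↦ ?_, IsFractionRing.injective R K ?_⟩
    · rw [← algebraMap_mem_ordGE_one_iff (K := K), hz]
      exact h p hp
    · rw [map_mul, hz, mul_div_cancel₀ _ hm']

end Modulus

section UnitsModFour

open Subgroup

lemma relIndex_le_card_and_ne_zero {G α : Type*} [Group G] {H L : Subgroup G} [Finite α]
    (φ : L → α) (h : ∀ x y : L, φ x = φ y → (x : G)⁻¹ * y ∈ H) :
    H.relIndex L ≤ Nat.card α ∧ H.relIndex L ≠ 0 := by
  have φ_injective : Function.Injective fun q : L ⧸ H.subgroupOf L ↦ φ q.out := fun a b hab ↦ by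
    rw [← Quotient.out_eq a, ← Quotient.out_eq b]
    exact QuotientGroup.eq.2 (h _ _ hab)
  have : Finite (L ⧸ H.subgroupOf L) := Finite.of_injective _ φ_injective
  exact ⟨Nat.card_le_card_of_injective _ φ_injective, index_ne_zero_of_finite⟩

lemma card_ker_mul_card_of_surjective {A B : Type*} [Ring A] [Ring B] (f : A →+* B)
    (hf : Function.Surjective f) : Nat.card (RingHom.ker f) * Nat.card B = Nat.card A := by
  have h := f.toAddMonoidHom.ker.card_mul_index
  rwa [AddSubgroup.index_ker, AddMonoidHom.range_eq_top.2 hf, AddSubgroup.card_top] at h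

lemma card_ker_units_map_le {A B : Type*} [Ring A] [Ring B] [Finite A] (f : A →+* B) :
    Nat.card (Units.map f.toMonoidHom).ker ≤ Nat.card (RingHom.ker f) := by
  refine Nat.card_le_card_of_injective
    (fun u ↦ ⟨(u : Aˣ) - 1, ?_⟩) fun u v huv ↦ Subtype.ext (Units.ext ?_)
  · have hu : f (u : Aˣ) = 1 := congrArg Units.val u.2
    rw [RingHom.mem_ker, map_sub, map_one, hu, sub_self]
  · exact sub_left_injective (congrArg Subtype.val huv)

lemma index_square_units_le {A B : Type*} [CommRing A] [CommRing B] [Finite A] (f : A →+* B) :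
    (square Aˣ).index ≤ (Units.map f.toMonoidHom).ker.relIndex (powMonoidHom 2 : Aˣ →* Aˣ).ker *
      Nat.card (RingHom.ker f) := by
  rw [square_eq_range_powMonoidHom, index_range, relIndex, ← index_mul_card
    ((Units.map f.toMonoidHom).ker.subgroupOf (powMonoidHom 2 : Aˣ →* Aˣ).ker)]
  refine Nat.mul_le_mul_left _ (le_trans ?_ (card_ker_units_map_le f))
  exact Nat.card_le_card_of_injective (fun u ↦ ⟨u.1.1, mem_subgroupOf.1 u.2⟩) fun u v huv ↦
    Subtype.ext (Subtype.ext (Subtype.mk.inj huv))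

lemma modulus_four_le_modulus_two {R : Type*} [CommRing R] (S : Set (HeightOneSpectrum R)) :
    modulus S 4 ≤ modulus S 2 :=
  Ideal.mul_mono_left <| Ideal.span_singleton_le_span_singleton.2 ⟨2, by norm_num⟩

variable {R K : Type*} [CommRing R] [IsDedekindDomain R] [Field K] [Algebra R K]
  [IsFractionRing R K] {S : Set (HeightOneSpectrum R)}

lemma sub_one_mem_or_add_one_mem_ordGE (p : HeightOneSpectrum R) {x : K}
    (h : x ^ 2 - 1 ∈ ordGE K p (1 + 2 * ord p (2 : K))) :
    x - 1 ∈ ordGE K p (1 + ord p (2 : K)) ∨ x + 1 ∈ ordGE K p (1 + ord p (2 : K)) := by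
  by_contra! ⟨hsub, hadd⟩
  have hsub0 : x - 1 ≠ 0 := fun h0 ↦ hsub (h0 ▸ zero_mem _)
  have hadd0 : x + 1 ≠ 0 := fun h0 ↦ hadd (h0 ▸ zero_mem _)
  rw [show x ^ 2 - 1 = (x - 1) * (x + 1) by ring, mem_ordGE_iff p (mul_ne_zero hsub0 hadd0),
    ord_mul p hsub0 hadd0] at h
  rw [mem_ordGE_iff p hsub0] at hsub
  rw [mem_ordGE_iff p hadd0] at hadd
  lia

variable [CharZero R]

variable (K) in
lemma mem_modulus_two_iff (hS : S.Finite) (h2 : ∀ p ∉ S, ord p (2 : K) = 0) {b : R} :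
    b ∈ modulus S 2 ↔ ∀ p ∈ S, algebraMap R K b ∈ ordGE K p (1 + ord p (2 : K)) := by
  simpa only [map_ofNat] using
    mem_modulus_iff K hS two_ne_zero (by simpa only [map_ofNat] using h2) (b := b)

variable (K) in
lemma mem_modulus_four_iff (hS : S.Finite) (h2 : ∀ p ∉ S, ord p (2 : K) = 0) {b : R} :
    b ∈ modulus S 4 ↔ ∀ p ∈ S, algebraMap R K b ∈ ordGE K p (1 + 2 * ord p (2 : K)) := by
  simpa only [map_ofNat, ord_four] using mem_modulus_iff K hS (by norm_num : (4 : R) ≠ 0)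
    (fun p hp ↦ by rw [map_ofNat, ord_four, h2 p hp, mul_zero]) (b := b)

end UnitsModFour

section CountingUnitsModFour

open Subgroup Ideal.Quotient

variable {K : Type*} [Field K] [NumberField K] {S : Set (HeightOneSpectrum (𝓞 K))}

instance : Finite (𝓞 K ⧸ modulus S (4 : 𝓞 K)) :=
  Ideal.finiteQuotientOfFreeOfNeBot _ (modulus_ne_bot (by norm_num))

variable (S) in
lemma card_ker_factor_modulus :
    Nat.card (RingHom.ker (factor (modulus_four_le_modulus_two S))) =
      2 ^ Module.finrank ℚ K := by
  have absNorm_two : Ideal.absNorm (Ideal.span {(2 : 𝓞 K)}) = 2 ^ Module.finrank ℚ K := by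
    simpa [RingOfIntegers.rank] using Ideal.absNorm_span_natCast (S := 𝓞 K) 2
  have absNorm_modulus : Ideal.absNorm (modulus S (4 : 𝓞 K)) =
      2 ^ Module.finrank ℚ K * Ideal.absNorm (modulus S (2 : 𝓞 K)) := by
    rw [← absNorm_two, ← map_mul, modulus, modulus, ← mul_assoc,
      Ideal.span_singleton_mul_span_singleton]
    norm_num
  have absNorm_modulus_two_pos : 0 < Ideal.absNorm (modulus S (2 : 𝓞 K)) := by
    rw [Nat.pos_iff_ne_zero, Ne, Ideal.absNorm_eq_zero_iff]
    exact modulus_ne_bot two_ne_zero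
  refine Nat.eq_of_mul_eq_mul_right absNorm_modulus_two_pos ?_
  rw [← absNorm_modulus, Ideal.absNorm_apply, Ideal.absNorm_apply, Submodule.cardQuot_apply,
    Submodule.cardQuot_apply]
  exact card_ker_mul_card_of_surjective _ (factor_surjective (modulus_four_le_modulus_two S))

lemma sub_mem_modulus_two (hS : S.Finite) (h2 : ∀ p ∉ S, ord p (2 : K) = 0) {a b : 𝓞 K}
    (ha : a ^ 2 - 1 ∈ modulus S 4) (hb : b ^ 2 - 1 ∈ modulus S 4)
    (hab : ∀ p ∈ S, algebraMap (𝓞 K) K (a - 1) ∈ ordGE K p (1 + ord p (2 : K)) ↔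
      algebraMap (𝓞 K) K (b - 1) ∈ ordGE K p (1 + ord p (2 : K))) :
    a - b ∈ modulus S 2 := by
  simp only [mem_modulus_four_iff K hS h2, mem_modulus_two_iff K hS h2, map_sub, map_pow,
    map_one] at ha hb hab ⊢
  intro p hp
  by_cases h : algebraMap (𝓞 K) K a - 1 ∈ ordGE K p (1 + ord p (2 : K))
  · simpa only [sub_sub_sub_cancel_right] using sub_mem h ((hab p hp).1 h)
  · simpa only [add_sub_add_right_eq_sub] using
      sub_mem ((sub_one_mem_or_add_one_mem_ordGE p (ha p hp)).resolve_left h)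
        ((sub_one_mem_or_add_one_mem_ordGE p (hb p hp)).resolve_left (mt (hab p hp).2 h))

-- A `2`-torsion unit modulo `4 ∏ p` is `±1` modulo `2p` for each `p ∈ S`, and these signs determine
-- it modulo `2 ∏ p`.
lemma relIndex_ker_factor_modulus_le (hS : S.Finite) (h2 : ∀ p ∉ S, ord p (2 : K) = 0) :
    (Units.map (factor (modulus_four_le_modulus_two S)).toMonoidHom).ker.relIndex
      (powMonoidHom 2 : (𝓞 K ⧸ modulus S (4 : 𝓞 K))ˣ →* _).ker ≤ 2 ^ S.ncard := by
  set T := (powMonoidHom 2 : (𝓞 K ⧸ modulus S (4 : 𝓞 K))ˣ →* _).ker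
  choose a ha using fun u : T ↦ mk_surjective (u : (𝓞 K ⧸ modulus S (4 : 𝓞 K))ˣ).val
  have ha2 (u : T) : a u ^ 2 - 1 ∈ modulus S 4 := by
    rw [← Ideal.Quotient.eq, map_pow, ha, map_one]
    exact congrArg Units.val u.2
  have : Finite S := hS
  refine (relIndex_le_card_and_ne_zero (α := S → Prop) (fun u p ↦
    algebraMap (𝓞 K) K (a u - 1) ∈ ordGE K p.1 (1 + ord p.1 (2 : K))) fun u v huv ↦ ?_).1.trans
    (by simp [Nat.card_fun, Nat.card_coe_set_eq])
  refine (MonoidHom.eq_iff _).1 (Units.ext ?_)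
  change factor _ _ = factor _ _
  rw [← ha u, ← ha v, factor_mk, factor_mk, Ideal.Quotient.eq]
  exact sub_mem_modulus_two hS h2 (ha2 v) (ha2 u) fun p hp ↦ (congrFun huv ⟨p, hp⟩).symm.to_iff

lemma index_square_units_modulus_four_le (hS : S.Finite) (h2 : ∀ p ∉ S, ord p (2 : K) = 0) :
    (square (𝓞 K ⧸ modulus S (4 : 𝓞 K))ˣ).index ≤ 2 ^ (S.ncard + Module.finrank ℚ K) := by
  refine (index_square_units_le (factor (modulus_four_le_modulus_two S))).trans ?_
  rw [card_ker_factor_modulus, pow_add]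
  exact Nat.mul_le_mul_right _ (relIndex_ker_factor_modulus_le hS h2)

end CountingUnitsModFour

section UnitsModFour

variable {R K : Type*} [CommRing R] [IsDedekindDomain R] [Field K] [CharZero K]
  [Algebra R K] [IsFractionRing R K] {S : Set (HeightOneSpectrum R)}

lemma exists_forall_isOneModFour_mul (hS : S.Finite) {t : K} (ht0 : t ≠ 0)
    (ht : ∀ p ∈ S, ord p t = 0) : ∃ r : R, ∀ p ∈ S, IsOneModFour p (t * algebraMap R K r) := by
  obtain ⟨r, hr⟩ := exists_forall_sub_algebraMap_mem_ordGE hS (x := fun _ ↦ t⁻¹)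
    (fun p hp ↦ mem_ordGE_of_le p (by rw [ord_inv, ht p hp, neg_zero]))
    (fun p ↦ 1 + 2 * ord p (2 : K))
  refine ⟨r, fun p hp ↦ ?_⟩
  rw [IsOneModFour, div_mem_ordGE_iff p (by norm_num : (4 : K) ≠ 0), ord_four,
    show t * algebraMap R K r - 1 = t * -(t⁻¹ - algebraMap R K r) by field_simp; ring,
    mul_mem_ordGE_iff p ht0, ht p hp, sub_zero]
  exact neg_mem (hr p hp)

variable [CharZero R]

variable (K) in
lemma sub_one_mem_modulus_four_iff (hS : S.Finite) (h2 : ∀ p ∉ S, ord p (2 : K) = 0) {r : R} :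
    r - 1 ∈ modulus S 4 ↔ ∀ p ∈ S, IsOneModFour p (algebraMap R K r) := by
  simp only [mem_modulus_four_iff K hS h2, IsOneModFour, map_sub, map_one,
    div_mem_ordGE_iff _ (by norm_num : (4 : K) ≠ 0), ord_four]

lemma isLocalSquare_of_isSquare_mk (hS : S.Finite) (h2 : ∀ p ∉ S, ord p (2 : K) = 0) {r : R}
    {u : (R ⧸ modulus S (4 : R))ˣ} (hr : Ideal.Quotient.mk _ r = (u : R ⧸ modulus S (4 : R)))
    (hu : IsSquare u) : ∀ p ∈ S, IsLocalSquare p (algebraMap R K r) := by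
  obtain ⟨v, rfl⟩ := hu
  obtain ⟨s, hs⟩ := Ideal.Quotient.mk_surjective (v⁻¹).val
  have h : r * s ^ 2 - 1 ∈ modulus S 4 := by
    rw [← Ideal.Quotient.eq, map_mul, map_pow, hr, hs, map_one, ← Units.val_pow_eq_pow_val,
      ← Units.val_mul, inv_pow, ← sq, mul_inv_cancel, Units.val_one]
  intro p hp
  have hone := (sub_one_mem_modulus_four_iff K hS h2).1 h p hp
  rw [map_mul, map_pow] at hone
  have hs0 : algebraMap R K s ≠ 0 := fun hs0 ↦ hone.ne_zero (by simp [hs0])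
  rw [← isLocalSquare_mul_sq_iff hs0]
  exact ⟨1, one_ne_zero, by simpa using hone⟩

lemma exists_isUnit_mk_and_isLocalSquare_mul (hS : S.Finite) (h2 : ∀ p ∉ S, ord p (2 : K) = 0)
    {x : K} (hx0 : x ≠ 0) (hx : ∀ p ∈ S, Even (ord p x)) :
    ∃ r : R, IsUnit (Ideal.Quotient.mk (modulus S 4) r) ∧
      ∀ p ∈ S, IsLocalSquare p (x * algebraMap R K r) := by
  obtain ⟨y, hy0, hy⟩ := exists_ne_zero_and_forall_ord_eq K hS fun p ↦ -(ord p x / 2)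
  have ht0 : x * y ^ 2 ≠ 0 := mul_ne_zero hx0 (pow_ne_zero 2 hy0)
  have ht (p) (hp : p ∈ S) : ord p (x * y ^ 2) = 0 := by
    rw [ord_mul p hx0 (pow_ne_zero 2 hy0), ord_pow, hy p hp]
    have := Int.two_mul_ediv_two_of_even (hx p hp)
    push_cast
    lia
  obtain ⟨r, hr⟩ := exists_forall_isOneModFour_mul hS ht0 ht
  obtain ⟨s, hs⟩ := exists_forall_isOneModFour_mul hS (inv_ne_zero ht0)
    fun p hp ↦ by rw [ord_inv, ht p hp, neg_zero]
  refine ⟨r, IsUnit.of_mul_eq_one (Ideal.Quotient.mk _ s) ?_, fun p hp ↦ ?_⟩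
  · rw [← map_mul, ← map_one (Ideal.Quotient.mk _), Ideal.Quotient.eq,
      sub_one_mem_modulus_four_iff K hS h2]
    intro p hp
    rw [map_mul, show algebraMap R K r * algebraMap R K s =
      x * y ^ 2 * algebraMap R K r * ((x * y ^ 2)⁻¹ * algebraMap R K s) by field_simp]
    exact (hr p hp).mul (hs p hp)
  · rw [← isLocalSquare_mul_sq_iff hy0, mul_right_comm]
    exact ⟨1, one_ne_zero, by simpa using hr p hp⟩

end UnitsModFour

section LocalSquareClasses

open Subgroup

variable {R K : Type*} [CommRing R] [IsDedekindDomain R] [Field K] [Algebra R K]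
  [IsFractionRing R K]

variable (K) in
/-- The group of elements of `Kˣ` of even order at the primes in `A`. -/
def evenOrd (A : Set (HeightOneSpectrum R)) : Subgroup Kˣ where
  carrier := {x | ∀ p ∈ A, Even (ord p (x : K))}
  mul_mem' {x y} hx hy p hp := by
    rw [Units.val_mul, ord_mul p x.ne_zero y.ne_zero]
    exact (hx p hp).add (hy p hp)
  one_mem' p _ := by simp
  inv_mem' {x} hx p hp := by simpa using hx p hp

variable {A S : Set (HeightOneSpectrum R)}

lemma relIndex_evenOrd_le (hS : S.Finite) :
    (evenOrd K S).relIndex (evenOrd K A) ≤ 2 ^ (S \ A).ncard ∧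
      (evenOrd K S).relIndex (evenOrd K A) ≠ 0 := by
  have : Finite ↥(S \ A) := hS.sdiff
  have h := relIndex_le_card_and_ne_zero (H := evenOrd K S) (L := evenOrd K A)
    (α := ↥(S \ A) → Prop) (fun x p ↦ Even (ord p.1 ((x : Kˣ) : K))) fun x y hxy p hp ↦ by
      rw [Units.val_mul, ord_mul p (Units.ne_zero _) (Units.ne_zero _), Units.val_inv_eq_inv_val,
        ord_inv, neg_add_eq_sub, Int.even_sub]
      by_cases hpA : p ∈ A
      · simp only [x.2 p hpA, y.2 p hpA]
      · exact (congrFun hxy ⟨p, hp, hpA⟩).symm.to_iff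
  simpa [Nat.card_fun, Nat.card_coe_set_eq] using h

variable [CharZero K]

lemma iInf_localSquares_le_evenOrd : ⨅ p ∈ S, localSquares K p ≤ evenOrd K S := by
  intro x hx p hp
  simp only [mem_iInf] at hx
  exact (mem_localSquares.1 (hx p hp)).even_ord

lemma relIndex_iInf_localSquares_evenOrd_le [CharZero R] (hS : S.Finite)
    (h2 : ∀ p ∉ S, ord p (2 : K) = 0) [Finite (R ⧸ modulus S (4 : R))] :
    (⨅ p ∈ S, localSquares K p).relIndex (evenOrd K S) ≤
        (square (R ⧸ modulus S (4 : R))ˣ).index ∧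
      (⨅ p ∈ S, localSquares K p).relIndex (evenOrd K S) ≠ 0 := by
  choose r hr hrx using fun x : evenOrd K S ↦
    exists_isUnit_mk_and_isLocalSquare_mul hS h2 (x : Kˣ).ne_zero x.2
  refine relIndex_le_card_and_ne_zero
    (α := (R ⧸ modulus S (4 : R))ˣ ⧸ square (R ⧸ modulus S (4 : R))ˣ)
    (fun x ↦ QuotientGroup.mk (hr x).unit) fun x y hxy ↦ ?_
  have isSquare_mul : IsSquare ((hr x).unit * (hr y).unit) := by
    have h : IsSquare ((hr x).unit⁻¹ * (hr y).unit) := mem_square.1 (QuotientGroup.eq.1 hxy)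
    simpa [pow_two, mul_assoc] using (IsSquare.sq (hr x).unit).mul h
  have isLocalSquare_mul := isLocalSquare_of_isSquare_mk (K := K) (r := r x * r y) hS h2
    (by simp) isSquare_mul
  simp only [mem_iInf, mem_localSquares]
  intro p hp
  have hxy_mul := (hrx x p hp).mul (hrx y p hp)
  rw [mul_mul_mul_comm, ← map_mul, mul_comm] at hxy_mul
  rw [← isLocalSquare_mul_sq_iff (x : Kˣ).ne_zero, ← Units.val_pow_eq_pow_val, ← Units.val_mul,
    mul_right_comm, sq, inv_mul_cancel_left, Units.val_mul]
  exact hxy_mul.of_mul_left (isLocalSquare_mul p hp)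

lemma relIndex_iInf_localSquares_le {K : Type*} [Field K] [NumberField K]
    {A S : Set (HeightOneSpectrum (𝓞 K))} (hS : S.Finite) (hA : A ⊆ S)
    (h2 : ∀ p ∉ S, ord p (2 : K) = 0) :
    (⨅ p ∈ S, localSquares K p).relIndex (evenOrd K A) ≤
        2 ^ ((S \ A).ncard + (S.ncard + Module.finrank ℚ K)) ∧
      (⨅ p ∈ S, localSquares K p).relIndex (evenOrd K A) ≠ 0 := by
  obtain ⟨hW, hW0⟩ := relIndex_iInf_localSquares_evenOrd_le hS h2
  obtain ⟨hE, hE0⟩ := relIndex_evenOrd_le (K := K) (A := A) hS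
  have evenOrd_le : evenOrd K S ≤ evenOrd K A := fun x hx p hp ↦ hx p (hA hp)
  rw [← relIndex_mul_relIndex _ _ _ iInf_localSquares_le_evenOrd evenOrd_le]
  refine ⟨?_, mul_ne_zero hW0 hE0⟩
  rw [pow_add, mul_comm]
  exact Nat.mul_le_mul hE (hW.trans (index_square_units_modulus_four_le hS h2))

end LocalSquareClasses

section SumTwoSquares

lemma le_of_relIndex_le_relIndex {G : Type*} [Group G] {Q N Z : Subgroup G} (hQN : Q ≤ N)
    (hNZ : N ≤ Z) (h0 : Q.relIndex Z ≠ 0) (h : Q.relIndex Z ≤ Q.relIndex N) : Z ≤ N := by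
  rw [← Subgroup.relIndex_mul_relIndex Q N Z hQN hNZ] at h h0
  have := Nat.le_of_mul_le_mul_left (h.trans (mul_one _).ge)
    (Nat.pos_of_ne_zero (left_ne_zero_of_mul h0))
  have := right_ne_zero_of_mul h0
  exact Subgroup.relIndex_eq_one.1 (by lia)

variable {K : Type*} [Field K] [NumberField K] {A S T : Set (HeightOneSpectrum (𝓞 K))}

lemma range_unitNorm_le_evenOrd {b : K} [Fact (¬ IsSquare b)] (hb0 : b ≠ 0)
    (hA : ∀ q ∈ A, ord q (2 : K) = 0 ∧ ¬ IsLocalSquare q b ∧ Even (ord q b)) :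
    (unitNorm b T).range ≤ (evenOrd K A).subgroupOf (T.unit K) := by
  intro x hx q hq
  obtain ⟨y, z, hyz⟩ := exists_sq_sub_mul_sq_of_mem_range_unitNorm hx
  obtain ⟨h2, hb, heven⟩ := hA q hq
  rw [Subgroup.subtype_apply, hyz]
  exact even_ord_sq_sub_mul_sq h2 hb0 hb heven

lemma relIndex_square_evenOrd_le (hS : S.Finite) (hA : A ⊆ S) (h2 : ∀ p ∉ S, ord p (2 : K) = 0)
    (hsq : ∀ b ∈ T.unit K, (∀ q ∈ S, IsLocalSquare q (b : K)) → IsSquare (b : K)) :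
    (Subgroup.square (T.unit K)).relIndex ((evenOrd K A).subgroupOf (T.unit K)) ≤
        2 ^ ((S \ A).ncard + (S.ncard + Module.finrank ℚ K)) ∧
      (Subgroup.square (T.unit K)).relIndex ((evenOrd K A).subgroupOf (T.unit K)) ≠ 0 := by
  obtain ⟨hle, hne⟩ := relIndex_iInf_localSquares_le hS hA h2
  have locally_square_le : (⨅ p ∈ S, localSquares K p).subgroupOf (T.unit K) ≤
      Subgroup.square (T.unit K) := by
    rw [← square_subgroupOf fun _ ↦ mem_unit_of_sq_mem]
    intro b hb
    simp only [Subgroup.mem_subgroupOf, Subgroup.mem_iInf, mem_localSquares] at hb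
    exact isSquare_units_of_isSquare_val (hsq b b.2 hb)
  have relIndex_eq : ((⨅ p ∈ S, localSquares K p).subgroupOf (T.unit K)).relIndex
      ((evenOrd K A).subgroupOf (T.unit K)) =
      (⨅ p ∈ S, localSquares K p).relIndex (evenOrd K A ⊓ T.unit K) := by
    rw [← Subgroup.inf_subgroupOf_right (evenOrd K A), Subgroup.relIndex_subgroupOf inf_le_right]
  have hne' := mt (Subgroup.relIndex_eq_zero_of_le_right
    (inf_le_left : evenOrd K A ⊓ T.unit K ≤ _)) hne
  rw [← relIndex_eq] at hne'
  refine ⟨?_, mt (Subgroup.relIndex_eq_zero_of_le_left locally_square_le) hne'⟩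
  calc _ ≤ _ := Subgroup.relIndex_le_of_le_left locally_square_le hne'
    _ ≤ _ := relIndex_eq.trans_le (Subgroup.relIndex_le_of_le_right inf_le_left hne)
    _ ≤ _ := hle

lemma IsTriangularSystem.ncard_union_range {k : ℕ} {p : Fin k → HeightOneSpectrum (𝓞 K)}
    {e : Fin k → Kˣ} (h : IsTriangularSystem S p e) (hS : S.Finite) :
    (S ∪ Set.range p).ncard = S.ncard + k := by
  rw [Set.ncard_union_eq (Set.disjoint_right.2 (Set.forall_mem_range.2 h.notMem)) hS
    (Set.finite_range p), Set.ncard_range_of_injective h.injective, Nat.card_fin]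

variable [IsTotallyComplex K] {p : Fin (Units.rank K + S.ncard) → HeightOneSpectrum (𝓞 K)}
  {e : Fin (Units.rank K + S.ncard) → Kˣ}

namespace IsTriangularSystem

lemma two_pow_le_relIndex_range_unitNorm_mul (h : IsTriangularSystem S p e) (hS : S.Finite)
    (hCl : GeneratesClassGroup S) (h2 : ∀ q ∉ S, ord q (2 : K) = 0) {b : K} [Fact (¬ IsSquare b)]
    (hb : ∀ q ∉ S, ord q b = 0) (hp : ∀ i, IsLocalSquare (p i) b) :
    2 ^ (2 * (Units.rank K + 1 + S.ncard)) ≤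
      (Subgroup.square ((S ∪ Set.range p).unit K)).relIndex (unitNorm b (S ∪ Set.range p)).range *
        2 ^ {q ∈ S | ¬ IsLocalSquare q b}.ncard := by
  have hST : (S ∪ Set.range p).Finite := hS.union (Set.finite_range p)
  have index_square := relIndex_square_unit_eq_two_pow hST
  rw [relIndex_square_unit, ← Subgroup.relIndex_mul_index (square_le_range_unitNorm (b := b)),
    h.ncard_union_range hS] at index_square
  have norm_index := two_mul_index_range_unitNorm_le (hCl.mono Set.subset_union_left)
    (fun q hq ↦ h2 q fun hqS ↦ hq (.inl hqS)) (fun q hq ↦ hb q fun hqS ↦ hq (.inl hqS)) hST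
    (rank_sqrtExt K b)
  have sep_eq : {q ∈ S ∪ Set.range p | ¬ IsLocalSquare q b} = {q ∈ S | ¬ IsLocalSquare q b} := by
    ext q
    refine and_congr_left fun hq ↦ or_iff_left ?_
    rintro ⟨i, rfl⟩
    exact hq (hp i)
  rw [sep_eq] at norm_index
  calc _ = 2 * 2 ^ (Units.rank K + 1 + (S.ncard + (Units.rank K + S.ncard))) := by
        rw [← pow_succ']; congr 1; lia
    _ = _ := by rw [← index_square, mul_left_comm]
    _ ≤ _ := by gcongr

lemma evenOrd_le_range_unitNorm (h : IsTriangularSystem S p e) (hS : S.Finite)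
    (hCl : GeneratesClassGroup S) (h2 : ∀ q ∉ S, ord q (2 : K) = 0) {b : K} [Fact (¬ IsSquare b)]
    (hb0 : b ≠ 0) (hb : ∀ q ∉ S, ord q b = 0) (hp : ∀ i, IsLocalSquare (p i) b)
    (hA : ∀ q ∈ S, ¬ IsLocalSquare q b → ord q (2 : K) = 0 ∧ Even (ord q b)) :
    (evenOrd K {q ∈ S | ¬ IsLocalSquare q b}).subgroupOf ((S ∪ Set.range p).unit K) ≤
      (unitNorm b (S ∪ Set.range p)).range := by
  set A := {q ∈ S | ¬ IsLocalSquare q b}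
  have hAS : A ⊆ S := Set.sep_subset _ _
  obtain ⟨upper, hne⟩ := relIndex_square_evenOrd_le hS hAS h2
    fun _ ↦ h.isSquare_of_forall_isLocalSquare hS hCl h2
  refine le_of_relIndex_le_relIndex square_le_range_unitNorm (range_unitNorm_le_evenOrd hb0
    fun q hq ↦ ⟨(hA q hq.1 hq.2).1, hq.2, (hA q hq.1 hq.2).2⟩) hne
    (Nat.le_of_mul_le_mul_right (c := 2 ^ A.ncard) ?_ (by positivity))
  have card_add := Set.ncard_sdiff_add_ncard_of_subset hAS hS
  calc _ ≤ 2 ^ ((S \ A).ncard + (S.ncard + Module.finrank ℚ K)) * 2 ^ A.ncard := by gcongr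
    _ = 2 ^ (2 * (Units.rank K + 1 + S.ncard)) := by
        rw [← pow_add, finrank_eq_two_mul_rank_add_one]; congr 1; lia
    _ ≤ _ := h.two_pow_le_relIndex_range_unitNorm_mul hS hCl h2 hb hp

end IsTriangularSystem

theorem exists_neg_one_eq_sq_add_sq
    (h : ∀ p : HeightOneSpectrum (𝓞 K), ord p (2 : K) ≠ 0 → IsLocalSquare p (-1 : K)) :
    ∃ x y : K, -1 = x ^ 2 + y ^ 2 := by
  by_cases h1 : IsSquare (-1 : K)
  · obtain ⟨c, hc⟩ := h1
    exact ⟨c, 0, by rw [hc]; ring⟩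
  have : Fact (¬ IsSquare (-1 : K)) := ⟨h1⟩
  obtain ⟨S, hS, hCl, h2⟩ := exists_finite_generatesClassGroup K
  obtain ⟨p, e, hpe, hp⟩ := exists_isTriangularSystem hS h2 h1 le_rfl
  have neg_one_mem := hpe.evenOrd_le_range_unitNorm hS hCl h2 (b := -1) (by simp) (by simp) hp
    (fun q _ hq ↦ ⟨not_not.1 (mt (h q) hq), by simp⟩)
    (x := ⟨-1, neg_one_mem_unit _⟩) fun q _ ↦ by simp
  obtain ⟨y, z, hyz⟩ := exists_sq_sub_mul_sq_of_mem_range_unitNorm neg_one_mem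
  exact ⟨y, z, by simpa using hyz⟩

end SumTwoSquares

section IsSumFourSq

/-- Sums of four squares. -/
def IsSumFourSq {R : Type*} [CommRing R] (x : R) : Prop :=
  ∃ a b c d : R, x = a ^ 2 + b ^ 2 + c ^ 2 + d ^ 2

lemma IsSumFourSq.sq {R : Type*} [CommRing R] (x : R) : IsSumFourSq (x ^ 2) :=
  ⟨x, 0, 0, 0, by ring⟩

lemma IsSumFourSq.mul {R : Type*} [CommRing R] {x y : R} (hx : IsSumFourSq x)
    (hy : IsSumFourSq y) : IsSumFourSq (x * y) := by
  obtain ⟨a, b, c, d, rfl⟩ := hx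
  obtain ⟨e, f, g, h, rfl⟩ := hy
  exact ⟨a * e - b * f - c * g - d * h, a * f + b * e + c * h - d * g,
    a * g - b * h + c * e + d * f, a * h + b * g - c * f + d * e, by ring⟩

variable {F : Type*} [Field F] {x y : F}

lemma IsSumFourSq.inv (hx : IsSumFourSq x) : IsSumFourSq x⁻¹ := by
  rcases eq_or_ne x 0 with rfl | hx0
  · simpa using hx
  · rw [show x⁻¹ = x * x⁻¹ ^ 2 by field_simp]
    exact hx.mul (.sq _)

lemma IsSumFourSq.of_mul_right (hxy : IsSumFourSq (x * y)) (hy : IsSumFourSq y) (hy0 : y ≠ 0) :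
    IsSumFourSq x := by
  simpa only [mul_inv_cancel_right₀ hy0] using hxy.mul hy.inv

lemma isSumFourSq_of_neg_one_eq_sq_add_sq [NeZero (2 : F)] (h : -1 = x ^ 2 + y ^ 2) (a : F) :
    IsSumFourSq a := by
  have h2 : (2 : F) ≠ 0 := two_ne_zero
  refine ⟨(a + 1) / 2, x * ((a - 1) / 2), y * ((a - 1) / 2), 0, ?_⟩
  field_simp
  linear_combination (a - 1) ^ 2 * h

end IsSumFourSq

section LocalFourSquares

variable {R K : Type*} [CommRing R] [IsDedekindDomain R] [Field K] [Algebra R K]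
  [IsFractionRing R K] {p : HeightOneSpectrum R} {a b u x : K}

variable (p) in
/-- `a` is a sum of four squares in the completion at `p`, stated without the completion: some
nonzero global sum of four squares is in the local square class of `a`. -/
def IsLocallySumFourSq (a : K) : Prop :=
  ∃ q : K, IsSumFourSq q ∧ IsLocalSquare p (a * q)

lemma IsLocalSquare.isLocallySumFourSq (h : IsLocalSquare p a) : IsLocallySumFourSq p a :=
  ⟨1, by simpa using IsSumFourSq.sq (1 : K), by rwa [mul_one]⟩

lemma IsLocallySumFourSq.of_mul (h : IsLocallySumFourSq p (a * b)) (hb : IsSumFourSq b) :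
    IsLocallySumFourSq p a := by
  obtain ⟨q, hq, hsq⟩ := h
  exact ⟨b * q, hb.mul hq, by rwa [← mul_assoc]⟩

lemma exists_sub_sq_mem_ordGE_one [Finite (R ⧸ p.asIdeal)] (h2 : ord p (2 : K) ≠ 0)
    (ha : a ∈ ordGE K p 0) : ∃ w : R, a - algebraMap R K w ^ 2 ∈ ordGE K p 1 := by
  obtain ⟨r, hr⟩ := exists_sub_algebraMap_mem_ordGE p 1 ha
  let _ := Ideal.Quotient.field p.asIdeal
  have two_mem : (2 : R) ∈ p.asIdeal := by
    contrapose! h2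
    rw [← map_ofNat (algebraMap R K) 2]
    exact ord_algebraMap_eq_zero p h2
  have : CharP (R ⧸ p.asIdeal) 2 := CharTwo.of_one_ne_zero_of_two_eq_zero one_ne_zero
    (by rw [← map_ofNat (Ideal.Quotient.mk p.asIdeal) 2, Ideal.Quotient.eq_zero_iff_mem.2 two_mem])
  obtain ⟨w, hw⟩ := FiniteField.isSquare_of_char_two (ringChar.eq _ 2)
    (Ideal.Quotient.mk p.asIdeal r)
  obtain ⟨w, rfl⟩ := Ideal.Quotient.mk_surjective w
  rw [← map_mul, ← sq, Ideal.Quotient.eq, ← algebraMap_mem_ordGE_one_iff (K := K), map_sub,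
    map_pow] at hw
  exact ⟨w, by simpa using add_mem hr hw⟩

variable [CharZero K]

-- `t = u² - u + 1 = (u - 1/2)² + 3 · (1/2)²` is a sum of four squares, and
-- `u / t - 1 = -(u - 1)² / t` is closer to `0` than `u - 1`.
lemma isLocallySumFourSq_of_sub_one_mem (hu : u - 1 ∈ ordGE K p 1) : IsLocallySumFourSq p u := by
  suffices ∀ m : ℕ, ∀ u : K, u - 1 ∈ ordGE K p 1 → u - 1 ∈ ordGE K p (1 + 2 * ord p (2 : K) - m) →
      IsLocallySumFourSq p u from
    this (2 * ord p (2 : K)).toNat u hu (ordGE_anti p (by lia) hu)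
  intro m
  induction m with
  | zero =>
    intro u _ h
    refine IsLocalSquare.isLocallySumFourSq ⟨1, one_ne_zero, ?_⟩
    rw [one_pow, div_one, IsOneModFour, div_mem_ordGE_iff p (by norm_num : (4 : K) ≠ 0), ord_four]
    simpa using h
  | succ m ih =>
    intro u hu h
    set t := u ^ 2 - u + 1 with ht
    have sum_t : IsSumFourSq t := ⟨u - 1 / 2, 1 / 2, 1 / 2, 1 / 2, by rw [ht]; ring⟩
    have t_sub_one : t - 1 ∈ ordGE K p 1 := by
      rw [show t - 1 = u * (u - 1) by rw [ht]; ring]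
      exact mul_mem_ordGE_left p (mem_ordGE_of_le p (ord_eq_zero_of_sub_one_mem p hu).2.ge) hu
    obtain ⟨ht0, ord_t⟩ := ord_eq_zero_of_sub_one_mem p t_sub_one
    have closer {k l : ℤ} (hk : u - 1 ∈ ordGE K p k) (hl : u - 1 ∈ ordGE K p l) :
        u * t⁻¹ - 1 ∈ ordGE K p (k + l) := by
      have h_eq : u * t⁻¹ - 1 = -((u - 1) * (u - 1)) / t := by
        rw [eq_div_iff ht0, sub_mul, inv_mul_cancel_right₀ ht0, ht]
        ring
      rw [h_eq, div_mem_ordGE_iff p ht0, ord_t, add_zero]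
      exact neg_mem (mul_mem_ordGE p hk hl)
    refine (ih _ (ordGE_anti p (by lia) (closer hu hu))
      (ordGE_anti p ?_ (closer hu h))).of_mul sum_t.inv
    push_cast
    lia

variable [Finite (R ⧸ p.asIdeal)]

lemma isLocallySumFourSq_of_ord_eq_zero (h2 : ord p (2 : K) ≠ 0) (ha : a ≠ 0)
    (ha0 : ord p a = 0) : IsLocallySumFourSq p a := by
  obtain ⟨w, hw⟩ := exists_sub_sq_mem_ordGE_one h2 (mem_ordGE_of_le p ha0.ge)
  set y := algebraMap R K w
  obtain ⟨hy0, ord_y⟩ := add_ne_zero_and_ord_add p ha (by rw [ha0]; exact neg_mem hw)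
  rw [neg_sub, add_sub_cancel, ha0] at ord_y
  rw [neg_sub, add_sub_cancel] at hy0
  have hone : a * (y ^ 2)⁻¹ - 1 ∈ ordGE K p 1 := by
    rwa [← div_eq_mul_inv, ← div_self hy0, ← sub_div, div_mem_ordGE_iff p hy0, ord_y]
  exact (isLocallySumFourSq_of_sub_one_mem hone).of_mul (IsSumFourSq.sq y).inv

lemma exists_sq_add_one_mem_ordGE_succ {k : ℕ} (hk : k < ord p (2 : K)) (hx : x ∈ ordGE K p 0)
    (hx1 : x ^ 2 + 1 ∈ ordGE K p (2 * k)) :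
    ∃ y ∈ ordGE K p 0, y ^ 2 + 1 ∈ ordGE K p (2 * k + 1) := by
  obtain ⟨π, hπ⟩ := exists_ord_eq_one K p
  set ϖ := algebraMap R K π
  have hϖ : ϖ ≠ 0 := fun h ↦ by simp [h] at hπ
  have hϖk : ϖ ^ (2 * k) ≠ 0 := pow_ne_zero _ hϖ
  obtain ⟨r, hr⟩ := exists_sub_sq_mem_ordGE_one (p := p) (a := (x ^ 2 + 1) / ϖ ^ (2 * k))
    (by lia) (by simpa [div_mem_ordGE_iff p hϖk, hπ] using hx1)
  set w := algebraMap R K r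
  have hw : w ∈ ordGE K p 0 := algebraMap_mem_ordGE_zero p r
  have hϖkw : ϖ ^ k * w ∈ ordGE K p k := by
    rw [mul_mem_ordGE_iff p (pow_ne_zero k hϖ)]
    simpa [hπ] using hw
  refine ⟨x + ϖ ^ k * w, add_mem hx (ordGE_anti p (by lia) hϖkw), ?_⟩
  rw [show (x + ϖ ^ k * w) ^ 2 + 1 = ϖ ^ (2 * k) * ((x ^ 2 + 1) / ϖ ^ (2 * k) - w ^ 2) +
    2 * (ϖ ^ k * w * (ϖ ^ k * w) + x * (ϖ ^ k * w)) by field_simp; ring]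
  refine add_mem ?_ ?_
  · rw [mul_mem_ordGE_iff p hϖk]
    simpa [hπ] using hr
  · rw [mul_mem_ordGE_iff p two_ne_zero]
    exact ordGE_anti p (by lia) (add_mem (ordGE_anti p (by lia) (mul_mem_ordGE p hϖkw hϖkw))
      (mul_mem_ordGE_left p hx hϖkw))

-- A solution modulo `p ^ (2k)` is refined to one modulo `p ^ (2k + 1)`, which automatically is one
-- modulo `p ^ (2k + 2)`.
lemma exists_sq_add_one_mem_ordGE (hev : ∀ q : K, IsSumFourSq q → Even (ord p q)) {k : ℕ}
    (hk : k ≤ ord p (2 : K)) : ∃ x ∈ ordGE K p 0, x ^ 2 + 1 ∈ ordGE K p (2 * k) := by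
  induction k with
  | zero => exact ⟨0, zero_mem _, mem_ordGE_of_le p (by simp)⟩
  | succ k ih =>
    obtain ⟨x, hx, hx1⟩ := ih (by lia)
    obtain ⟨y, hy, hy1⟩ := exists_sq_add_one_mem_ordGE_succ (by lia) hx hx1
    refine ⟨y, hy, ?_⟩
    rcases eq_or_ne (y ^ 2 + 1) 0 with h0 | h0
    · rw [h0]; exact zero_mem _
    · rw [mem_ordGE_iff p h0] at hy1 ⊢
      have := (hev (y ^ 2 + 1) ⟨y, 1, 0, 0, by ring⟩).two_dvd
      lia

-- Otherwise `2` has even order `e ≥ 2` and `x² + 1 ≡ 0 mod p ^ (2e)` for some `x`, so that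
-- `2² + π² + (xπ + 2)² = 4xπ + π²(x² + 1) + 8` has order `2e + 1`.
lemma exists_isSumFourSq_odd_ord (h2 : ord p (2 : K) ≠ 0) :
    ∃ q : K, IsSumFourSq q ∧ Odd (ord p q) := by
  by_contra! hno
  simp only [Int.not_odd_iff_even] at hno
  have h2_nonneg : 0 ≤ ord p (2 : K) := by simpa using ord_natCast_nonneg p (K := K) 2
  have h2_even := (hno 2 ⟨1, 1, 0, 0, by norm_num⟩).two_dvd
  obtain ⟨x, hx, hx1⟩ := exists_sq_add_one_mem_ordGE hno (k := (ord p (2 : K)).toNat) (by lia)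
  rw [Int.toNat_of_nonneg h2_nonneg] at hx1
  obtain ⟨hx0, ord_x⟩ : x ≠ 0 ∧ ord p x = 0 := by
    obtain ⟨hne, hord⟩ := ord_eq_zero_of_sub_one_mem p (x := -x ^ 2) (by
      rw [← neg_add', neg_mem_iff]; exact ordGE_anti p (by lia) hx1)
    have hx0 : x ≠ 0 := by rintro rfl; simp at hne
    rw [ord_neg, ord_pow] at hord
    exact ⟨hx0, by push_cast at hord; lia⟩
  obtain ⟨π, hπ⟩ := exists_ord_eq_one K p
  set ϖ := algebraMap R K π
  have hϖ : ϖ ≠ 0 := fun h ↦ by simp [h] at hπ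
  have hne : 4 * (x * ϖ) ≠ 0 := mul_ne_zero (by norm_num) (mul_ne_zero hx0 hϖ)
  have hord : ord p (4 * (x * ϖ)) = 2 * ord p (2 : K) + 1 := by
    rw [ord_mul p (by norm_num) (mul_ne_zero hx0 hϖ), ord_mul p hx0 hϖ, ord_four, ord_x, hπ,
      zero_add]
  have h_rest : ϖ ^ 2 * (x ^ 2 + 1) + 2 ^ 3 ∈ ordGE K p (ord p (4 * (x * ϖ)) + 1) := by
    rw [hord]
    refine add_mem ?_ (mem_ordGE_of_le p (by rw [ord_pow]; push_cast; lia))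
    rw [mul_mem_ordGE_iff p (pow_ne_zero 2 hϖ), ord_pow, hπ]
    exact ordGE_anti p (by push_cast; lia) hx1
  have := hno (4 * (x * ϖ) + (ϖ ^ 2 * (x ^ 2 + 1) + 2 ^ 3)) ⟨2, ϖ, x * ϖ + 2, 0, by ring⟩
  rw [(add_ne_zero_and_ord_add p hne h_rest).2, hord] at this
  exact absurd this (by simp)

lemma isLocallySumFourSq_of_even_ord (h2 : ord p (2 : K) ≠ 0) (ha : a ≠ 0)
    (hev : Even (ord p a)) : IsLocallySumFourSq p a := by
  obtain ⟨π, hπ⟩ := exists_ord_eq_one K p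
  obtain ⟨r, hr⟩ := hev
  have hϖ : algebraMap R K π ≠ 0 := fun h ↦ by simp [h] at hπ
  have hne : (algebraMap R K π ^ (-r)) ^ 2 ≠ 0 := pow_ne_zero 2 (zpow_ne_zero _ hϖ)
  refine .of_mul (isLocallySumFourSq_of_ord_eq_zero h2 (mul_ne_zero ha hne) ?_)
    (IsSumFourSq.sq (algebraMap R K π ^ (-r)))
  rw [ord_mul p ha hne, ord_pow, ord_zpow, hπ, hr]
  push_cast
  ring

theorem isLocallySumFourSq (h2 : ord p (2 : K) ≠ 0) (ha : a ≠ 0) : IsLocallySumFourSq p a := by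
  by_cases hev : Even (ord p a)
  · exact isLocallySumFourSq_of_even_ord h2 ha hev
  obtain ⟨q, hq, hqo⟩ := exists_isSumFourSq_odd_ord h2
  have hq0 : q ≠ 0 := by rintro rfl; simp at hqo
  refine .of_mul (isLocallySumFourSq_of_even_ord h2 (mul_ne_zero ha hq0) ?_) hq
  rw [ord_mul p ha hq0]
  exact (Int.not_even_iff_odd.1 hev).add_odd hqo

end LocalFourSquares

section GlobalApproximation

variable {R K : Type*} [CommRing R] [IsDedekindDomain R] [Field K] [Algebra R K]
  [IsFractionRing R K] {S : Set (HeightOneSpectrum R)} {p : HeightOneSpectrum R}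

lemma exists_forall_sq_sub_sq_mem_ordGE [CharZero K] (hS : S.Finite)
    (x : HeightOneSpectrum R → K) (n : HeightOneSpectrum R → ℤ) :
    ∃ c : K, ∀ p ∈ S, c ^ 2 - x p ^ 2 ∈ ordGE K p (n p) := by
  obtain ⟨c, hc⟩ := exists_forall_sub_mem_ordGE hS x
    fun p ↦ max (max (n p) 0) (n p - ord p (2 * x p))
  refine ⟨c, fun p hp ↦ ?_⟩
  have h := hc p hp
  rw [show c ^ 2 - x p ^ 2 = (x p - c) * (x p - c) - 2 * x p * (x p - c) by ring]
  refine sub_mem (ordGE_anti p (by lia) (mul_mem_ordGE p h h)) ?_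
  rcases eq_or_ne (2 * x p) 0 with h0 | h0
  · rw [h0, zero_mul]
    exact zero_mem _
  · rw [mul_mem_ordGE_iff p h0]
    exact ordGE_anti p (by lia) h

lemma exists_isSumFourSq_forall_sub_mem_ordGE [CharZero K] (hS : S.Finite)
    {q : HeightOneSpectrum R → K} (hq : ∀ p, IsSumFourSq (q p)) (n : HeightOneSpectrum R → ℤ) :
    ∃ c : K, IsSumFourSq c ∧ ∀ p ∈ S, c - q p ∈ ordGE K p (n p) := by
  choose x y z w hq using hq
  obtain ⟨a, ha⟩ := exists_forall_sq_sub_sq_mem_ordGE hS x n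
  obtain ⟨b, hb⟩ := exists_forall_sq_sub_sq_mem_ordGE hS y n
  obtain ⟨c, hc⟩ := exists_forall_sq_sub_sq_mem_ordGE hS z n
  obtain ⟨d, hd⟩ := exists_forall_sq_sub_sq_mem_ordGE hS w n
  refine ⟨a ^ 2 + b ^ 2 + c ^ 2 + d ^ 2, ⟨a, b, c, d, rfl⟩, fun p hp ↦ ?_⟩
  rw [hq, add_sub_add_comm, add_sub_add_comm, add_sub_add_comm]
  exact add_mem (add_mem (add_mem (ha p hp) (hb p hp)) (hc p hp)) (hd p hp)

lemma IsLocalSquare.mul_of_sub_mem_ordGE [CharZero K] {a c q : K} (h : IsLocalSquare p (a * q))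
    (hc : c - q ∈ ordGE K p (ord p q + 2 * ord p (2 : K) + 1)) : IsLocalSquare p (a * c) := by
  have hq0 : q ≠ 0 := right_ne_zero_of_mul h.ne_zero
  have h_ratio : IsLocalSquare p (c / q) := by
    refine ⟨1, one_ne_zero, ?_⟩
    rw [one_pow, div_one, IsOneModFour, div_mem_ordGE_iff p (by norm_num : (4 : K) ≠ 0), ord_four,
      ← div_self hq0, ← sub_div, div_mem_ordGE_iff p hq0]
    exact ordGE_anti p (by lia) hc
  have := h.mul h_ratio
  rwa [mul_assoc, mul_div_cancel₀ _ hq0] at this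

theorem exists_isSumFourSq_forall_isLocalSquare_mul [CharZero K]
    [∀ p : HeightOneSpectrum R, Finite (R ⧸ p.asIdeal)] {a : K} (ha : a ≠ 0) :
    ∃ q : K, q ≠ 0 ∧ IsSumFourSq q ∧
      ∀ p : HeightOneSpectrum R, ord p (2 : K) ≠ 0 → IsLocalSquare p (a * q) := by
  have h_local (p : HeightOneSpectrum R) :
      ∃ q : K, IsSumFourSq q ∧ (ord p (2 : K) ≠ 0 → IsLocalSquare p (a * q)) := by
    by_cases h2 : ord p (2 : K) = 0
    · exact ⟨1, by simpa using IsSumFourSq.sq (1 : K), fun h ↦ absurd h2 h⟩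
    · obtain ⟨q, hq, h⟩ := isLocallySumFourSq h2 ha
      exact ⟨q, hq, fun _ ↦ h⟩
  choose q hq hq_local using h_local
  obtain ⟨c, hc, hcq⟩ := exists_isSumFourSq_forall_sub_mem_ordGE (finite_setOf_ord_ne_zero (2 : K))
    hq fun p ↦ ord p (q p) + 2 * ord p (2 : K) + 1
  have h_global (p : HeightOneSpectrum R) (hp : ord p (2 : K) ≠ 0) : IsLocalSquare p (a * c) :=
    (hq_local p hp).mul_of_sub_mem_ordGE (hcq p hp)
  rcases eq_or_ne c 0 with rfl | hc0
  · refine ⟨1, one_ne_zero, by simpa using IsSumFourSq.sq (1 : K), fun p hp ↦ ?_⟩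
    exact absurd (mul_zero a) (h_global p hp).ne_zero
  · exact ⟨c, hc0, hc, h_global⟩

end GlobalApproximation

section Siegel

section Positivity

variable {R : Type*} [CommRing R] {a d : R}

lemma IsSumFourSq.map_nonneg (ha : IsSumFourSq a) (σ : R →+* ℝ) : 0 ≤ σ a := by
  obtain ⟨x, y, z, w, rfl⟩ := ha
  simp only [map_add, map_pow]
  positivity

lemma IsSumFourSq.map_pos_of_sq_mul (h : IsSumFourSq (d ^ 2 * a)) (hd : d ≠ 0) (ha : a ≠ 0)
    {σ : R →+* ℝ} (hσ : Function.Injective σ) : 0 < σ a := by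
  have nonneg := h.map_nonneg σ
  rw [map_mul, map_pow] at nonneg
  have hd_pos : 0 < σ d ^ 2 := sq_pos_of_ne_zero ((map_ne_zero_iff σ hσ).2 hd)
  exact (nonneg_of_mul_nonneg_right nonneg hd_pos).lt_of_ne ((map_ne_zero_iff σ hσ).2 ha).symm

end Positivity

variable {K : Type*} [Field K]

lemma isSumFourSq_of_neg_one_eq_sq_add_sq_sqrtExt [CharZero K] {b : K} {X Y : SqrtExt (-b)}
    (h : -1 = X ^ 2 + Y ^ 2) : IsSumFourSq b := by
  have h_re : 1 + X.re ^ 2 + Y.re ^ 2 = b * (X.im ^ 2 + Y.im ^ 2) := by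
    have := congrArg QuadraticAlgebra.re h
    simp only [QuadraticAlgebra.re_neg, QuadraticAlgebra.re_one, sq, QuadraticAlgebra.re_add,
      QuadraticAlgebra.re_mul, neg_mul] at this
    linear_combination -this
  by_cases h0 : X.im ^ 2 + Y.im ^ 2 = 0
  · refine isSumFourSq_of_neg_one_eq_sq_add_sq (x := X.re) (y := Y.re) ?_ b
    rw [h0] at h_re
    linear_combination -h_re
  · refine .of_mul_right (y := X.im ^ 2 + Y.im ^ 2) ?_ ⟨X.im, Y.im, 0, 0, by ring⟩ h0
    exact ⟨1, X.re, Y.re, 0, by rw [← h_re]; ring⟩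

lemma isTotallyComplex_of_isEmpty [NumberField K] (h : IsEmpty (K →+* ℝ)) : IsTotallyComplex K :=
  ⟨fun w ↦ by
    rw [← InfinitePlace.not_isReal_iff_isComplex]
    exact fun hw ↦ h.false (InfinitePlace.embedding_of_isReal hw)⟩

variable [NumberField K] {b : K}

lemma exists_neg_one_eq_sq_add_sq_of_sq_eq_neg {E : Type*} [Field E] [NumberField E] [Algebra K E]
    {s : E} (hs : s ^ 2 = -algebraMap K E b) (hb : b ≠ 0) (hpos : ∀ σ : K →+* ℝ, 0 < σ b)
    (h_local : ∀ p : HeightOneSpectrum (𝓞 K), ord p (2 : K) ≠ 0 → IsLocalSquare p b) :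
    ∃ x y : E, -1 = x ^ 2 + y ^ 2 := by
  have hs0 : s ≠ 0 := by
    rintro rfl
    exact hb (by simpa using hs.symm)
  have := isTotallyComplex_of_isEmpty (K := E) ⟨fun σ ↦ by
    have h_sq := congrArg σ hs
    rw [map_pow, map_neg] at h_sq
    have := hpos (σ.comp (algebraMap K E))
    rw [RingHom.comp_apply] at this
    linarith [sq_nonneg (σ s)]⟩
  refine exists_neg_one_eq_sq_add_sq fun P hP ↦ ?_
  have h2 : ord (P.under (𝓞 K)) (2 : K) ≠ 0 := by
    rwa [ne_eq, ← ord_algebraMap_eq_zero_iff_under P, map_ofNat]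
  have hP_sq := (h_local _ h2).map_of_under P
  rwa [show algebraMap K E b = -1 * s ^ 2 by rw [hs]; ring, isLocalSquare_mul_sq_iff hs0] at hP_sq

lemma isSumFourSq_of_forall_isLocalSquare (hb : b ≠ 0) (hpos : ∀ σ : K →+* ℝ, 0 < σ b)
    (h_local : ∀ p : HeightOneSpectrum (𝓞 K), ord p (2 : K) ≠ 0 → IsLocalSquare p b) :
    IsSumFourSq b := by
  by_cases hsq : IsSquare (-b)
  · obtain ⟨s, hs⟩ := hsq
    obtain ⟨x, y, h⟩ := exists_neg_one_eq_sq_add_sq_of_sq_eq_neg (E := K) (s := s)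
      (by rw [sq, ← hs]; rfl) hb hpos h_local
    exact isSumFourSq_of_neg_one_eq_sq_add_sq h b
  · have : Fact (¬ IsSquare (-b)) := ⟨hsq⟩
    obtain ⟨X, Y, h⟩ := exists_neg_one_eq_sq_add_sq_of_sq_eq_neg
      (omega_sq_sqrtExt.trans (map_neg _ b)) hb hpos h_local
    exact isSumFourSq_of_neg_one_eq_sq_add_sq_sqrtExt h

theorem isSumFourSq_of_forall_pos {a : K} (ha : a ≠ 0) (hpos : ∀ σ : K →+* ℝ, 0 < σ a) :
    IsSumFourSq a := by
  obtain ⟨q, hq0, hq, h_local⟩ := exists_isSumFourSq_forall_isLocalSquare_mul (R := 𝓞 K) ha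
  refine .of_mul_right (isSumFourSq_of_forall_isLocalSquare (mul_ne_zero ha hq0) ?_ h_local) hq hq0
  intro σ
  rw [map_mul]
  exact mul_pos (hpos σ) ((hq.map_nonneg σ).lt_of_ne ((map_ne_zero σ).2 hq0).symm)

end Siegel

section InfiniteDegree

open Filter Topology

variable {F : Type*} [Field F] [CharZero F] [Algebra.IsAlgebraic ℚ F]

lemma exists_ringHom_tendsto_ultrafilter {ι : Type*} (l : Ultrafilter ι) (φ : ι → F →+* ℂ) :
    ∃ ψ : F →+* ℂ, ∀ x, Tendsto (fun i ↦ φ i x) l (𝓝 (ψ x)) := by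
  have compact : IsCompact (Set.univ.pi fun x : F ↦ (minpoly ℚ x).rootSet ℂ) :=
    isCompact_univ_pi fun x ↦ (Polynomial.rootSet_finite _ _).isCompact
  have mem_roots (i : ι) : ⇑(φ i) ∈ Set.univ.pi fun x : F ↦ (minpoly ℚ x).rootSet ℂ := fun x _ ↦ by
    rw [Polynomial.mem_rootSet]
    refine ⟨minpoly.ne_zero (Algebra.IsIntegral.isIntegral x), ?_⟩
    have := Polynomial.aeval_algHom_apply (φ i).toRatAlgHom x (minpoly ℚ x)
    rwa [minpoly.aeval, map_zero] at this
  obtain ⟨ψ, -, hψ⟩ := compact.ultrafilter_le_nhds (l.map fun i ↦ ⇑(φ i))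
    (tendsto_principal.2 (Eventually.of_forall mem_roots))
  exact ⟨{ monoidHomOfTendsto ψ φ hψ, addMonoidHomOfTendsto ψ φ hψ with }, tendsto_pi_nhds.1 hψ⟩

lemma exists_finset_forall_complex_pos {a : F} (ha : ∀ σ : F →+* ℝ, 0 < σ a) :
    ∃ s : Finset F, ∀ φ : F →+* ℂ, (∀ x ∈ s, (φ x).im = 0) → 0 < (φ a).re := by
  by_contra! h
  choose φ h_real h_nonpos using h
  obtain ⟨ψ, hψ⟩ := exists_ringHom_tendsto_ultrafilter (Ultrafilter.of atTop) φ
  have ψ_real (x : F) : (ψ x).im = 0 := by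
    have h_zero : ∀ᶠ s in atTop, (φ s x).im = 0 :=
      (eventually_ge_atTop {x}).mono fun s hs ↦ h_real s x (Finset.singleton_subset_iff.1 hs)
    exact tendsto_nhds_unique_of_eventuallyEq
      ((Complex.continuous_im.tendsto _).comp (hψ x))
      tendsto_const_nhds (h_zero.filter_mono (Ultrafilter.of_le atTop))
  have hψ_real : ComplexEmbedding.IsReal ψ :=
    ComplexEmbedding.isReal_iff.2 (RingHom.ext fun x ↦ Complex.conj_eq_iff_im.2 (ψ_real x))
  have ψ_nonpos : (ψ a).re ≤ 0 :=
    le_of_tendsto' ((Complex.continuous_re.tendsto _).comp (hψ a)) h_nonpos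
  rw [← hψ_real.coe_embedding_apply, Complex.ofReal_re] at ψ_nonpos
  exact ψ_nonpos.not_gt (ha _)

lemma exists_complex_extension (k : IntermediateField ℚ F) (σ : k →+* ℝ) :
    ∃ φ : F →+* ℂ, ∀ x : k, φ x = σ x := by
  obtain ⟨φ, hφ⟩ := IsAlgClosed.surjective_domRestrict_of_isAlgebraic (E := F)
    (Complex.ofRealHom.comp σ).toRatAlgHom
  exact ⟨φ, fun x ↦ DFunLike.congr_fun hφ x⟩

theorem isSumFourSq_of_forall_pos_of_isAlgebraic {a : F} (ha0 : a ≠ 0)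
    (ha : ∀ σ : F →+* ℝ, 0 < σ a) : IsSumFourSq a := by
  obtain ⟨s, hs⟩ := exists_finset_forall_complex_pos ha
  let k := IntermediateField.adjoin ℚ (insert a s : Set F)
  have subset_k : (insert a s : Set F) ⊆ k := IntermediateField.subset_adjoin ℚ _
  let a' : k := ⟨a, subset_k (Set.mem_insert a s)⟩
  have : Finite (insert a s : Set F) := (s.finite_toSet.insert a).to_subtype
  have : NumberField k :=
    { to_finiteDimensional :=
        IntermediateField.finiteDimensional_adjoin fun x _ ↦ Algebra.IsIntegral.isIntegral x }
  have pos (σ : k →+* ℝ) : 0 < σ a' := by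
    obtain ⟨φ, hφ⟩ := exists_complex_extension k σ
    have h_real (x : F) (hx : x ∈ s) : (φ x).im = 0 := by
      rw [hφ ⟨x, subset_k (Set.mem_insert_of_mem a hx)⟩, Complex.ofReal_im]
    have := hs φ h_real
    rwa [hφ a', Complex.ofReal_re] at this
  obtain ⟨x, y, z, w, h⟩ := isSumFourSq_of_forall_pos (a := a')
    (fun h ↦ ha0 (congrArg Subtype.val h)) pos
  exact ⟨x, y, z, w, congrArg Subtype.val h⟩

end InfiniteDegree

section ClearDenominators

lemma IsSumFourSq.exists_mul_sq_integralClosure {F : Type*} [Field F] [CharZero F]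
    [Algebra.IsAlgebraic ℚ F] {a : integralClosure ℤ F} (ha : IsSumFourSq (a : F)) :
    ∃ d : integralClosure ℤ F, d ≠ 0 ∧ IsSumFourSq (d ^ 2 * a) := by
  obtain ⟨x, y, z, w, ha⟩ := ha
  have : Algebra.IsAlgebraic ℤ F :=
    (IsFractionRing.comap_isAlgebraic_iff (A := ℤ) (K := ℚ) (C := F)).2 inferInstance
  classical
  obtain ⟨d, hd, integral⟩ := Algebra.IsAlgebraic.exists_integral_multiples ℤ {x, y, z, w}
  refine ⟨algebraMap ℤ _ d, by simpa using hd, ⟨d • x, integral x (by simp)⟩,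
    ⟨d • y, integral y (by simp)⟩, ⟨d • z, integral z (by simp)⟩, ⟨d • w, integral w (by simp)⟩,
    Subtype.ext ?_⟩
  simp only [algebraMap_int_eq, eq_intCast, MulMemClass.coe_mul, SubmonoidClass.coe_pow,
    SubringClass.coe_intCast, ha, zsmul_eq_mul, SubmonoidClass.mk_pow, RingOfIntegers.mk_add_mk]
  ring

end ClearDenominators

end FourSquares

/-- Let `𝐅` be an algebraic (possibly infinite) extension of `ℚ` and
`x, z ∈ 𝒪_𝐅` with `x ≠ z`.  Then there exist `y₁, …, y₅ ∈ 𝒪_𝐅` with `y₅ ≠ 0` and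
`y₅²(x − z) = y₁² + y₂² + y₃² + y₄²` iff `σ(x) > σ(z)` for every ring homomorphism
`σ : 𝐅 → ℝ`. -/
theorem stmt_4 (F : Type*) [Field F] [CharZero F] [Algebra.IsAlgebraic ℚ F]
    (x z : integralClosure ℤ F) (hxz : x ≠ z) :
    (∃ y₁ y₂ y₃ y₄ y₅ : integralClosure ℤ F, y₅ ≠ 0 ∧
        y₅ ^ 2 * (x - z) = y₁ ^ 2 + y₂ ^ 2 + y₃ ^ 2 + y₄ ^ 2) ↔
      ∀ σ : F →+* ℝ, σ (z : F) < σ (x : F) := by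
  have hne : ((x - z : integralClosure ℤ F) : F) ≠ 0 := by simpa [sub_eq_zero] using hxz
  constructor
  · rintro ⟨y₁, y₂, y₃, y₄, y₅, hy₅, h⟩ σ
    have pos := FourSquares.IsSumFourSq.map_pos_of_sq_mul ⟨y₁, y₂, y₃, y₄, h⟩ hy₅
      (sub_ne_zero.2 hxz) (σ := σ.comp (algebraMap _ F)) (σ.injective.comp Subtype.val_injective)
    simpa using pos
  · intro h
    have pos (σ : F →+* ℝ) : 0 < σ (x - z : integralClosure ℤ F) := by
      simpa using h σ
    obtain ⟨y₅, hy₅, y₁, y₂, y₃, y₄, h⟩ :=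
      (FourSquares.isSumFourSq_of_forall_pos_of_isAlgebraic hne pos).exists_mul_sq_integralClosure
    exact ⟨y₁, y₂, y₃, y₄, y₅, hy₅, h⟩
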